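/- Let R be a polynomial ring over a field K and let I be an ideal of R of height two generated by n homogeneous quadratic polynomials. Then the projective dimension of R/I as an R-module satisfies pd(R/I) ≤ 2n − 2. -/

import Mathlib

open MvPolynomial Filter

universe u

/-- `PdLE R n M` means the `R`-module `M` has projective dimension at most `n`:
either `M` is projective (`n = 0`), or `M` is a quotient of a free module by a
submodule of projective dimension at most `n - 1`. -/
def PdLE (R : Type u) [CommRing R] : ℕ → (M : Type u) → [AddCommGroup M] → [Module R M] → Prop
  | 0, M, _, _ => Module.Projective R M
  | n + 1, M, _, _ => ∃ (F : Type u) (_ : AddCommGroup F) (_ : Module R F),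
      Module.Free R F ∧ ∃ f : F →ₗ[R] M, Function.Surjective f ∧ PdLE R n (LinearMap.ker f)

/-- The projective dimension of an `R`-module `M`, as an element of `ℕ∞`
(`⊤` if `M` has no finite free resolution). -/
noncomputable def projDim (R : Type u) [CommRing R] (M : Type u) [AddCommGroup M]
    [Module R M] : ℕ∞ :=
  sInf ((fun n : ℕ => (n : ℕ∞)) '' {n : ℕ | PdLE R n M})

/-- The height of an ideal: the infimum of the heights of the prime ideals containing it. -/
noncomputable def idealHeight {R : Type*} [CommRing R] (I : Ideal R) : ℕ∞ :=
  ⨅ p ∈ {p : PrimeSpectrum R | I ≤ p.asIdeal}, Order.height p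

/-- The length of a module, defined as the Krull dimension of its lattice of submodules. -/
noncomputable def moduleLength (R : Type u) [CommRing R] (M : Type u) [AddCommGroup M]
    [Module R M] : WithBot ℕ∞ :=
  Order.krullDim (Submodule R M)

/-- `IsHSMultiplicity R mx I e` asserts that the Hilbert–Samuel multiplicity of `R/I`
with respect to the ideal `mx` equals `e`: for `d = dim R/I` there is a polynomial `P`
of degree `d` with `e = d! · (leading coefficient of P)` such that
`length (R/(I + mx^n)) = P(n)` for all large `n`. -/
def IsHSMultiplicity (R : Type u) [CommRing R] (mx I : Ideal R) (e : ℕ) : Prop :=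
  ∃ (d : ℕ) (P : Polynomial ℚ),
    ringKrullDim (R ⧸ I) = (d : WithBot ℕ∞) ∧
    P.natDegree = d ∧
    (e : ℚ) = P.leadingCoeff * d.factorial ∧
    ∀ᶠ n : ℕ in Filter.atTop, ∃ k : ℕ, (k : ℚ) = P.eval (n : ℚ) ∧
      moduleLength R (R ⧸ (I ⊔ mx ^ n)) = ((k : ℕ∞) : WithBot ℕ∞)

/-- A matrix over a `K`-algebra is `1`-generic if it has no generalized zero entry:
for every nonzero vectors `u`, `v` of scalars, `uᵀ M v ≠ 0`. -/
def OneGeneric (K : Type*) [Field K] {R : Type u} [CommRing R] [Algebra K R]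
    {m l : ℕ} (M : Matrix (Fin m) (Fin l) R) : Prop :=
  ∀ (u : Fin m → K) (v : Fin l → K), u ≠ 0 → v ≠ 0 →
    ∑ i, ∑ j, algebraMap K R (u i * v j) * M i j ≠ 0

/-- The ideal of all `2 × 2` minors of a `2 × l` matrix. -/
def minors2 {R : Type u} [CommRing R] {l : ℕ} (M : Matrix (Fin 2) (Fin l) R) : Ideal R :=
  Ideal.span (Set.range fun p : Fin l × Fin l => M 0 p.1 * M 1 p.2 - M 0 p.2 * M 1 p.1)

/-- The homogeneous maximal ideal of a polynomial ring. -/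
noncomputable def maxIdeal (K : Type*) [Field K] (σ : Type*) : Ideal (MvPolynomial σ K) :=
  Ideal.span (Set.range (X : σ → MvPolynomial σ K))

/-- The ideal represented by minors by the `2 × (n+1)` matrix with first column `(x, y)ᵀ`
and remaining columns `(u j, v j)ᵀ`: it is generated by the `2 × 2` minors involving
the first column. -/
def repByMinors {R : Type u} [CommRing R] {n : ℕ} (x y : R) (u v : Fin n → R) : Ideal R :=
  Ideal.span (Set.range fun j : Fin n => x * v j - y * u j)

/-!
Extending scalars, which is free and hence does not lower projective dimensions, makes `K`
algebraically closed. If the quadrics span a space of dimension at most two, they form a regular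
sequence, as they have no common factor, and `pd(R/I) = 2`. Otherwise `n ≥ 3`; let `P` be a prime
of height at most two containing `I`.

* If `P` contains independent linear forms `x`, `y`, then `P = (x, y)`, so `I` is generated by the
  minors involving the first column `(x, y)ᵀ` of a `2 × (n + 1)` matrix of linear forms. It suffices
  to bound the projective dimension of the cokernel of this matrix by `2 * n - 2`. If the entries
  span at most `2 * n - 2` linear forms, use Hilbert's syzygy theorem. Otherwise there are few
  relations between the entries; row and column operations then reduce, at worst modulo one linear
  form, to a matrix with a row of independent linear forms, and the cokernel has projective
  dimension at most `n + 1`.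
* If `x` is the only linear form in `P` up to scalars, then `I = x * L + (q)` for an ideal `L`
  generated by `n - 1` linear forms, and `pd(R/I) ≤ n`.
* If `P` contains no linear form, choose a common zero of the quadrics which is a smooth point of
  one of them. In suitable coordinates all quadrics are linear in one variable `X`, and
  eliminating `X` shows that `I` is generated by quadrics `l₁ * X + r₁`, `l₂ * X + r₂` and `f`.
  By linkage `((l₁ * X + r₁, l₂ * X + r₂) : f)` is generated by two linear forms, so `pd(R/I) ≤ 3`.
-/

namespace PdLE

open CategoryTheory TensorProduct

section Module

variable {R : Type u} [CommRing R] {A B C : Type u} [AddCommGroup A] [Module R A]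
  [AddCommGroup B] [Module R B] [AddCommGroup C] [Module R C] {n : ℕ}

theorem iff_hasProjectiveDimensionLE (n : ℕ) (M : Type u) [AddCommGroup M] [Module R M] :
    PdLE R n M ↔ HasProjectiveDimensionLE (ModuleCat.of R M) n := by
  have ker_iff (n : ℕ) {F M : Type u} [AddCommGroup M] [Module R M] [AddCommGroup F] [Module R F]
      [Module.Free R F] (f : F →ₗ[R] M) (hf : Function.Surjective f) :
      HasProjectiveDimensionLE (ModuleCat.of R M) (n + 1) ↔
        HasProjectiveDimensionLE (ModuleCat.of R (LinearMap.ker f)) n :=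
    (LinearMap.shortExact_shortComplexKer hf).hasProjectiveDimensionLT_X₃_iff n
      ((IsProjective.iff_projective F).1 inferInstance)
  induction n generalizing M with
  | zero =>
    rw [HasProjectiveDimensionLE, zero_add, ← projective_iff_hasProjectiveDimensionLT_one,
      ← IsProjective.iff_projective]
    rfl
  | succ n ih =>
    constructor
    · rintro ⟨F, _, _, _, f, hf, hker⟩
      exact (ker_iff n f hf).2 ((ih _).1 hker)
    · intro h
      have hf := Finsupp.linearCombination_id_surjective R M
      exact ⟨M →₀ R, _, _, inferInstance, _, hf, (ih _).2 ((ker_iff n _ hf).1 h)⟩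

theorem mono {m : ℕ} (h : m ≤ n) (hA : PdLE R m A) : PdLE R n A := by
  rw [iff_hasProjectiveDimensionLE] at *
  exact hasProjectiveDimensionLT_of_ge _ (m + 1) _ (by omega)

theorem of_retract (i : A →ₗ[R] B) (r : B →ₗ[R] A) (h : ∀ x, r (i x) = x) (hB : PdLE R n B) :
    PdLE R n A := by
  rw [iff_hasProjectiveDimensionLE] at *
  have retract : Retract (ModuleCat.of R A) (ModuleCat.of R B) :=
    ⟨ModuleCat.ofHom i, ModuleCat.ofHom r, by ext x; exact h x⟩
  exact retract.hasProjectiveDimensionLT _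

theorem of_linearEquiv (e : A ≃ₗ[R] B) (hB : PdLE R n B) : PdLE R n A :=
  hB.of_retract e.toLinearMap e.symm.toLinearMap e.symm_apply_apply

theorem of_projective [h : Module.Projective R A] (n : ℕ) : PdLE R n A :=
  mono (Nat.zero_le n) h

section ShortExact

variable {f : A →ₗ[R] B} {g : B →ₗ[R] C} (hf : Function.Injective f)
  (hg : Function.Surjective g) (hfg : Function.Exact f g)

include hf hg hfg

private theorem shortExact_moduleCat :
    (ShortComplex.mk (ModuleCat.ofHom f) (ModuleCat.ofHom g)
      (by ext x; exact hfg.apply_apply_eq_zero x)).ShortExact where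
  exact := (ShortComplex.ShortExact.moduleCat_exact_iff_function_exact _).2 hfg
  mono_f := (ModuleCat.mono_iff_injective _).2 hf
  epi_g := (ModuleCat.epi_iff_surjective _).2 hg

theorem left_of_exact (hB : PdLE R n B) (hC : PdLE R (n + 1) C) : PdLE R n A := by
  rw [iff_hasProjectiveDimensionLE] at *
  exact (shortExact_moduleCat hf hg hfg).hasProjectiveDimensionLT_X₁ _ hB hC

theorem middle_of_exact (hA : PdLE R n A) (hC : PdLE R n C) : PdLE R n B := by
  rw [iff_hasProjectiveDimensionLE] at *
  exact (shortExact_moduleCat hf hg hfg).hasProjectiveDimensionLT_X₂ _ hA hC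

theorem right_of_exact (hA : PdLE R n A) (hB : PdLE R (n + 1) B) : PdLE R (n + 1) C := by
  rw [iff_hasProjectiveDimensionLE] at *
  exact (shortExact_moduleCat hf hg hfg).hasProjectiveDimensionLT_X₃ _ hA hB

end ShortExact

theorem submodule_of_quotient {S : Submodule R A} (hA : PdLE R n A)
    (hQ : PdLE R (n + 1) (A ⧸ S)) : PdLE R n S :=
  left_of_exact S.subtype_injective S.mkQ_surjective (LinearMap.exact_subtype_mkQ S) hA hQ

theorem of_submodule_of_quotient {S : Submodule R A} (hS : PdLE R n S) (hQ : PdLE R n (A ⧸ S)) :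
    PdLE R n A :=
  middle_of_exact S.subtype_injective S.mkQ_surjective (LinearMap.exact_subtype_mkQ S) hS hQ

theorem restrictScalars {S : Type u} [CommRing S] [Algebra R S] [Module.Free R S]
    {M : Type u} [AddCommGroup M] [Module S M] [Module R M] [IsScalarTower R S M]
    (h : PdLE S n M) : PdLE R n M := by
  induction n generalizing M with
  | zero =>
    obtain ⟨s, hs⟩ := Module.projective_def'.1 h
    exact of_retract (s.restrictScalars R)
      ((Finsupp.linearCombination S (id : M → M)).restrictScalars R)
      (fun x => LinearMap.congr_fun hs x) (of_projective 0)
  | succ n ih =>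
    obtain ⟨F, _, _, _, f, hf, hker⟩ := h
    let _ : Module R F := Module.compHom F (algebraMap R S)
    have : IsScalarTower R S F := .of_algebraMap_smul fun _ _ => rfl
    have hker' : PdLE R n (LinearMap.ker f) := ih hker
    exact ⟨F, _, _, Module.Free.trans (R := R) (S := S), f.restrictScalars R, hf, hker'⟩

theorem baseChange (S : Type u) [CommRing S] [Algebra R S] [Module.Flat R S]
    (h : PdLE R n A) : PdLE S n (S ⊗[R] A) := by
  induction n generalizing A with
  | zero =>
    have : Module.Projective R A := h
    exact of_projective 0
  | succ n ih =>
    obtain ⟨F, _, _, _, f, hf, hker⟩ := h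
    exact right_of_exact (f := (LinearMap.ker f).subtype.baseChange S) (g := f.baseChange S)
      (Module.Flat.lTensor_preserves_injective_linearMap _ Subtype.val_injective)
      (LinearMap.lTensor_surjective S hf)
      (lTensor_exact S (LinearMap.exact_subtype_ker_map f) hf) (ih hker) (of_projective _)

theorem dfinsupp {ι : Type} {M : ι → Type u} [∀ i, AddCommGroup (M i)] [∀ i, Module R (M i)]
    (h : ∀ i, PdLE R n (M i)) : PdLE R n (Π₀ i, M i) := by
  classical
  induction n generalizing M with
  | zero =>
    have : ∀ i, Module.Projective R (M i) := h
    exact of_projective 0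
  | succ n ih =>
    choose F _ _ _ f hf hker using h
    refine right_of_exact
      (f := DFinsupp.mapRange.linearMap fun i => (LinearMap.ker (f i)).subtype)
      (g := DFinsupp.mapRange.linearMap f)
      ((DFinsupp.mapRange_injective _ fun _ => rfl).2 fun _ => Subtype.val_injective)
      ((DFinsupp.mapRange_surjective _ fun _ => map_zero _).2 hf) ?_ (ih hker) (of_projective _)
    rw [LinearMap.exact_iff, DFinsupp.ker_mapRangeLinearMap, DFinsupp.range_mapRangeLinearMap]
    simp only [Submodule.range_subtype]

end Module

end PdLE

section Telescope

variable {R : Type*} [CommRing R] {M : Type*} [AddCommGroup M] [Module R M]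
  {Q : ℕ → Submodule R M} (hQ : Monotone Q)

/-- The endomorphism `(x₀, x₁, x₂, …) ↦ (x₀, x₁ - x₀, x₂ - x₁, …)` of `⨁ k, Q k`, for an
increasing sequence of submodules `Q k`. It resolves the union of the `Q k`. -/
def telescope : (Π₀ k, Q k) →ₗ[R] (Π₀ k, Q k) :=
  LinearMap.id - DFinsupp.lsum ℕ fun k =>
    DFinsupp.lsingle (M := fun k => Q k) (k + 1) ∘ₗ Submodule.inclusion (hQ k.le_succ)

theorem telescope_single (k : ℕ) (x : Q k) :
    telescope hQ (DFinsupp.single k x) =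
      DFinsupp.single k x - DFinsupp.single (k + 1) (Submodule.inclusion (hQ k.le_succ) x) := by
  simp [telescope, DFinsupp.lsingle_apply]

theorem telescope_zero (y : Π₀ k, Q k) : telescope hQ y 0 = y 0 := by
  induction y using DFinsupp.induction with
  | h0 => simp
  | ha k x y _ _ ih =>
    rw [map_add, DFinsupp.add_apply, DFinsupp.add_apply, ih, telescope_single, DFinsupp.sub_apply,
      DFinsupp.single_eq_of_ne (i := k + 1) (Nat.succ_ne_zero k).symm, sub_zero]

theorem telescope_succ (y : Π₀ k, Q k) (k : ℕ) :
    (telescope hQ y (k + 1) : M) = y (k + 1) - y k := by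
  induction y using DFinsupp.induction with
  | h0 => simp
  | ha i x y _ _ ih =>
    have shift : ((DFinsupp.single (i + 1) (Submodule.inclusion (hQ i.le_succ) x) :
        Π₀ k, Q k) (k + 1) : M) = (DFinsupp.single i x : Π₀ k, Q k) k := by
      obtain rfl | hik := eq_or_ne i k
      · simp
      · rw [DFinsupp.single_eq_of_ne (by omega), DFinsupp.single_eq_of_ne hik.symm]; rfl
    simp only [map_add, DFinsupp.add_apply, telescope_single, DFinsupp.sub_apply,
      Submodule.coe_add, AddSubgroupClass.coe_sub, ih, shift]
    abel

theorem telescope_injective : Function.Injective (telescope hQ) := by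
  rw [← LinearMap.ker_eq_bot, LinearMap.ker_eq_bot']
  intro y hy
  ext k
  induction k with
  | zero => rw [← telescope_zero hQ, hy]
  | succ k ih => simpa [hy, ih, eq_comm] using telescope_succ hQ y k

theorem sum_range_telescope (y : Π₀ k, Q k) (m : ℕ) :
    ∑ k ∈ Finset.range (m + 1), (telescope hQ y k : M) = y m := by
  induction m with
  | zero => simp [telescope_zero]
  | succ m ih => rw [Finset.sum_range_succ, ih, telescope_succ]; abel

theorem lsum_eq_sum_range {y : Π₀ k, Q k} {m : ℕ} (hm : ∀ k, m ≤ k → y k = 0) :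
    DFinsupp.lsum ℕ (fun k => (Q k).subtype) y = ∑ k ∈ Finset.range m, (y k : M) := by
  classical
  rw [DFinsupp.lsum_apply_apply, DFinsupp.sumAddHom_apply]
  refine Finset.sum_subset (fun k hk => ?_) fun k _ hk => by simpa using hk
  by_contra hkm
  exact DFinsupp.mem_support_iff.1 hk (hm k (by simpa using hkm))

theorem exists_forall_ge_eq_zero (y : Π₀ k, Q k) : ∃ m, ∀ k, m ≤ k → y k = 0 := by
  classical
  refine ⟨y.support.sup id + 1, fun k hk => ?_⟩
  by_contra h
  have : k ≤ y.support.sup id := Finset.le_sup (f := id) (DFinsupp.mem_support_iff.2 h)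
  omega

theorem exact_telescope_lsum :
    Function.Exact (telescope hQ) (DFinsupp.lsum ℕ fun k => (Q k).subtype) := by
  intro y
  constructor
  · intro hy
    obtain ⟨m, hm⟩ := exists_forall_ge_eq_zero y
    -- The preimage of `y` is the sequence of its partial sums, which vanish from `m` on.
    have mem (k : ℕ) : ∑ i ∈ Finset.range (k + 1), (y i : M) ∈ Q k :=
      Submodule.sum_mem _ fun i hi => hQ (Nat.lt_succ_iff.1 (Finset.mem_range.1 hi)) (y i).2
    let z : Π₀ k, Q k := DFinsupp.mk (Finset.range m) fun k => ⟨_, mem k⟩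
    have hz (k : ℕ) : (z k : M) = ∑ i ∈ Finset.range (k + 1), (y i : M) := by
      by_cases hk : k < m
      · simp [z, hk]
      · rw [lsum_eq_sum_range (m := k + 1) fun i hi => hm i (by omega)] at hy
        simp [z, hk, hy]
    refine ⟨z, DFinsupp.ext fun k => Subtype.ext ?_⟩
    cases k with
    | zero => simp [telescope_zero, hz]
    | succ k => rw [telescope_succ, hz, hz, Finset.sum_range_succ _ (k + 1), add_sub_cancel_left]
  · rintro ⟨z, rfl⟩
    obtain ⟨m, hm⟩ := exists_forall_ge_eq_zero z
    obtain ⟨m', hm'⟩ := exists_forall_ge_eq_zero (telescope hQ z)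
    rw [lsum_eq_sum_range (m := max m m' + 1) fun k hk => hm' k (by omega), sum_range_telescope,
      hm _ (le_max_left _ _), Submodule.coe_zero]

end Telescope

namespace PdLE

variable {R : Type u} [CommRing R] {M : Type u} [AddCommGroup M] [Module R M] {n : ℕ}

theorem of_exhaustion {Q : ℕ → Submodule R M} (hQ : Monotone Q) (hM : ∀ x, ∃ k, x ∈ Q k)
    (h : ∀ k, PdLE R n (Q k)) : PdLE R (n + 1) M := by
  refine right_of_exact (telescope_injective hQ) (fun x => ?_) (exact_telescope_lsum hQ)
    (dfinsupp h) ((dfinsupp h).mono n.le_succ)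
  obtain ⟨k, hk⟩ := hM x
  exact ⟨DFinsupp.single k ⟨x, hk⟩, by simp⟩

end PdLE

section PolynomialResolution

open TensorProduct Polynomial

variable {A : Type*} [CommRing A] {M : Type*} [AddCommGroup M] [Module A M]

/-- The elements of `A[X] ⊗ M` as polynomials with coefficients in `M`: the `k`-th coefficient
of `y` is `tensorCoeff y k`. -/
noncomputable def tensorCoeff : (A[X] ⊗[A] M) ≃+ (ℕ →₀ M) :=
  (PolynomialModule.polynomialTensorProductLEquivPolynomialModule A M).toAddEquiv.trans
    (PolynomialModule.coeffAddEquiv)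

theorem tensorCoeff_tmul (p : A[X]) (m : M) (k : ℕ) :
    tensorCoeff (p ⊗ₜ[A] m) k = p.coeff k • m := by
  change (LinearMap.liftBaseChange A[X] (PolynomialModule.lsingle A 0) (p ⊗ₜ m)).coeff k = _
  rw [LinearMap.liftBaseChange_tmul]
  exact (PolynomialModule.smul_single_apply 0 p m k).trans (if_pos k.zero_le)

variable [Module A[X] M] [IsScalarTower A A[X] M]

variable (A M) in
/-- The endomorphism `X ⊗ 1 - 1 ⊗ X` of `A[X] ⊗ M`, for an `A[X]`-module `M`. Its cokernel
is `M`. -/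
noncomputable def tensorXSub : (A[X] ⊗[A] M) →ₗ[A[X]] (A[X] ⊗[A] M) :=
  (Polynomial.X : A[X]) • LinearMap.id -
    ((LinearMap.lsmul A[X] M Polynomial.X).restrictScalars A).baseChange A[X]

theorem tensorXSub_tmul (p : A[X]) (m : M) :
    tensorXSub A M (p ⊗ₜ m) =
      (Polynomial.X * p) ⊗ₜ m - p ⊗ₜ ((Polynomial.X : A[X]) • m) := by
  simp [tensorXSub, TensorProduct.smul_tmul']

theorem tensorCoeff_tensorXSub_succ (y : A[X] ⊗[A] M) (k : ℕ) :
    tensorCoeff (tensorXSub A M y) (k + 1) =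
      tensorCoeff y k - (Polynomial.X : A[X]) • tensorCoeff y (k + 1) := by
  induction y using TensorProduct.induction_on with
  | zero => simp
  | tmul p m =>
    simp only [tensorXSub_tmul, map_sub, Finsupp.sub_apply, tensorCoeff_tmul,
      Polynomial.coeff_X_mul, smul_comm _ (Polynomial.X : A[X])]
  | add y z hy hz =>
    simp only [map_add, Finsupp.add_apply, hy, hz, smul_add]
    abel

theorem tensorXSub_injective : Function.Injective (tensorXSub A M) := by
  rw [← LinearMap.ker_eq_bot, LinearMap.ker_eq_bot']
  intro y hy
  have shift (k : ℕ) : tensorCoeff y k = (Polynomial.X : A[X]) • tensorCoeff y (k + 1) := by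
    refine (sub_eq_zero.1 ?_)
    rw [← tensorCoeff_tensorXSub_succ, hy, map_zero, Finsupp.coe_zero, Pi.zero_apply]
  have shift_add (j k : ℕ) :
      tensorCoeff y k = (Polynomial.X ^ j : A[X]) • tensorCoeff y (k + j) := by
    induction j with
    | zero => simp
    | succ j ih => rw [ih, shift, smul_smul, pow_succ]; rfl
  obtain ⟨d, hd⟩ := (tensorCoeff y).support.exists_nat_subset_range
  refine (map_eq_zero_iff tensorCoeff tensorCoeff.injective).1 (Finsupp.ext fun k => ?_)
  have : k + d ∉ (tensorCoeff y).support := fun h => by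
    have := Finset.mem_range.1 (hd h)
    omega
  rw [shift_add d, Finsupp.notMem_support_iff.1 this, smul_zero, Finsupp.coe_zero, Pi.zero_apply]

theorem sub_one_tmul_mem_range_tensorXSub (p : A[X]) (m : M) :
    p ⊗ₜ m - 1 ⊗ₜ (p • m) ∈ LinearMap.range (tensorXSub A M) := by
  induction p using Polynomial.induction_on' with
  | add p q hp hq =>
    convert add_mem hp hq using 1
    rw [add_tmul, add_smul, tmul_add]
    abel
  | monomial k a =>
    induction k generalizing m with
    | zero =>
      rw [Polynomial.monomial_zero_left, ← mul_one (Polynomial.C a), ← Polynomial.smul_eq_C_mul,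
        smul_assoc, one_smul, ← smul_tmul, sub_self]
      exact zero_mem _
    | succ k ih =>
      convert add_mem (ih ((Polynomial.X : A[X]) • m))
        (LinearMap.mem_range_self _ (Polynomial.monomial k a ⊗ₜ m)) using 1
      rw [tensorXSub_tmul, Polynomial.X_mul_monomial, smul_smul, Polynomial.monomial_mul_X]
      abel

theorem exact_tensorXSub_liftBaseChange :
    Function.Exact (tensorXSub A M) (LinearMap.liftBaseChange A[X] (LinearMap.id : M →ₗ[A] M)) := by
  have hπ (p : A[X]) (m : M) :
      LinearMap.liftBaseChange A[X] (LinearMap.id : M →ₗ[A] M) (p ⊗ₜ m) = p • m := by simp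
  set π := LinearMap.liftBaseChange A[X] (LinearMap.id : M →ₗ[A] M)
  have mem_range (y : A[X] ⊗[A] M) : y - 1 ⊗ₜ π y ∈ LinearMap.range (tensorXSub A M) := by
    induction y using TensorProduct.induction_on with
    | zero => simp
    | tmul p m => rw [hπ]; exact sub_one_tmul_mem_range_tensorXSub p m
    | add y z hy hz =>
      convert add_mem hy hz using 1
      rw [map_add, tmul_add]
      abel
  refine fun y => ⟨fun hy => by simpa [hy] using mem_range y, ?_⟩
  rintro ⟨z, rfl⟩
  induction z using TensorProduct.induction_on with
  | zero => simp
  | tmul p m => rw [tensorXSub_tmul, map_sub, hπ, hπ, mul_comm, mul_smul, sub_self]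
  | add y z hy hz => rw [map_add, map_add, hy, hz, add_zero]

end PolynomialResolution

namespace PdLE

theorem polynomial {A : Type u} [CommRing A] {n : ℕ} {M : Type u} [AddCommGroup M]
    [Module (Polynomial A) M] [Module A M] [IsScalarTower A (Polynomial A) M] (h : PdLE A n M) :
    PdLE (Polynomial A) (n + 1) M :=
  right_of_exact tensorXSub_injective (fun m => ⟨1 ⊗ₜ m, by simp⟩)
    exact_tensorXSub_liftBaseChange (h.baseChange _) ((h.baseChange _).mono n.le_succ)

theorem of_ringEquiv {R S : Type u} [CommRing R] [CommRing S] (e : R ≃+* S) {n : ℕ} {M : Type u}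
    [AddCommGroup M] [Module R M] [Module S M] (hsmul : ∀ (r : R) (m : M), e r • m = r • m)
    (h : PdLE S n M) : PdLE R n M := by
  let _ : Algebra R S := e.toRingHom.toAlgebra
  have : IsScalarTower R S M := .of_algebraMap_smul hsmul
  have : Module.Free R S := .of_equiv (LinearEquiv.ofBijective (Algebra.linearMap R S) e.bijective)
  exact h.restrictScalars

/-- Hilbert's syzygy theorem. -/
theorem mvPolynomial_fin (K : Type u) [Field K] (m : ℕ) (M : Type u) [AddCommGroup M]
    [Module (MvPolynomial (Fin m) K) M] : PdLE (MvPolynomial (Fin m) K) m M := by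
  induction m generalizing M with
  | zero =>
    have isField := (isEmptyRingEquiv K (Fin 0)).toMulEquiv.isField (Field.toIsField K)
    let _ := isField.toField
    have : Module.Free (MvPolynomial (Fin 0) K) M := .of_divisionRing _ _
    exact of_projective 0
  | succ m ih =>
    let e := finSuccEquiv K m
    let _ : Module (Polynomial (MvPolynomial (Fin m) K)) M := .compHom M e.symm.toRingHom
    let _ : Module (MvPolynomial (Fin m) K) M := .compHom M
      (algebraMap _ (Polynomial (MvPolynomial (Fin m) K)))
    have : IsScalarTower (MvPolynomial (Fin m) K) (Polynomial (MvPolynomial (Fin m) K)) M :=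
      .of_algebraMap_smul fun _ _ => rfl
    exact of_ringEquiv e.toRingEquiv
      (fun r x => congrArg (· • x) (e.symm_apply_apply r)) (polynomial (ih M))

end PdLE

section ColonExact

variable {R : Type*} [CommRing R] (J : Ideal R) (f : R)

/-- Multiplication by `f`, as a map `R ⧸ (J : f) → R ⧸ J`. -/
def colonMulRight : (R ⧸ J.colon {f}) →ₗ[R] (R ⧸ J) :=
  Submodule.mapQ _ _ (LinearMap.mulRight R f) fun _ hr => Submodule.mem_colon_singleton.1 hr

theorem colonMulRight_injective : Function.Injective (colonMulRight J f) := by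
  rw [← LinearMap.ker_eq_bot, LinearMap.ker_eq_bot']
  intro x hx
  obtain ⟨r, rfl⟩ := Submodule.mkQ_surjective _ x
  exact (Submodule.Quotient.mk_eq_zero _).2
    (Submodule.mem_colon_singleton.2 ((Submodule.Quotient.mk_eq_zero J).1 hx))

theorem exact_colonMulRight_factor :
    Function.Exact (colonMulRight J f)
      (Submodule.factor (le_sup_left : J ≤ J ⊔ Ideal.span {f})) := by
  intro y
  obtain ⟨r, rfl⟩ := Submodule.mkQ_surjective _ y
  have mem_iff : Submodule.factor (le_sup_left : J ≤ J ⊔ Ideal.span {f}) (J.mkQ r) = 0 ↔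
      ∃ t, t * f - r ∈ J := by
    rw [Submodule.factor_mk, Submodule.mkQ_apply, Submodule.Quotient.mk_eq_zero, sup_comm,
      Ideal.mem_span_singleton_sup]
    exact exists_congr fun t => ⟨by rintro ⟨b, hb, rfl⟩; simpa using hb,
      fun h => ⟨r - t * f, by simpa using J.neg_mem h, by ring⟩⟩
  rw [mem_iff, Set.mem_range, (Submodule.mkQ_surjective _).exists]
  exact exists_congr fun t => (Submodule.Quotient.eq J).symm

end ColonExact

namespace PdLE

variable {R : Type u} [CommRing R] {J J' : Ideal R} {f : R} {n : ℕ}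

theorem sup_span_singleton (hJ' : J.colon {f} = J') (h' : PdLE R n (R ⧸ J'))
    (h : PdLE R (n + 1) (R ⧸ J)) : PdLE R (n + 1) (R ⧸ (J ⊔ Ideal.span {f})) := by
  subst hJ'
  exact right_of_exact (colonMulRight_injective J f) (Submodule.factor_surjective _)
    (exact_colonMulRight_factor J f) h' h

theorem of_sup_span_singleton (hJ' : J.colon {f} = J') (h' : PdLE R n (R ⧸ J'))
    (h : PdLE R n (R ⧸ (J ⊔ Ideal.span {f}))) : PdLE R n (R ⧸ J) := by
  subst hJ'
  exact middle_of_exact (colonMulRight_injective J f) (Submodule.factor_surjective _)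
    (exact_colonMulRight_factor J f) h' h

theorem quotient_bot (n : ℕ) : PdLE R n (R ⧸ (⊥ : Ideal R)) :=
  (of_projective n).of_linearEquiv (Submodule.quotEquivOfEqBot ⊥ rfl)

theorem sup_span_singleton_of_isPrime (hJ : J.IsPrime) (f : R) (h : PdLE R n (R ⧸ J)) :
    PdLE R (n + 1) (R ⧸ (J ⊔ Ideal.span {f})) := by
  by_cases hf : f ∈ J
  · rw [sup_eq_left.2 ((Ideal.span_singleton_le_iff_mem J).2 hf)]
    exact h.mono n.le_succ
  · refine sup_span_singleton (J' := J) (Ideal.ext fun r => ?_) h (h.mono n.le_succ)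
    rw [Submodule.mem_colon_singleton, smul_eq_mul, hJ.mul_mem_iff_mem_or_mem, or_iff_left hf]

theorem quotient_span_singleton [IsDomain R] (f : R) : PdLE R 1 (R ⧸ Ideal.span {f}) := by
  have := sup_span_singleton_of_isPrime Ideal.isPrime_bot f (quotient_bot 0)
  rwa [bot_sup_eq] at this

theorem quotient_of_ringEquiv {S : Type u} [CommRing S] (e : R ≃+* S) {I : Ideal R}
    (h : PdLE S n (S ⧸ I.map e)) : PdLE R n (R ⧸ I) := by
  let _ : Module R (S ⧸ I.map e) := .compHom _ e.toRingHom
  have h' : PdLE R n (S ⧸ I.map e) := of_ringEquiv e (fun _ _ => rfl) h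
  refine h'.of_linearEquiv
    { Ideal.quotientEquiv I (I.map e) e rfl with map_smul' := ?_ }
  intro r x
  obtain ⟨s, rfl⟩ := Ideal.Quotient.mk_surjective x
  exact congrArg (Ideal.Quotient.mk (I.map e)) (map_mul e r s)

end PdLE

section LinearForm

variable {B : Type*} [CommRing B] {ι : Type*} [Fintype ι]

/-- The linear form `∑ i, c i • X i` with coefficient vector `c`. -/
noncomputable def linearForm : (ι → B) →ₗ[B] MvPolynomial ι B :=
  Fintype.linearCombination B X

theorem linearForm_single [DecidableEq ι] (i : ι) : linearForm (Pi.single i (1 : B)) = X i := by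
  rw [linearForm, Fintype.linearCombination_apply_single, one_smul]

theorem coeff_linearForm (c : ι → B) (i : ι) : coeff (Finsupp.single i 1) (linearForm c) = c i := by
  classical
  simp [linearForm, Fintype.linearCombination_apply, coeff_sum, coeff_X, Finsupp.single_left_inj]

theorem linearForm_injective :
    Function.Injective (linearForm : (ι → B) →ₗ[B] MvPolynomial ι B) := by
  intro c d h
  ext i
  rw [← coeff_linearForm c, h, coeff_linearForm]

theorem linearForm_eq_zero_iff {c : ι → B} : linearForm c = 0 ↔ c = 0 :=
  map_eq_zero_iff linearForm linearForm_injective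

theorem isHomogeneous_linearForm (c : ι → B) : (linearForm c).IsHomogeneous 1 := by
  rw [linearForm, Fintype.linearCombination_apply]
  refine IsHomogeneous.sum _ _ _ fun i _ => ?_
  rw [smul_eq_C_mul]
  exact isHomogeneous_C_mul_X _ _

theorem exists_eq_linearForm {p : MvPolynomial ι B}
    (hp : p.IsHomogeneous 1) : ∃ c, p = linearForm c := by
  have hp' : p ∈ homogeneousSubmodule ι B 1 := hp
  rw [homogeneousSubmodule_one_eq_span_X, Submodule.mem_span_range_iff_exists_fun] at hp'
  obtain ⟨c, rfl⟩ := hp'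
  exact ⟨c, rfl⟩

end LinearForm

section LinearSubst

variable {B : Type*} [CommRing B] {ι κ ν : Type*} [Fintype κ] [DecidableEq ι]

/-- The linear substitution which sends the linear form with coefficient vector `c` to the one
with coefficient vector `T c`. -/
noncomputable def linearSubst (T : (ι → B) →ₗ[B] (κ → B)) :
    MvPolynomial ι B →ₐ[B] MvPolynomial κ B :=
  aeval fun i => linearForm (T (Pi.single i 1))

theorem linearSubst_X (T : (ι → B) →ₗ[B] (κ → B)) (i : ι) :
    linearSubst T (X i) = linearForm (T (Pi.single i 1)) := by
  rw [linearSubst, aeval_X]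

theorem isHomogeneous_linearSubst {p : MvPolynomial ι B} {n : ℕ}
    (hp : p.IsHomogeneous n) (T : (ι → B) →ₗ[B] (κ → B)) :
    (linearSubst T p).IsHomogeneous n := by
  rw [linearSubst, ← one_mul n]
  exact hp.aeval _ fun i => isHomogeneous_linearForm _

theorem linearSubst_linearForm [Fintype ι] (T : (ι → B) →ₗ[B] (κ → B)) (c : ι → B) :
    linearSubst T (linearForm c) = linearForm (T c) := by
  have : (linearSubst T).toLinearMap ∘ₗ linearForm = linearForm ∘ₗ T := by
    ext1 i
    ext1
    simp [linearForm_single, linearSubst_X]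
  exact LinearMap.congr_fun this c

theorem linearSubst_comp [Fintype ν] [DecidableEq κ] (T : (ι → B) →ₗ[B] (κ → B))
    (S : (κ → B) →ₗ[B] (ν → B)) :
    (linearSubst S).comp (linearSubst T) = linearSubst (S ∘ₗ T) := by
  ext1 i
  rw [AlgHom.comp_apply, linearSubst_X, linearSubst_linearForm, linearSubst_X,
    LinearMap.comp_apply]

variable [Fintype ι]

theorem linearSubst_id : linearSubst (LinearMap.id : (ι → B) →ₗ[B] _) = AlgHom.id B _ := by
  ext1 i
  rw [← linearForm_single, linearSubst_linearForm, LinearMap.id_apply, AlgHom.id_apply]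

/-- The linear change of coordinates given by `T`. -/
noncomputable def linearSubstEquiv [DecidableEq κ] (T : (ι → B) ≃ₗ[B] (κ → B)) :
    MvPolynomial ι B ≃ₐ[B] MvPolynomial κ B :=
  AlgEquiv.ofAlgHom (linearSubst T) (linearSubst T.symm)
    (by rw [linearSubst_comp, T.comp_symm, linearSubst_id])
    (by rw [linearSubst_comp, T.symm_comp, linearSubst_id])

theorem linearSubstEquiv_linearForm [DecidableEq κ] (T : (ι → B) ≃ₗ[B] (κ → B)) (c : ι → B) :
    linearSubstEquiv T (linearForm c) = linearForm (T c) :=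
  linearSubst_linearForm _ _

theorem sub_linearSubst_mem {T : (ι → B) →ₗ[B] (ι → B)} {J : Ideal (MvPolynomial ι B)}
    (h : ∀ c, linearForm (c - T c) ∈ J) (p : MvPolynomial ι B) : p - linearSubst T p ∈ J := by
  have : (Ideal.Quotient.mkₐ B J).comp (linearSubst T) = Ideal.Quotient.mkₐ B J := by
    ext1 i
    rw [AlgHom.comp_apply, ← linearForm_single, linearSubst_linearForm]
    refine (Ideal.Quotient.eq.2 ?_).symm
    rw [← map_sub]
    exact h _
  exact Ideal.Quotient.eq.1 (DFunLike.congr_fun this p).symm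

end LinearSubst

section LinearIdeal

variable {B : Type*} [CommRing B] {ι : Type*} [Fintype ι]

/-- The ideal generated by the linear forms with coefficient vector in `W`. -/
noncomputable def linearIdeal (W : Submodule B (ι → B)) : Ideal (MvPolynomial ι B) :=
  Ideal.span (linearForm '' W)

theorem linearForm_mem_linearIdeal {W : Submodule B (ι → B)} {c : ι → B} (hc : c ∈ W) :
    linearForm c ∈ linearIdeal W :=
  Ideal.subset_span (Set.mem_image_of_mem _ hc)

theorem linearIdeal_le_iff {W : Submodule B (ι → B)} {J : Ideal (MvPolynomial ι B)} :
    linearIdeal W ≤ J ↔ ∀ c ∈ W, linearForm c ∈ J := by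
  rw [linearIdeal, Ideal.span_le, Set.image_subset_iff]
  rfl

theorem linearIdeal_span (s : Set (ι → B)) :
    linearIdeal (Submodule.span B s) = Ideal.span (linearForm '' s) := by
  refine le_antisymm (linearIdeal_le_iff.2 fun c hc => ?_)
    (Ideal.span_mono (Set.image_mono Submodule.subset_span))
  have le : Submodule.span B s ≤
      ((Ideal.span (linearForm '' s)).restrictScalars B).comap linearForm :=
    Submodule.span_le.2 fun c hc => Ideal.subset_span (Set.mem_image_of_mem _ hc)
  exact le hc

end LinearIdeal

section LinearIdealField

variable {K : Type*} [Field K] {ι : Type*} [Fintype ι]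

theorem exists_ker_linearSubst_eq_linearIdeal [DecidableEq ι] (W : Submodule K (ι → K)) :
    ∃ T : (ι → K) →ₗ[K] (ι → K), LinearMap.ker T = W ∧
      RingHom.ker (linearSubst T) = linearIdeal W ∧
      ∀ p, p - linearSubst T p ∈ linearIdeal W := by
  obtain ⟨W', hW⟩ := W.exists_isCompl
  have hker := Submodule.ker_projection hW.symm
  have sub_mem := sub_linearSubst_mem
    fun c => linearForm_mem_linearIdeal (Submodule.sub_projection_mem hW.symm c)
  refine ⟨W'.projection W hW.symm, hker, le_antisymm (fun p hp => ?_) ?_, sub_mem⟩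
  · rw [← sub_zero p, ← RingHom.mem_ker.1 hp]
    exact sub_mem p
  · refine linearIdeal_le_iff.2 fun c hc => ?_
    rw [RingHom.mem_ker, linearSubst_linearForm, LinearMap.mem_ker.1 (hker.ge hc), map_zero]

theorem linearIdeal_isPrime (W : Submodule K (ι → K)) : (linearIdeal W).IsPrime := by
  classical
  obtain ⟨T, -, hT, -⟩ := exists_ker_linearSubst_eq_linearIdeal W
  rw [← hT]
  exact RingHom.ker_isPrime _

theorem linearForm_mem_linearIdeal_iff {W : Submodule K (ι → K)} {c : ι → K} :
    linearForm c ∈ linearIdeal W ↔ c ∈ W := by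
  classical
  obtain ⟨T, hW, hT, -⟩ := exists_ker_linearSubst_eq_linearIdeal W
  rw [← hT, RingHom.mem_ker, linearSubst_linearForm, linearForm_eq_zero_iff, ← hW,
    LinearMap.mem_ker]

theorem prime_linearForm {c : ι → K} (hc : c ≠ 0) : Prime (linearForm c) := by
  rw [← Ideal.span_singleton_prime (mt linearForm_eq_zero_iff.1 hc), ← Set.image_singleton,
    ← linearIdeal_span]
  exact linearIdeal_isPrime _

theorem linearForm_dvd_linearForm_iff {c d : ι → K} :
    linearForm c ∣ linearForm d ↔ d ∈ Submodule.span K {c} := by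
  rw [← Ideal.mem_span_singleton, ← Set.image_singleton, ← linearIdeal_span,
    linearForm_mem_linearIdeal_iff]

end LinearIdealField

section HomogeneousFactor

variable {B : Type*} [CommRing B] {ι : Type*}

theorem order_le_totalDegree {p : MvPolynomial ι B} (hp : p ≠ 0) :
    (p : MvPowerSeries ι B).order ≤ p.totalDegree := by
  obtain ⟨m, hm⟩ := support_nonempty.2 hp
  refine (MvPowerSeries.order_le (d := m) ?_).trans (Nat.cast_le.2 (le_totalDegree hm))
  rwa [coeff_coe, ← mem_support_iff]

theorem isHomogeneous_of_totalDegree_le_order {p : MvPolynomial ι B}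
    (h : (p.totalDegree : ℕ∞) ≤ (p : MvPowerSeries ι B).order) :
    p.IsHomogeneous p.totalDegree := by
  intro m hm
  refine (congrArg (fun w => w m) Finsupp.degree_eq_weight_one).symm.trans (le_antisymm
    (le_totalDegree (mem_support_iff.2 hm)) ?_)
  exact_mod_cast h.trans (MvPowerSeries.order_le (by rwa [coeff_coe]))

theorem exists_isHomogeneous_of_mul [IsDomain B] {a b : MvPolynomial ι B} {d : ℕ}
    (h : (a * b).IsHomogeneous d) (h0 : a * b ≠ 0) :
    ∃ i j, i + j = d ∧ a.IsHomogeneous i ∧ b.IsHomogeneous j := by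
  obtain ⟨ha, hb⟩ := mul_ne_zero_iff.1 h0
  have degree_add : a.totalDegree + b.totalDegree = d := by
    rw [← totalDegree_mul_of_isDomain ha hb, h.totalDegree h0]
  have le_order_add :
      (d : ℕ∞) ≤ (a : MvPowerSeries ι B).order + (b : MvPowerSeries ι B).order := by
    rw [← MvPowerSeries.order_mul, ← coe_mul]
    refine MvPowerSeries.le_order fun m hm => ?_
    rw [coeff_coe]
    exact h.coeff_eq_zero (Nat.cast_lt.1 hm).ne
  -- Both the order and the total degree are additive, so they agree for each factor.
  have ha' := order_le_totalDegree ha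
  have hb' := order_le_totalDegree hb
  obtain ⟨i, hi⟩ := ENat.ne_top_iff_exists.1 (ne_top_of_le_ne_top (ENat.natCast_ne_top _) ha')
  obtain ⟨j, hj⟩ := ENat.ne_top_iff_exists.1 (ne_top_of_le_ne_top (ENat.natCast_ne_top _) hb')
  rw [← hi, Nat.cast_le] at ha'
  rw [← hj, Nat.cast_le] at hb'
  rw [← hi, ← hj] at le_order_add
  have le_add : d ≤ i + j := by exact_mod_cast le_order_add
  exact ⟨_, _, degree_add,
    isHomogeneous_of_totalDegree_le_order (by rw [← hi, Nat.cast_le]; omega),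
    isHomogeneous_of_totalDegree_le_order (by rw [← hj, Nat.cast_le]; omega)⟩

theorem exists_eq_C_of_isHomogeneous_zero {p : MvPolynomial ι B} (hp : p.IsHomogeneous 0) :
    ∃ c, p = C c :=
  ⟨_, totalDegree_eq_zero_iff_eq_C.1 ((totalDegree_zero_iff_isHomogeneous ι).2 hp)⟩

section Field

variable {K : Type*} [Field K] {p q : MvPolynomial ι K}

theorem exists_eq_C_mul_of_dvd {d : ℕ} (hp : p.IsHomogeneous d) (hq : q.IsHomogeneous d)
    (h : q ∣ p) : ∃ c, p = C c * q := by
  obtain ⟨a, rfl⟩ := h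
  by_cases h0 : q * a = 0
  · exact ⟨0, by rw [h0, C_0, zero_mul]⟩
  obtain ⟨i, j, hij, hi, hj⟩ := exists_isHomogeneous_of_mul hp h0
  obtain rfl := hi.inj_right hq (left_ne_zero_of_mul h0)
  obtain rfl : j = 0 := by omega
  obtain ⟨c, rfl⟩ := exists_eq_C_of_isHomogeneous_zero hj
  exact ⟨c, mul_comm _ _⟩

variable [Fintype ι]

theorem exists_eq_mul_linearForm_of_dvd {d : ℕ} (hp : p.IsHomogeneous (d + 1))
    (hq : q.IsHomogeneous d) (h : q ∣ p) : ∃ c, p = q * linearForm c := by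
  obtain ⟨a, rfl⟩ := h
  by_cases h0 : q * a = 0
  · exact ⟨0, by rw [h0, map_zero, mul_zero]⟩
  obtain ⟨i, j, hij, hi, hj⟩ := exists_isHomogeneous_of_mul hp h0
  obtain rfl := hi.inj_right hq (left_ne_zero_of_mul h0)
  obtain rfl : j = 1 := by omega
  obtain ⟨c, rfl⟩ := exists_eq_linearForm hj
  exact ⟨c, rfl⟩

theorem irreducible_of_isHomogeneous_two (hp : p.IsHomogeneous 2) (h0 : p ≠ 0)
    (h : ∀ c d, p ≠ linearForm c * linearForm d) : Irreducible p := by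
  have isUnit_of_isHomogeneous_zero {a : MvPolynomial ι K} (ha : a.IsHomogeneous 0)
      (ha0 : a ≠ 0) : IsUnit a := by
    obtain ⟨c, rfl⟩ := exists_eq_C_of_isHomogeneous_zero ha
    exact (isUnit_iff_ne_zero.2 fun hc => ha0 (by rw [hc, C_0])).map C
  refine ⟨fun hu => ?_, fun a b hab => ?_⟩
  · obtain ⟨b, hb⟩ := hu.exists_right_inv
    obtain ⟨i, j, hij, hi, -⟩ := exists_isHomogeneous_of_mul (hb ▸ isHomogeneous_one ι K)
      (hb.trans_ne one_ne_zero)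
    have := hi.inj_right hp h0
    omega
  · subst hab
    obtain ⟨i, j, hij, hi, hj⟩ := exists_isHomogeneous_of_mul hp h0
    obtain rfl | rfl | ⟨rfl, rfl⟩ : i = 0 ∨ j = 0 ∨ (i = 1 ∧ j = 1) := by omega
    · exact Or.inl (isUnit_of_isHomogeneous_zero hi (left_ne_zero_of_mul h0))
    · exact Or.inr (isUnit_of_isHomogeneous_zero hj (right_ne_zero_of_mul h0))
    · obtain ⟨c, rfl⟩ := exists_eq_linearForm hi
      obtain ⟨d, rfl⟩ := exists_eq_linearForm hj
      exact absurd rfl (h c d)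

end Field

end HomogeneousFactor

theorem sup_colon_singleton {B : Type*} [CommRing B] [IsDomain B] [IsPrincipalIdealRing B]
    (I J : Ideal B) (b : B) : (I ⊔ J).colon {b} = I.colon {b} ⊔ J.colon {b} := by
  refine le_antisymm (fun r hr => ?_) (sup_le (Submodule.colon_mono le_sup_left subset_rfl)
    (Submodule.colon_mono le_sup_right subset_rfl))
  obtain ⟨x, rfl⟩ := IsPrincipalIdealRing.principal I
  obtain ⟨y, rfl⟩ := IsPrincipalIdealRing.principal J
  rw [Submodule.mem_colon_singleton, smul_eq_mul, ← Ideal.span, ← Ideal.span, ← Ideal.span_union,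
    Set.singleton_union, ← IsBezout.span_gcd] at hr
  obtain ⟨w, hw⟩ := Ideal.mem_span_singleton'.1 hr
  obtain ⟨x', hx'⟩ := IsBezout.gcd_dvd_left x y
  obtain ⟨y', hy'⟩ := IsBezout.gcd_dvd_right x y
  by_cases gcd_zero : IsBezout.gcd x y = 0
  · refine Ideal.mem_sup_left (Submodule.mem_colon_singleton.2 ?_)
    rw [smul_eq_mul, ← hw, gcd_zero, mul_zero]
    exact Submodule.zero_mem _
  obtain ⟨s, t, hst⟩ := IsBezout.gcd_eq_sum x y
  have bezout : s * x' + t * y' = 1 :=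
    mul_right_cancel₀ gcd_zero (by linear_combination hst - s * hx' - t * hy')
  have r_eq : r = s * (r * x') + t * (r * y') := by linear_combination (-r) * bezout
  rw [r_eq]
  refine add_mem (Ideal.mem_sup_left (Ideal.mul_mem_left _ _ ?_))
    (Ideal.mem_sup_right (Ideal.mul_mem_left _ _ ?_)) <;> rw [Submodule.mem_colon_singleton]
  · exact Ideal.mem_span_singleton'.2 ⟨w, by rw [smul_eq_mul]; linear_combination x' * hw + w * hx'⟩
  · exact Ideal.mem_span_singleton'.2 ⟨w, by rw [smul_eq_mul]; linear_combination y' * hw + w * hy'⟩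

section ScaledVarIdeal

variable {B : Type*} [CommRing B] {ι : Type*} [DecidableEq ι]

/-- The ideal generated by the `r • X i` with `i ∈ s` and `r ∈ a i`, described by the coefficients
of its elements. -/
def scaledVarIdeal (s : Finset ι) (a : ι → Ideal B) : Ideal (MvPolynomial ι B) where
  carrier := {p | ∀ m, coeff m p ∈ (s ∩ m.support).sup a}
  zero_mem' m := by
    rw [coeff_zero]
    exact zero_mem _
  add_mem' hp hq m := by
    rw [coeff_add]
    exact add_mem (hp m) (hq m)
  smul_mem' c p hp m := by
    rw [smul_eq_mul, coeff_mul]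
    refine sum_mem fun x hx => Ideal.mul_mem_left _ _ ?_
    rw [← Finset.HasAntidiagonal.mem_antidiagonal.1 hx]
    exact SetLike.le_def.1 (Finset.sup_mono (Finset.inter_subset_inter_left
      (Finsupp.support_mono le_add_self))) (hp x.2)

theorem mem_scaledVarIdeal {s : Finset ι} {a : ι → Ideal B} {p : MvPolynomial ι B} :
    p ∈ scaledVarIdeal s a ↔ ∀ m, coeff m p ∈ (s ∩ m.support).sup a :=
  Iff.rfl

theorem scaledVarIdeal_empty (a : ι → Ideal B) : scaledVarIdeal ∅ a = ⊥ := by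
  ext p
  simp only [mem_scaledVarIdeal, Finset.empty_inter, Finset.sup_empty, Ideal.mem_bot,
    MvPolynomial.ext_iff, coeff_zero]

theorem scaledVarIdeal_mono {s t : Finset ι} (h : s ⊆ t) (a : ι → Ideal B) :
    scaledVarIdeal s a ≤ scaledVarIdeal t a :=
  fun _ hp m =>
    SetLike.le_def.1 (Finset.sup_mono (Finset.inter_subset_inter_right h)) (hp m)

theorem monomial_mem_scaledVarIdeal {s : Finset ι} {a : ι → Ideal B} {m : ι →₀ ℕ} {r : B}
    (hr : r ∈ (s ∩ m.support).sup a) : monomial m r ∈ scaledVarIdeal s a := by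
  intro m'
  rw [coeff_monomial]
  split_ifs with h
  · rwa [← h]
  · exact zero_mem _

theorem scaledVarIdeal_insert (s : Finset ι) {a : ι → Ideal B} {k : ι} {b : B}
    (hb : a k = Ideal.span {b}) :
    scaledVarIdeal (insert k s) a = scaledVarIdeal s a ⊔ Ideal.span {C b * X k} := by
  refine le_antisymm (fun p hp => ?_)
    (sup_le (scaledVarIdeal_mono (Finset.subset_insert _ _) a) ?_)
  · rw [p.as_sum]
    refine sum_mem fun m _ => ?_
    have coeff_mem := hp m
    by_cases hk : k ∈ m.support
    · rw [Finset.insert_inter_of_mem hk, Finset.sup_insert, sup_comm] at coeff_mem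
      obtain ⟨u, hu, v, hv, huv⟩ := Submodule.mem_sup.1 coeff_mem
      rw [← huv, map_add]
      refine add_mem (Ideal.mem_sup_left (monomial_mem_scaledVarIdeal hu)) (Ideal.mem_sup_right ?_)
      rw [hb] at hv
      obtain ⟨w, rfl⟩ := Ideal.mem_span_singleton'.1 hv
      refine Ideal.mem_span_singleton'.2 ⟨monomial (m - Finsupp.single k 1) w, ?_⟩
      rw [C_mul_X_eq_monomial, monomial_mul, tsub_add_cancel_of_le]
      exact Finsupp.single_le_iff.2 (Nat.one_le_iff_ne_zero.2 (Finsupp.mem_support_iff.1 hk))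
    · rw [Finset.insert_inter_of_notMem hk] at coeff_mem
      exact Ideal.mem_sup_left (monomial_mem_scaledVarIdeal coeff_mem)
  · rw [Ideal.span_singleton_le_iff_mem, C_mul_X_eq_monomial]
    refine monomial_mem_scaledVarIdeal (Finset.le_sup (f := a) (b := k) ?_ ?_)
    · simp only [Finset.mem_inter, Finset.mem_insert_self, Finsupp.mem_support_iff,
        Finsupp.single_eq_same, ne_eq, one_ne_zero, not_false_eq_true, and_self]
    · rw [hb]
      exact Ideal.mem_span_singleton_self b

theorem scaledVarIdeal_eq_span (s : Finset ι) (b : ι → B) :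
    scaledVarIdeal s (fun i => Ideal.span {b i}) =
      Ideal.span ((fun i => C (b i) * X i) '' (s : Set ι)) := by
  induction s using Finset.induction_on with
  | empty => rw [scaledVarIdeal_empty, Finset.coe_empty, Set.image_empty, Ideal.span_empty]
  | insert k s _ ih =>
    rw [scaledVarIdeal_insert s rfl, ih, Finset.coe_insert, Set.image_insert_eq,
      Ideal.span_insert, sup_comm]

theorem colon_scaledVarIdeal [IsDomain B] [IsPrincipalIdealRing B] {s : Finset ι}
    (a : ι → Ideal B) {k : ι} (hk : k ∉ s) {b : B} (hb : b ≠ 0) :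
    (scaledVarIdeal s a).colon {C b * X k} = scaledVarIdeal s fun i => (a i).colon {b} := by
  have sup_colon (t : Finset ι) : t.sup (fun i => (a i).colon {b}) = (t.sup a).colon {b} := by
    refine (Finset.apply_sup_eq_sup_comp (fun I : Ideal B => I.colon {b})
      (fun I J => sup_colon_singleton I J b) ?_).symm
    ext r
    rw [Submodule.mem_colon_singleton, Ideal.mem_bot, Ideal.mem_bot, smul_eq_mul,
      mul_eq_zero_iff_right hb]
  have support_add (m : ι →₀ ℕ) : s ∩ (m + Finsupp.single k 1).support = s ∩ m.support := by
    ext i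
    simp only [Finset.mem_inter]
    refine and_congr_right fun hi => ?_
    rw [Finsupp.mem_support_iff, Finsupp.mem_support_iff, Finsupp.add_apply,
      Finsupp.single_eq_of_ne (ne_of_mem_of_not_mem hi hk), add_zero]
  have coeff_add (p : MvPolynomial ι B) (m : ι →₀ ℕ) :
      coeff (m + Finsupp.single k 1) (p * (C b * X k)) = coeff m p * b := by
    rw [mul_left_comm, coeff_C_mul, coeff_mul_X, mul_comm]
  ext p
  simp only [Submodule.mem_colon_singleton, mem_scaledVarIdeal, smul_eq_mul, sup_colon]
  refine ⟨fun h m => ?_, fun h m => ?_⟩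
  · rw [← coeff_add, ← support_add]
    exact h _
  · by_cases hm : k ∈ m.support
    · obtain ⟨m, rfl⟩ : ∃ m', m = m' + Finsupp.single k 1 :=
        ⟨_, (tsub_add_cancel_of_le (Finsupp.single_le_iff.2
          (Nat.one_le_iff_ne_zero.2 (Finsupp.mem_support_iff.1 hm)))).symm⟩
      rw [coeff_add, support_add]
      exact h m
    · rw [← mul_assoc, coeff_mul_X', if_neg hm]
      exact zero_mem _

end ScaledVarIdeal

section PID

variable {B : Type u} [CommRing B] [IsDomain B] [IsPrincipalIdealRing B] {ι : Type}

theorem PdLE.quotient_scaledVarIdeal [DecidableEq ι] (s : Finset ι) (a : ι → Ideal B) :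
    PdLE (MvPolynomial ι B) s.card (MvPolynomial ι B ⧸ scaledVarIdeal s a) := by
  induction s using Finset.induction_on generalizing a with
  | empty =>
    rw [scaledVarIdeal_empty]
    exact quotient_bot _
  | insert k s hk ih =>
    obtain ⟨b, hb⟩ := IsPrincipalIdealRing.principal (a k)
    rw [Finset.card_insert_of_notMem hk, scaledVarIdeal_insert s hb]
    by_cases hb0 : b = 0
    · rw [hb0, C_0, zero_mul, Ideal.span_singleton_zero, sup_bot_eq]
      exact (ih a).mono (Nat.le_succ _)
    · exact sup_span_singleton (colon_scaledVarIdeal a hk hb0) (ih _) ((ih a).mono (Nat.le_succ _))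

-- In coordinates adapted to `W` by the Smith normal form, `linearIdeal W` is generated by
-- multiples of distinct variables.
theorem PdLE.quotient_linearIdeal [Fintype ι] (W : Submodule B (ι → B)) :
    PdLE (MvPolynomial ι B) (Module.finrank B W) (MvPolynomial ι B ⧸ linearIdeal W) := by
  classical
  obtain ⟨n, snf⟩ := W.smithNormalForm (Pi.basisFun B ι)
  let b : ι → B := Function.extend snf.f snf.a 0
  let s : Finset ι := Finset.univ.map snf.f
  have card_s : s.card = Module.finrank B W := by
    rw [Finset.card_map, Module.finrank_eq_card_basis snf.bN, Finset.card_univ]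
  have span_basis : Submodule.span B (Set.range fun j => (snf.bN j : ι → B)) = W := by
    refine (congrArg (Submodule.span B) (Set.range_comp W.subtype snf.bN)).trans ?_
    rw [← Submodule.map_span, snf.bN.span_eq, Submodule.map_top, Submodule.range_subtype]
  have map_basis (j : Fin n) : linearSubstEquiv snf.bM.equivFun (linearForm (snf.bN j : ι → B)) =
      C (b (snf.f j)) * X (snf.f j) := by
    rw [linearSubstEquiv_linearForm, snf.snf, map_smul, map_smul, smul_eq_C_mul,
      ← linearForm_single]
    congr 2
    · exact (snf.f.injective.extend_apply _ _ _).symm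
    · ext i
      rw [Module.Basis.equivFun_self, Pi.single_apply]
      simp only [eq_comm]
  refine quotient_of_ringEquiv (linearSubstEquiv snf.bM.equivFun).toRingEquiv ?_
  have map_eq : (linearIdeal W).map (linearSubstEquiv snf.bM.equivFun).toRingEquiv =
      scaledVarIdeal s fun i => Ideal.span {b i} := by
    rw [← congrArg linearIdeal span_basis, linearIdeal_span, Ideal.map_span,
      scaledVarIdeal_eq_span, ← Set.range_comp,
      ← Set.range_comp, Finset.coe_map, Finset.coe_univ, Set.image_univ, ← Set.range_comp]
    exact congrArg (fun g => Ideal.span (Set.range g)) (funext map_basis)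
  rw [map_eq, ← card_s]
  exact quotient_scaledVarIdeal s _

theorem PdLE.quotient_span_linearForm [Fintype ι] {α : Type*} [Fintype α] (c : α → ι → B) :
    PdLE (MvPolynomial ι B) (Fintype.card α)
      (MvPolynomial ι B ⧸ Ideal.span (Set.range fun j => linearForm (c j))) := by
  rw [Set.range_comp' linearForm c, ← linearIdeal_span]
  exact (quotient_linearIdeal _).mono (finrank_range_le_card c)

end PID

theorem eq_of_lt_of_le_of_height_le_two {R : Type*} [CommRing R] [IsDomain R] {P Q Q' : Ideal R}
    [P.IsPrime] [Q.IsPrime] [Q'.IsPrime] (hP : P.height ≤ 2) (hQ : Q ≠ ⊥) (hlt : Q < Q')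
    (hle : Q' ≤ P) : Q' = P := by
  by_contra hne
  have one_le : 1 ≤ Q.height := Order.one_le_iff_ne_zero.2 (mt Ideal.height_eq_zero_iff_eq_bot.1 hQ)
  have two_le := Ideal.height_add_one_le_of_lt_of_isPrime hlt
  have three_le := Ideal.height_add_one_le_of_lt_of_isPrime (hle.lt_of_ne hne)
  have : (1 + 1 + 1 : ℕ∞) ≤ 2 :=
    (add_le_add_left ((add_le_add_left one_le 1).trans two_le) 1).trans (three_le.trans hP)
  exact absurd this (by decide)

theorem span_range_eq_span_range_succAbove_sup {R : Type*} [CommRing R] {m : ℕ}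
    {g c h : Fin (m + 1) → R} {i : Fin (m + 1)} (hg : ∀ j, g j = c j * g i + h j) :
    Ideal.span (Set.range g) =
      Ideal.span (Set.range fun j => h (i.succAbove j)) ⊔ Ideal.span {g i} := by
  refine le_antisymm (Ideal.span_le.2 ?_) (sup_le (Ideal.span_le.2 ?_) ?_)
  · rintro _ ⟨j, rfl⟩
    rcases Fin.eq_self_or_eq_succAbove i j with rfl | ⟨j, rfl⟩
    · exact Ideal.mem_sup_right (Ideal.mem_span_singleton_self _)
    · rw [SetLike.mem_coe, hg (i.succAbove j), add_comm]
      exact Submodule.add_mem_sup (Ideal.subset_span ⟨j, rfl⟩)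
        (Ideal.mul_mem_left _ _ (Ideal.mem_span_singleton_self _))
  · rintro _ ⟨j, rfl⟩
    have h_eq : h (i.succAbove j) = g (i.succAbove j) - c (i.succAbove j) * g i :=
      eq_sub_of_add_eq' (hg _).symm
    simp only [h_eq]
    exact sub_mem (Ideal.subset_span ⟨_, rfl⟩) (Ideal.mul_mem_left _ _ (Ideal.subset_span ⟨i, rfl⟩))
  · exact (Ideal.span_singleton_le_iff_mem _).2 (Ideal.subset_span ⟨i, rfl⟩)

section OneLinearForm

theorem colon_span_singleton_mul_sup {R : Type*} [CommRing R] [IsDomain R] {x : R} (hx : Prime x)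
    (L : Ideal R) {q : R} (hq : ¬x ∣ q) :
    (Ideal.span {x} * L ⊔ Ideal.span {q}).colon {x} = L ⊔ Ideal.span {q} := by
  ext r
  rw [Submodule.mem_colon_singleton, smul_eq_mul]
  refine ⟨fun h => ?_, fun h => ?_⟩
  · obtain ⟨y, hy, z, hz, hyz⟩ := Submodule.mem_sup.1 h
    obtain ⟨y', hy', rfl⟩ := Ideal.mem_span_singleton_mul.1 hy
    obtain ⟨a, rfl⟩ := Ideal.mem_span_singleton'.1 hz
    have dvd_mul : x ∣ a * q := ⟨r - y', by linear_combination hyz⟩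
    obtain ⟨a', rfl⟩ := (hx.dvd_or_dvd dvd_mul).resolve_right hq
    obtain rfl : y' + a' * q = r := mul_left_cancel₀ hx.ne_zero (by linear_combination hyz)
    exact Submodule.add_mem_sup hy' (Ideal.mul_mem_left _ _ (Ideal.mem_span_singleton_self _))
  · obtain ⟨y, hy, z, hz, rfl⟩ := Submodule.mem_sup.1 h
    rw [add_mul, mul_comm y x]
    exact Submodule.add_mem_sup (Ideal.mul_mem_mul (Ideal.mem_span_singleton_self x) hy)
      (Ideal.mul_mem_right _ _ hz)

theorem PdLE.quotient_span_singleton_mul_sup {R : Type u} [CommRing R] [IsDomain R] {x : R}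
    (hx : Prime x) (L : Ideal R) {q : R} (hq : ¬x ∣ q) {n : ℕ} (hn : 2 ≤ n)
    (h : PdLE R n (R ⧸ (L ⊔ Ideal.span {q}))) :
    PdLE R n (R ⧸ (Ideal.span {x} * L ⊔ Ideal.span {q})) := by
  have sup_eq : Ideal.span {x} * L ⊔ Ideal.span {q} ⊔ Ideal.span {x} =
      Ideal.span {x} ⊔ Ideal.span {q} := by
    rw [sup_right_comm, sup_eq_right.2 (Ideal.mul_le_left (J := L))]
  refine of_sup_span_singleton (colon_span_singleton_mul_sup hx L hq) h ?_
  rw [sup_eq]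
  exact (sup_span_singleton_of_isPrime ((Ideal.span_singleton_prime hx.ne_zero).2 hx) q
    (quotient_span_singleton x)).mono hn

variable {ι : Type*} [Fintype ι]

theorem prime_of_isHomogeneous_two_of_mem {K : Type*} [Field K] {P : Ideal (MvPolynomial ι K)}
    [P.IsPrime] {q : MvPolynomial ι K} (hq : q.IsHomogeneous 2) (hq0 : q ≠ 0) (hqP : q ∈ P)
    (h : ∀ c, linearForm c ∈ P → ¬linearForm c ∣ q) : Prime q := by
  refine (irreducible_of_isHomogeneous_two hq hq0 fun c d hcd => ?_).prime
  rcases Ideal.IsPrime.mem_or_mem ‹_› (hcd ▸ hqP) with hc | hd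
  · exact h c hc ⟨_, hcd⟩
  · exact h d hd ⟨_, hcd.trans (mul_comm _ _)⟩

-- Modulo `x`, the ideal `P` becomes principal, generated by the irreducible quadric `q`.
theorem exists_eq_C_mul_add_linearForm_mul {K : Type*} [Field K] {P : Ideal (MvPolynomial ι K)}
    [P.IsPrime] (hP : P.height ≤ 2) {x : ι → K} (hx0 : x ≠ 0) (hxP : linearForm x ∈ P)
    (hx : ∀ c, linearForm c ∈ P → c ∈ Submodule.span K {x})
    {q : MvPolynomial ι K} (hq : q.IsHomogeneous 2) (hqP : q ∈ P) (hxq : ¬linearForm x ∣ q)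
    {p : MvPolynomial ι K} (hp : p.IsHomogeneous 2) (hpP : p ∈ P) :
    ∃ c l, p = C c * q + linearForm x * linearForm l := by
  classical
  obtain ⟨T, -, hker, hsub⟩ := exists_ker_linearSubst_eq_linearIdeal (Submodule.span K {x})
  set φ := linearSubst T
  rw [linearIdeal_span, Set.image_singleton] at hker hsub
  have span_le : Ideal.span {linearForm x} ≤ P := by rwa [Ideal.span_singleton_le_iff_mem]
  have φq_mem : φ q ∈ P := by
    rw [← sub_sub_cancel q (φ q)]
    exact P.sub_mem hqP (span_le (hsub q))
  have φq_ne_zero : φ q ≠ 0 := by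
    rwa [Ne, ← RingHom.mem_ker, hker, Ideal.mem_span_singleton]
  have φq_prime : Prime (φ q) := by
    refine prime_of_isHomogeneous_two_of_mem (isHomogeneous_linearSubst hq T) φq_ne_zero φq_mem
      fun c hcP hc => hxq ?_
    obtain ⟨r, rfl⟩ := Submodule.mem_span_singleton.1 (hx c hcP)
    rw [← add_sub_cancel (φ q) q]
    refine dvd_add (Dvd.dvd.trans ?_ hc) (Ideal.mem_span_singleton.1 (hsub q))
    rw [map_smul, smul_eq_C_mul]
    exact dvd_mul_left _ _
  have : (Ideal.span {φ q}).IsPrime := (Ideal.span_singleton_prime φq_ne_zero).2 φq_prime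
  have x_prime := prime_linearForm hx0
  have : (Ideal.span {linearForm x}).IsPrime :=
    (Ideal.span_singleton_prime x_prime.ne_zero).2 x_prime
  have comap_eq : (Ideal.span {φ q}).comap φ = P := by
    refine eq_of_lt_of_le_of_height_le_two hP (Q := Ideal.span {linearForm x})
      (mt Ideal.span_singleton_eq_bot.1 x_prime.ne_zero) (lt_of_le_of_ne ?_ ?_) fun r hr => ?_
    · exact hker.ge.trans (Ideal.comap_mono bot_le)
    · refine fun h => hxq (Ideal.mem_span_singleton.1 (h.ge ?_))
      exact Ideal.mem_comap.2 (Ideal.mem_span_singleton_self _)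
    · rw [← sub_add_cancel r (φ r)]
      exact P.add_mem (span_le (hsub r)) ((Ideal.span_singleton_le_iff_mem P).2 φq_mem hr)
  obtain ⟨c, hc⟩ := exists_eq_C_mul_of_dvd (isHomogeneous_linearSubst hp T)
    (isHomogeneous_linearSubst hq T) (Ideal.mem_span_singleton.1 (comap_eq.ge hpP))
  have x_dvd : linearForm x ∣ p - C c * q := by
    rw [← Ideal.mem_span_singleton, ← hker, RingHom.mem_ker, map_sub, map_mul, sub_eq_zero]
    exact hc.trans (congrArg (· * φ q) (φ.commutes c).symm)
  obtain ⟨l, hl⟩ := exists_eq_mul_linearForm_of_dvd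
    (hp.sub (by simpa only [zero_add] using (isHomogeneous_C ι c).mul hq))
    (isHomogeneous_linearForm x) x_dvd
  exact ⟨c, l, by rw [← hl, add_sub_cancel]⟩

theorem PdLE.quotient_span_of_unique_linearForm {K : Type u} [Field K] {ι : Type} [Fintype ι]
    {m : ℕ} (hm : 1 ≤ m) {g : Fin (m + 1) → MvPolynomial ι K} (hg : ∀ i, (g i).IsHomogeneous 2)
    (hgu : ∀ f, (∀ i, f ∣ g i) → IsUnit f)
    {P : Ideal (MvPolynomial ι K)} [P.IsPrime] (hP : P.height ≤ 2) (hgP : ∀ i, g i ∈ P)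
    {x : ι → K} (hx0 : x ≠ 0) (hxP : linearForm x ∈ P)
    (hx : ∀ c, linearForm c ∈ P → c ∈ Submodule.span K {x}) :
    PdLE (MvPolynomial ι K) (m + 1) (MvPolynomial ι K ⧸ Ideal.span (Set.range g)) := by
  have x_prime := prime_linearForm hx0
  obtain ⟨i, hi⟩ : ∃ i, ¬linearForm x ∣ g i := by
    by_contra! hdvd
    exact x_prime.not_isUnit (hgu _ hdvd)
  choose c l hcl using fun j =>
    exists_eq_C_mul_add_linearForm_mul hP hx0 hxP hx (hg i) (hgP i) hi (hg j) (hgP j)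
  let L := Ideal.span (Set.range fun j => linearForm (l (i.succAbove j)))
  have span_eq : Ideal.span (Set.range g) = Ideal.span {linearForm x} * L ⊔ Ideal.span {g i} := by
    rw [span_range_eq_span_range_succAbove_sup hcl, Ideal.span_mul_span', Set.singleton_mul,
      ← Set.range_comp]
    rfl
  have L_prime : L.IsPrime := by
    rw [show L = _ from congrArg Ideal.span (Set.range_comp' linearForm _), ← linearIdeal_span]
    exact linearIdeal_isPrime _
  have pd_L := quotient_span_linearForm fun j => l (i.succAbove j)
  rw [Fintype.card_fin] at pd_L
  rw [span_eq]
  exact quotient_span_singleton_mul_sup x_prime L hi (by omega)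
    (sup_span_singleton_of_isPrime L_prime (g i) pd_L)

end OneLinearForm

namespace PdLE

theorem sup_range {R : Type u} [CommRing R] {n : ℕ} {L M : Type u} [AddCommGroup L] [Module R L]
    [AddCommGroup M] [Module R M] {N : Submodule R M} (φ : L →ₗ[R] M) (hN : PdLE R n N)
    (hL : PdLE R n (L ⧸ N.comap φ)) : PdLE R n ↥(N ⊔ LinearMap.range φ) := by
  let S := N.submoduleOf (N ⊔ LinearMap.range φ)
  let ψ : L →ₗ[R] ↥(N ⊔ LinearMap.range φ) ⧸ S :=
    S.mkQ ∘ₗ φ.codRestrict _ fun x => Submodule.mem_sup_right (LinearMap.mem_range_self φ x)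
  have ker_ψ : LinearMap.ker ψ = N.comap φ := by
    rw [LinearMap.ker_comp, Submodule.ker_mkQ]
    rfl
  have surjective_ψ : Function.Surjective ψ := by
    intro y
    obtain ⟨⟨x, hx⟩, rfl⟩ := S.mkQ_surjective y
    obtain ⟨a, ha, _, ⟨b, rfl⟩, rfl⟩ := Submodule.mem_sup.1 hx
    refine ⟨b, (Submodule.Quotient.eq S).2 ?_⟩
    change φ b - (a + φ b) ∈ N
    rw [sub_add_cancel_right]
    exact neg_mem ha
  have hS : PdLE R n S := of_linearEquiv (Submodule.submoduleOfEquivOfLe le_sup_left) hN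
  refine of_submodule_of_quotient hS (of_linearEquiv ?_ hL)
  exact ((Submodule.quotEquivOfEq _ _ ker_ψ.symm).trans
    (ψ.quotKerEquivOfSurjective surjective_ψ)).symm

theorem of_filtration {R : Type u} [CommRing R] {n : ℕ} {L M : Type u} [AddCommGroup L]
    [Module R L] [AddCommGroup M] [Module R M] {T : ℕ → Submodule R M} (φ : ℕ → L →ₗ[R] M)
    (hT : ∀ k, T (k + 1) = T k ⊔ LinearMap.range (φ k)) (htop : ∀ x, ∃ k, x ∈ T k)
    (hM : PdLE R n M) (hL : ∀ k, PdLE R n (L ⧸ (T k).comap (φ k))) : PdLE R n (T 0) := by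
  have mono_T : Monotone T := monotone_nat_of_le_succ fun k => (hT k).symm ▸ le_sup_left
  have comap_map (k : ℕ) : ((T k).map (T 0).mkQ).comap (T 0).mkQ = T k := by
    rw [Submodule.comap_map_mkQ, sup_eq_right.2 (mono_T k.zero_le)]
  have pd_map (k : ℕ) : PdLE R n ((T k).map (T 0).mkQ) := by
    induction k with
    | zero =>
      rw [Submodule.mkQ_map_self]
      exact of_projective n
    | succ k ih =>
      rw [hT, Submodule.map_sup, ← LinearMap.range_comp]
      refine sup_range _ ih ?_
      rw [Submodule.comap_comp, comap_map]
      exact hL k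
  refine submodule_of_quotient hM (of_exhaustion (fun i j h => Submodule.map_mono (mono_T h)) ?_
    pd_map)
  intro y
  obtain ⟨x, rfl⟩ := (T 0).mkQ_surjective y
  exact (htop x).imp fun k hk => Submodule.mem_map_of_mem hk

end PdLE

section Pencil

open scoped Polynomial

variable {R : Type u} [CommRing R]

/-- The module of trivial syzygies `v i • e j - v j • e i` of a family `v` of ring elements. -/
def koszulSyzygies {k : ℕ} (v : Fin k → R) : Submodule R (Fin k → R) :=
  Submodule.span R (Set.range fun p : Fin k × Fin k =>
    v p.1 • Pi.single p.2 1 - v p.2 • Pi.single p.1 1)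

/-- Every syzygy of the family `v` modulo the ideal `A` is trivial modulo `A`: the first Koszul
homology of `v` with coefficients in `R ⧸ A` vanishes. -/
def HasKoszulSyzygies (A : Ideal R) {k : ℕ} (v : Fin k → R) : Prop :=
  ∀ c : Fin k → R, ∑ j, c j * v j ∈ A → c ∈ Submodule.pi Set.univ (fun _ => A) ⊔ koszulSyzygies v

/-- The linear polynomials `u j + v j * X`, encoding the `2 × k` matrix with rows `u` and `v` as a
row over `R[X]`. -/
noncomputable def pencil {k : ℕ} (u v : Fin k → R) (j : Fin k) : R[X] :=
  Polynomial.C (u j) + Polynomial.C (v j) * Polynomial.X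

/-- The ideal of `R[X]` generated by `A` and by the polynomials `u j + v j * X`, whose resolution
over `R[X]` bounds that of the cokernel of the matrix with rows `u` and `v`. -/
noncomputable def pencilIdeal (A : Ideal R) {k : ℕ} (u v : Fin k → R) : Ideal R[X] :=
  A.map Polynomial.C ⊔ Ideal.span (Set.range (pencil u v))

/-- The `R`-submodule of `pencilIdeal A u v` of those elements that can be written with coefficients
of degree less than `n` on the polynomials `u j + v j * X`. -/
noncomputable def pencilLT (A : Ideal R) {k : ℕ} (u v : Fin k → R) : ℕ → Submodule R R[X]
  | 0 => (A.map Polynomial.C).restrictScalars R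
  | n + 1 => pencilLT A u v n ⊔
      Submodule.span R (Set.range fun j => Polynomial.X ^ n * pencil u v j)

variable {A : Ideal R} {k : ℕ} {u v : Fin k → R}

theorem coeff_X_pow_mul_pencil (n i : ℕ) (j : Fin k) :
    (Polynomial.X ^ n * pencil u v j).coeff i =
      (if n = i then u j else 0) + if n + 1 = i then v j else 0 := by
  have h_eq : Polynomial.X ^ n * pencil u v j =
      Polynomial.monomial n (u j) + Polynomial.monomial (n + 1) (v j) := by
    rw [pencil, ← Polynomial.C_mul_X_pow_eq_monomial, ← Polynomial.C_mul_X_pow_eq_monomial]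
    ring
  rw [h_eq, Polynomial.coeff_add, Polynomial.coeff_monomial, Polynomial.coeff_monomial]

theorem pencilLT_mono : Monotone (pencilLT A u v) :=
  monotone_nat_of_le_succ fun _ => le_sup_left

theorem mem_pencilLT_of_coeff_mem {p : R[X]} (hp : ∀ i, p.coeff i ∈ A) (n : ℕ) :
    p ∈ pencilLT A u v n :=
  pencilLT_mono n.zero_le (Ideal.mem_map_C_iff.2 hp)

theorem exists_mem_pencilLT {p : R[X]} (hp : p ∈ pencilIdeal A u v) :
    ∃ n, p ∈ pencilLT A u v n := by
  rw [← Submodule.mem_iSup_of_directed _ pencilLT_mono.directed_le]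
  obtain ⟨y, hy, z, hz, rfl⟩ := Submodule.mem_sup.1 hp
  obtain ⟨c, rfl⟩ := (Submodule.mem_span_range_iff_exists_fun _).1 hz
  refine add_mem (Submodule.mem_iSup_of_mem 0 hy) (Submodule.sum_mem _ fun j _ => ?_)
  induction c j using Polynomial.induction_on' with
  | add p q hp hq => exact (add_smul p q (pencil u v j)).symm ▸ add_mem hp hq
  | monomial n r =>
    have h_eq : Polynomial.monomial n r • pencil u v j = r • (Polynomial.X ^ n * pencil u v j) := by
      rw [← Polynomial.C_mul_X_pow_eq_monomial, Polynomial.smul_eq_C_mul, smul_eq_mul, mul_assoc]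
    rw [h_eq]
    exact Submodule.mem_iSup_of_mem (n + 1)
      (Submodule.mem_sup_right (Submodule.smul_mem _ r (Submodule.subset_span ⟨j, rfl⟩)))

theorem coeff_mem_of_mem_pencilLT {p : R[X]} {n i : ℕ} (hp : p ∈ pencilLT A u v n) (hi : n < i) :
    p.coeff i ∈ A := by
  suffices h : pencilLT A u v n ≤ Submodule.comap (Polynomial.lcoeff R i) A from h hp
  clear hp
  induction n with
  | zero => exact fun p hp => Ideal.mem_map_C_iff.1 hp i
  | succ n ih =>
    refine sup_le (fun p hp => ih (by omega) hp) (Submodule.span_le.2 ?_)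
    rintro _ ⟨j, rfl⟩
    rw [SetLike.mem_coe, Submodule.mem_comap, Polynomial.lcoeff_apply, coeff_X_pow_mul_pencil,
      if_neg (by omega), if_neg (by omega), add_zero]
    exact zero_mem A

theorem coeff_mem_of_mem_pencilLT_self {p : R[X]} {n : ℕ} (hp : p ∈ pencilLT A u v (n + 1)) :
    p.coeff (n + 1) ∈ A ⊔ Ideal.span (Set.range v) := by
  suffices h : pencilLT A u v (n + 1) ≤
    Submodule.comap (Polynomial.lcoeff R (n + 1)) (A ⊔ Ideal.span (Set.range v)) from h hp
  refine sup_le (fun p hp => Ideal.mem_sup_left (coeff_mem_of_mem_pencilLT hp n.lt_succ_self))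
    (Submodule.span_le.2 ?_)
  rintro _ ⟨j, rfl⟩
  rw [SetLike.mem_coe, Submodule.mem_comap, Polynomial.lcoeff_apply, coeff_X_pow_mul_pencil,
    if_neg (by omega), if_pos rfl, zero_add]
  exact Ideal.mem_sup_right (Ideal.subset_span ⟨j, rfl⟩)

theorem sum_smul_mem_pencilLT_of_mem_koszulSyzygies {c : Fin k → R} (hc : c ∈ koszulSyzygies v)
    (n : ℕ) : ∑ j, c j • (Polynomial.X ^ (n + 1) * pencil u v j) ∈ pencilLT A u v (n + 1) := by
  suffices h : koszulSyzygies v ≤ Submodule.comap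
    (Fintype.linearCombination R fun j => Polynomial.X ^ (n + 1) * pencil u v j)
    (pencilLT A u v (n + 1)) from h hc
  refine Submodule.span_le.2 ?_
  rintro _ ⟨⟨i, j⟩, rfl⟩
  have h_eq : v i • (Polynomial.X ^ (n + 1) * pencil u v j) -
      v j • (Polynomial.X ^ (n + 1) * pencil u v i) =
      u j • (Polynomial.X ^ n * pencil u v i) - u i • (Polynomial.X ^ n * pencil u v j) := by
    simp only [pencil, Polynomial.smul_eq_C_mul]
    ring
  rw [SetLike.mem_coe, Submodule.mem_comap, map_sub, map_smul, map_smul,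
    Fintype.linearCombination_apply_single, Fintype.linearCombination_apply_single, one_smul,
    one_smul, h_eq]
  exact Submodule.mem_sup_right (sub_mem
    (Submodule.smul_mem _ _ (Submodule.subset_span ⟨i, rfl⟩))
    (Submodule.smul_mem _ _ (Submodule.subset_span ⟨j, rfl⟩)))

theorem HasKoszulSyzygies.mem_pencilLT (H : HasKoszulSyzygies A v) {p : R[X]} {n : ℕ}
    (hp : p ∈ pencilLT A u v (n + 2)) (hpA : p.coeff (n + 2) ∈ A) : p ∈ pencilLT A u v (n + 1) := by
  obtain ⟨q, hq, z, hz, rfl⟩ := Submodule.mem_sup.1 hp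
  obtain ⟨c, rfl⟩ := (Submodule.mem_span_range_iff_exists_fun _).1 hz
  refine add_mem hq ?_
  have syzygy : ∑ j, c j * v j ∈ A := by
    have coeff_z : (∑ j, c j • (Polynomial.X ^ (n + 1) * pencil u v j)).coeff (n + 2) =
        ∑ j, c j * v j := by
      simp [Polynomial.finsetSum_coeff, coeff_X_pow_mul_pencil]
    rw [Polynomial.coeff_add, coeff_z] at hpA
    exact (add_mem_cancel_left (coeff_mem_of_mem_pencilLT hq (Nat.lt_succ_self _))).1 hpA
  obtain ⟨a, ha, s, hs, rfl⟩ := Submodule.mem_sup.1 (H c syzygy)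
  simp only [Pi.add_apply, add_smul, Finset.sum_add_distrib]
  refine add_mem (mem_pencilLT_of_coeff_mem (fun i => ?_) _)
    (sum_smul_mem_pencilLT_of_mem_koszulSyzygies hs n)
  rw [Polynomial.finsetSum_coeff]
  refine sum_mem fun j _ => ?_
  rw [Polynomial.coeff_smul]
  exact A.mul_mem_right _ (ha j trivial)

theorem HasKoszulSyzygies.mem_pencilLT_of_coeff_mem (H : HasKoszulSyzygies A v) {p : R[X]} {d : ℕ}
    (hp : p ∈ pencilIdeal A u v) (hpA : ∀ i, d + 2 ≤ i → p.coeff i ∈ A) :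
    p ∈ pencilLT A u v (d + 1) := by
  obtain ⟨n, hn⟩ := exists_mem_pencilLT hp
  induction n with
  | zero => exact pencilLT_mono (Nat.zero_le _) hn
  | succ n ih =>
    obtain hle | ⟨m, rfl, hm⟩ : n ≤ d ∨ ∃ m, n = m + 1 ∧ d ≤ m := by
      rcases le_or_gt n d with h | h
      · exact .inl h
      · exact .inr ⟨n - 1, by omega, by omega⟩
    · exact pencilLT_mono (Nat.succ_le_succ hle) hn
    · exact ih (H.mem_pencilLT hn (hpA _ (by omega)))

/-- The submodule of `R × R` whose quotient is the cokernel over `R ⧸ A` of the matrix with columns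
`(u j, v j)`. -/
def columnSubmodule (A : Ideal R) {α : Type*} (u v : α → R) : Submodule R (R × R) :=
  Submodule.prod A A ⊔ Submodule.span R (Set.range fun j => (u j, v j))

/-- The embedding `(a, b) ↦ a + b * X` of `R × R` in `R[X]`. -/
noncomputable def linearPolynomial (R : Type u) [CommRing R] : R × R →ₗ[R] R[X] :=
  (Polynomial.monomial 0).coprod (Polynomial.monomial 1)

theorem coeff_linearPolynomial (x : R × R) (i : ℕ) :
    (linearPolynomial R x).coeff i = (if 0 = i then x.1 else 0) + if 1 = i then x.2 else 0 := by
  rw [linearPolynomial, LinearMap.coprod_apply, Polynomial.coeff_add, Polynomial.coeff_monomial,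
    Polynomial.coeff_monomial]

theorem linearPolynomial_column (j : Fin k) : linearPolynomial R (u j, v j) = pencil u v j := by
  rw [linearPolynomial, LinearMap.coprod_apply, ← Polynomial.C_mul_X_pow_eq_monomial,
    ← Polynomial.C_mul_X_pow_eq_monomial, pow_zero, mul_one, pow_one, pencil]

theorem linearPolynomial_mem_map_C_iff {x : R × R} :
    linearPolynomial R x ∈ A.map Polynomial.C ↔ x ∈ Submodule.prod A A := by
  rw [Ideal.mem_map_C_iff, Submodule.mem_prod]
  refine ⟨fun h => ⟨?_, ?_⟩, fun h i => ?_⟩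
  · simpa [coeff_linearPolynomial] using h 0
  · simpa [coeff_linearPolynomial] using h 1
  · rw [coeff_linearPolynomial]
    exact add_mem (by split_ifs <;> simp [h.1]) (by split_ifs <;> simp [h.2])

theorem range_linearPolynomial :
    LinearMap.range (linearPolynomial R) = Polynomial.degreeLT R 2 := by
  ext p
  rw [Polynomial.mem_degreeLT, Polynomial.degree_lt_iff_coeff_zero]
  refine ⟨?_, fun hp => ⟨(p.coeff 0, p.coeff 1), Polynomial.ext fun i => ?_⟩⟩
  · rintro ⟨x, rfl⟩ i hi
    rw [coeff_linearPolynomial, if_neg (by omega), if_neg (by omega), add_zero]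
  · rw [coeff_linearPolynomial]
    match i with
    | 0 => simp
    | 1 => simp
    | i + 2 => simp [hp (i + 2) (by omega)]

theorem HasKoszulSyzygies.comap_linearPolynomial (H : HasKoszulSyzygies A v) (u : Fin k → R) :
    ((pencilIdeal A u v).restrictScalars R).comap (linearPolynomial R) =
      columnSubmodule A u v := by
  refine le_antisymm (fun x hx => ?_) (sup_le (fun x hx => ?_) (Submodule.span_le.2 ?_))
  · have mem_one : linearPolynomial R x ∈ pencilLT A u v 1 :=
      H.mem_pencilLT_of_coeff_mem hx fun i hi => by
        rw [coeff_linearPolynomial, if_neg (by omega), if_neg (by omega), add_zero]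
        exact zero_mem A
    simp only [pencilLT, pow_zero, one_mul] at mem_one
    obtain ⟨y, hy, z, hz, hyz⟩ := Submodule.mem_sup.1 mem_one
    obtain ⟨c, rfl⟩ := (Submodule.mem_span_range_iff_exists_fun _).1 hz
    obtain rfl : linearPolynomial R (x - ∑ j, c j • (u j, v j)) = y := by
      simp only [map_sub, map_sum, map_smul, linearPolynomial_column, ← hyz, add_sub_cancel_right]
    rw [← sub_add_cancel x (∑ j, c j • (u j, v j))]
    exact Submodule.add_mem_sup (linearPolynomial_mem_map_C_iff.1 hy)
      (Submodule.sum_mem _ fun j _ => Submodule.smul_mem _ _ (Submodule.subset_span ⟨j, rfl⟩))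
  · exact Ideal.mem_sup_left (linearPolynomial_mem_map_C_iff.2 hx)
  · rintro _ ⟨j, rfl⟩
    rw [SetLike.mem_coe, Submodule.mem_comap, linearPolynomial_column]
    exact Ideal.mem_sup_right (Ideal.subset_span ⟨j, rfl⟩)

theorem HasKoszulSyzygies.comap_monomial (H : HasKoszulSyzygies A v) (u : Fin k → R) (n : ℕ) :
    (Polynomial.degreeLT R (n + 2) ⊔ (pencilIdeal A u v).restrictScalars R).comap
      (Polynomial.monomial (n + 2)) = A ⊔ Ideal.span (Set.range v) := by
  refine le_antisymm (fun r hr => ?_) (sup_le (fun r hr => ?_) (Submodule.span_le.2 ?_))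
  · obtain ⟨p, hp, q, hq, hpq⟩ := Submodule.mem_sup.1 hr
    rw [Polynomial.mem_degreeLT, Polynomial.degree_lt_iff_coeff_zero] at hp
    have coeff_q (i : ℕ) (hi : n + 2 ≤ i) : q.coeff i = if n + 2 = i then r else 0 := by
      rw [← Polynomial.coeff_monomial, ← hpq, Polynomial.coeff_add, hp i hi, zero_add]
    have hq' := coeff_mem_of_mem_pencilLT_self <|
      H.mem_pencilLT_of_coeff_mem (d := n + 1) hq fun i hi => by
        rw [coeff_q i (by omega), if_neg (by omega)]
        exact zero_mem A
    rwa [coeff_q _ le_rfl, if_pos rfl] at hq'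
  · refine Submodule.mem_sup_right (Ideal.mem_sup_left (Ideal.mem_map_C_iff.2 fun i => ?_))
    rw [Polynomial.coeff_monomial]
    split_ifs
    exacts [hr, zero_mem A]
  · rintro _ ⟨j, rfl⟩
    have h_eq : Polynomial.monomial (n + 2) (v j) =
        -Polynomial.monomial (n + 1) (u j) + Polynomial.X ^ (n + 1) * pencil u v j := by
      rw [pencil, ← Polynomial.C_mul_X_pow_eq_monomial, ← Polynomial.C_mul_X_pow_eq_monomial]
      ring
    rw [SetLike.mem_coe, Submodule.mem_comap, h_eq]
    refine Submodule.add_mem_sup (neg_mem ?_)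
      (Ideal.mul_mem_left _ _ (Ideal.mem_sup_right (Ideal.subset_span ⟨j, rfl⟩)))
    exact Polynomial.mem_degreeLT.2
      ((Polynomial.degree_monomial_le _ _).trans_lt (by exact_mod_cast (n + 1).lt_succ_self))

theorem degreeLT_succ_eq_sup (n : ℕ) : Polynomial.degreeLT R (n + 1) =
    Polynomial.degreeLT R n ⊔ LinearMap.range (Polynomial.monomial n) := by
  refine le_antisymm (fun p hp => ?_)
    (sup_le (Polynomial.degreeLT_mono n.le_succ) (LinearMap.range_le_iff_comap.2 ?_))
  · rw [← sub_add_cancel p (Polynomial.monomial n (p.coeff n))]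
    refine Submodule.add_mem_sup ?_ ⟨_, rfl⟩
    rw [Polynomial.mem_degreeLT, Polynomial.degree_lt_iff_coeff_zero] at hp ⊢
    intro i hi
    rw [Polynomial.coeff_sub, Polynomial.coeff_monomial]
    split_ifs with h
    · rw [h, sub_self]
    · rw [hp i (by omega), sub_zero]
  · refine eq_top_iff.2 fun r _ => Polynomial.mem_degreeLT.2 ?_
    exact (Polynomial.degree_monomial_le _ _).trans_lt (by exact_mod_cast n.lt_succ_self)

/- The cokernel embeds in `R[X] ⧸ J` as the image of the polynomials of degree at most one; allowing
higher degrees one at a time filters `R[X] ⧸ J`, with all further quotients `R ⧸ (A ⊔ (v))`. -/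
theorem PdLE.quotient_columnSubmodule (H : HasKoszulSyzygies A v) {e : ℕ}
    (hJ : PdLE R[X] e (R[X] ⧸ pencilIdeal A u v))
    (hv : PdLE R e (R ⧸ (A ⊔ Ideal.span (Set.range v)))) :
    PdLE R e ((R × R) ⧸ columnSubmodule A u v) := by
  let J := (pencilIdeal A u v).restrictScalars R
  let T (n : ℕ) : Submodule R (R[X] ⧸ J) := (Polynomial.degreeLT R (n + 2)).map J.mkQ
  have comap_map (n : ℕ) : (T n).comap J.mkQ = Polynomial.degreeLT R (n + 2) ⊔ J := by
    rw [Submodule.comap_map_mkQ, sup_comm]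
  have hT : PdLE R e (T 0) := by
    refine of_filtration (fun n => J.mkQ ∘ₗ Polynomial.monomial (n + 2)) (fun n => ?_) ?_
      (of_linearEquiv (Submodule.Quotient.restrictScalarsEquiv R _) (restrictScalars hJ))
      fun n => ?_
    · rw [LinearMap.range_comp, ← Submodule.map_sup, ← degreeLT_succ_eq_sup]
    · intro x
      obtain ⟨p, rfl⟩ := J.mkQ_surjective x
      refine ⟨p.natDegree, Submodule.mem_map_of_mem (Polynomial.mem_degreeLT.2 ?_)⟩
      exact Polynomial.degree_le_natDegree.trans_lt (by exact_mod_cast (by omega))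
    · rw [Submodule.comap_comp, comap_map, H.comap_monomial]
      exact hv
  let φ := J.mkQ ∘ₗ linearPolynomial R
  have range_φ : LinearMap.range φ = T 0 := by rw [LinearMap.range_comp, range_linearPolynomial]
  have ker_φ : LinearMap.ker φ = columnSubmodule A u v := by
    rw [LinearMap.ker_comp, Submodule.ker_mkQ, H.comap_linearPolynomial]
  rw [← ker_φ]
  exact of_linearEquiv (φ.quotKerEquivRange.trans (LinearEquiv.ofEq _ _ range_φ)) hT

end Pencil

section BaseChange

variable {R S : Type u} [CommRing R] [CommRing S] [Algebra R S] {M M' : Type u}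
  [AddCommGroup M] [Module R M] [AddCommGroup M'] [Module R M'] [Module S M'] [IsScalarTower R S M']

theorem PdLE.quotient_span_image [Module.Flat R S] {f : M →ₗ[R] M'} (hf : IsBaseChange S f)
    {N : Submodule R M} {n : ℕ} (h : PdLE R n (M ⧸ N)) :
    PdLE S n (M' ⧸ Submodule.span S (f '' N)) := by
  let N' := Submodule.span S (f '' N)
  let i : N →ₗ[R] TensorProduct R S N := TensorProduct.mk R S N 1
  let f₁ : TensorProduct R S N →ₗ[S] M' := (f ∘ₗ N.subtype).liftBaseChange S
  let f₂ : M ⧸ N →ₗ[R] M' ⧸ N' := N.liftQ (N'.mkQ.restrictScalars R ∘ₗ f) fun x hx =>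
    (Submodule.Quotient.mk_eq_zero _).2 (Submodule.subset_span ⟨x, hx, rfl⟩)
  have range_f₁ : LinearMap.range f₁ = N' := by
    rw [LinearMap.range_liftBaseChange, LinearMap.range_comp, Submodule.range_subtype]
    rfl
  have h_comm : f ∘ₗ N.subtype = f₁.restrictScalars R ∘ₗ i := by
    ext x
    simp [f₁, i]
  have hf₂ : IsBaseChange S f₂ :=
    .of_right_exact S i f f₂ (g := N.mkQ) h_comm (N.liftQ_mkQ _ _)
      (TensorProduct.isBaseChange R N S) hf (LinearMap.exact_subtype_mkQ N) N.mkQ_surjective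
      (LinearMap.exact_iff.2 (by rw [Submodule.ker_mkQ, range_f₁])) N'.mkQ_surjective
  exact of_linearEquiv hf₂.equiv.symm (h.baseChange S)

end BaseChange

section Columns

variable {R S : Type u} [CommRing R] [CommRing S] {α : Type*} {n : ℕ}

theorem columnSubmodule_bot (u v : α → R) :
    columnSubmodule ⊥ u v = Submodule.span R (Set.range fun j => (u j, v j)) := by
  rw [columnSubmodule, Submodule.prod_bot, bot_sup_eq]

theorem PdLE.quotient_columnSubmodule_of_row_operation {u v : α → R} (t : R)
    (h : PdLE R n ((R × R) ⧸ columnSubmodule ⊥ v (u + t • v))) :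
    PdLE R n ((R × R) ⧸ columnSubmodule ⊥ u v) := by
  let e : (R × R) ≃ₗ[R] (R × R) := LinearEquiv.ofLinearMap
    ((LinearMap.snd R R R).prod (LinearMap.fst R R R + t • LinearMap.snd R R R))
    ((LinearMap.snd R R R - t • LinearMap.fst R R R).prod (LinearMap.fst R R R))
    (by ext <;> simp) (by ext <;> simp)
  have he : (columnSubmodule ⊥ u v).map (e : (R × R) →ₗ[R] (R × R)) =
      columnSubmodule ⊥ v (u + t • v) := by
    rw [columnSubmodule_bot, columnSubmodule_bot, Submodule.map_span, ← Set.range_comp]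
    rfl
  exact of_linearEquiv (Submodule.Quotient.equiv _ _ e he) h

theorem PdLE.quotient_columnSubmodule_map {f : R →+* S} (hf : f.Flat) {u v : α → R}
    (h : PdLE R n ((R × R) ⧸ columnSubmodule ⊥ u v)) :
    PdLE S n ((S × S) ⧸ columnSubmodule ⊥ (f ∘ u) (f ∘ v)) := by
  algebraize [f]
  let g : R × R →ₗ[R] S × S := (Algebra.linearMap R S).prodMap (Algebra.linearMap R S)
  have hg : IsBaseChange S g := .prodMap _ _ (.linearMap R S) (.linearMap R S)
  have h_span : Submodule.span S (g '' columnSubmodule ⊥ u v) =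
      columnSubmodule ⊥ (f ∘ u) (f ∘ v) := by
    rw [columnSubmodule_bot, columnSubmodule_bot, ← Submodule.map_coe, Submodule.map_span,
      Submodule.span_span_of_tower, ← Set.range_comp]
    rfl
  exact h_span ▸ quotient_span_image hg h

end Columns

section KoszulSyzygies

variable {R : Type u} [CommRing R] {A : Ideal R} {k : ℕ}

theorem hasKoszulSyzygies_of_isEmpty (A : Ideal R) (v : Fin 0 → R) : HasKoszulSyzygies A v :=
  fun c _ => by rw [Subsingleton.elim c 0]; exact zero_mem _

theorem cons_zero_mem_koszulSyzygies {v : Fin (k + 1) → R} {c : Fin k → R}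
    (hc : c ∈ koszulSyzygies fun j => v j.succ) :
    (Fin.cons 0 c : Fin (k + 1) → R) ∈ koszulSyzygies v := by
  let E : (Fin k → R) →ₗ[R] (Fin (k + 1) → R) :=
    LinearMap.pi (Fin.cons 0 LinearMap.proj : Fin (k + 1) → (Fin k → R) →ₗ[R] R)
  have hE (c : Fin k → R) : E c = Fin.cons 0 c := by
    ext j
    cases j using Fin.cases <;> rfl
  suffices h : koszulSyzygies (fun j => v j.succ) ≤ (koszulSyzygies v).comap E from hE c ▸ h hc
  refine Submodule.span_le.2 ?_
  rintro _ ⟨⟨i, j⟩, rfl⟩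
  refine Submodule.subset_span ⟨(i.succ, j.succ), ?_⟩
  rw [hE]
  ext l
  cases l using Fin.cases <;> simp [Pi.single_apply, Fin.succ_ne_zero, eq_comm]

theorem HasKoszulSyzygies.of_tail {v : Fin (k + 1) → R}
    (h : HasKoszulSyzygies A fun j => v j.succ)
    (hA : (A ⊔ Ideal.span (Set.range fun j : Fin k => v j.succ)).IsPrime)
    (hv : v 0 ∉ A ⊔ Ideal.span (Set.range fun j : Fin k => v j.succ)) :
    HasKoszulSyzygies A v := by
  intro c hc
  rw [Fin.sum_univ_succ] at hc
  have h_tail :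
      ∑ j : Fin k, c j.succ * v j.succ ∈ Ideal.span (Set.range fun j : Fin k => v j.succ) :=
    Ideal.sum_mem _ fun j _ => Ideal.mul_mem_left _ _ (Ideal.subset_span ⟨j, rfl⟩)
  have h_head : c 0 * v 0 ∈ A ⊔ Ideal.span (Set.range fun j : Fin k => v j.succ) :=
    (Submodule.add_mem_iff_left _ (Ideal.mem_sup_right h_tail)).1 (Ideal.mem_sup_left hc)
  obtain ⟨a, ha, z, hz, h_eq⟩ := Submodule.mem_sup.1 ((hA.mem_or_mem h_head).resolve_right hv)
  obtain ⟨d, rfl⟩ := (Submodule.mem_span_range_iff_exists_fun _).1 hz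
  have h_reduced : ∑ j, (c j.succ + d j * v 0) * v j.succ ∈ A := by
    convert A.sub_mem hc (A.mul_mem_right (v 0) ha) using 1
    simp only [← h_eq, add_mul, Finset.sum_add_distrib, Finset.sum_mul, smul_eq_mul,
      mul_right_comm _ (v 0)]
    ring
  obtain ⟨p, hp, s, hs, hps⟩ := Submodule.mem_sup.1 (h _ h_reduced)
  have hc_eq : c = Fin.cons a p + (Fin.cons 0 s +
      ∑ j : Fin k, d j • (v j.succ • Pi.single 0 1 - v 0 • Pi.single j.succ 1)) := by
    ext l
    cases l using Fin.cases with
    | zero => simp [← h_eq, Finset.sum_apply, Fin.succ_ne_zero]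
    | succ l =>
      have := congrFun hps l
      simp only [Pi.add_apply] at this
      simp [Finset.sum_apply, Pi.single_apply, Fin.succ_ne_zero, ← add_assoc, this]
  rw [hc_eq]
  refine Submodule.add_mem_sup ?_ (add_mem (cons_zero_mem_koszulSyzygies hs) ?_)
  · rintro l -
    cases l using Fin.cases with
    | zero => exact ha
    | succ l => exact hp l trivial
  · exact sum_mem fun j _ => Submodule.smul_mem _ _ (Submodule.subset_span ⟨(j.succ, 0), rfl⟩)

end KoszulSyzygies

section LinearColumns

open scoped Polynomial

variable {K : Type u} [Field K]

section

variable {ι : Type*} [Fintype ι]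

theorem linearIdeal_sup (W W' : Submodule K (ι → K)) :
    linearIdeal (W ⊔ W') = linearIdeal W ⊔ linearIdeal W' := by
  rw [← Submodule.span_eq W, ← Submodule.span_eq W', ← Submodule.span_union, linearIdeal_span,
    linearIdeal_span, linearIdeal_span, Set.image_union, Ideal.span_union]

theorem hasKoszulSyzygies_linearForm {W : Submodule K (ι → K)} {k : ℕ} {c : Fin k → ι → K}
    (h : ∀ d : Fin k → K, ∑ j, d j • c j ∈ W → d = 0) :
    HasKoszulSyzygies (linearIdeal W) fun j => linearForm (c j) := by
  induction k with
  | zero => exact hasKoszulSyzygies_of_isEmpty _ _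
  | succ k ih =>
    let W' := W ⊔ Submodule.span K (Set.range fun j : Fin k => c j.succ)
    have h_sup : linearIdeal W ⊔ Ideal.span (Set.range fun j : Fin k => linearForm (c j.succ)) =
        linearIdeal W' := by
      rw [linearIdeal_sup, linearIdeal_span, ← Set.range_comp]
      rfl
    refine .of_tail (ih fun d hd => ?_) (h_sup ▸ linearIdeal_isPrime _) ?_
    · have := h (Fin.cons 0 d) (by simpa [Fin.sum_univ_succ] using hd)
      exact funext fun j => congrFun this j.succ
    · rw [h_sup, linearForm_mem_linearIdeal_iff]
      intro hc
      obtain ⟨y, hy, z, hz, hyz⟩ := Submodule.mem_sup.1 hc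
      obtain ⟨d, rfl⟩ := (Submodule.mem_span_range_iff_exists_fun _).1 hz
      have := h (Fin.cons 1 (-d)) (by simpa [Fin.sum_univ_succ, ← hyz] using hy)
      exact one_ne_zero (congrFun this 0)

end

variable {ι : Type}

/-- The isomorphism `K[ι][X] ≃ K[X][ι]` which moves the variable `X` into the coefficients. -/
noncomputable def swapVariable (K : Type u) [Field K] (ι : Type) :
    (MvPolynomial ι K)[X] ≃+* MvPolynomial ι K[X] :=
  ((optionEquivLeft K ι).symm.trans (optionEquivRight K ι)).toRingEquiv

theorem swapVariable_X : swapVariable K ι Polynomial.X = C Polynomial.X := by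
  simp [swapVariable]

variable [Fintype ι]

theorem swapVariable_C_linearForm (c : ι → K) :
    swapVariable K ι (Polynomial.C (linearForm c)) =
      linearForm fun i => (Polynomial.C (c i) : K[X]) := by
  simp [swapVariable, linearForm, Fintype.linearCombination_apply, smul_eq_C_mul]

theorem swapVariable_pencil (u v : ι → K) :
    swapVariable K ι
      (Polynomial.C (linearForm u) + Polynomial.C (linearForm v) * Polynomial.X) =
      linearForm fun i => (Polynomial.C (u i) + Polynomial.X * Polynomial.C (v i): K[X]) := by
  rw [map_add, map_mul, swapVariable_C_linearForm, swapVariable_C_linearForm, swapVariable_X,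
    mul_comm, ← smul_eq_C_mul, ← map_smul, ← map_add]
  rfl

theorem map_swapVariable_pencilIdeal {s k : ℕ} (w : Fin s → ι → K) (u v : Fin k → ι → K) :
    (pencilIdeal (Ideal.span (Set.range fun j => linearForm (w j)))
      (fun j => linearForm (u j)) fun j => linearForm (v j)).map (swapVariable K ι) =
    Ideal.span (Set.range fun j => linearForm (Sum.elim (fun j i => Polynomial.C (w j i))
      (fun j i => Polynomial.C (u j i) + Polynomial.X * Polynomial.C (v j i)) j)) := by
  rw [pencilIdeal, Ideal.map_sup, Ideal.map_span, Ideal.map_span, Ideal.map_span,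
    ← Set.range_comp, ← Set.range_comp, ← Set.range_comp, ← Ideal.span_union, ← Set.Sum.elim_range]
  congr 2
  ext1 j
  cases j with
  | inl j => exact swapVariable_C_linearForm _
  | inr j => exact swapVariable_pencil _ _

theorem exists_linearIdeal_eq_span_range (W : Submodule K (ι → K)) :
    ∃ w : Fin (Module.finrank K W) → ι → K,
      linearIdeal W = Ideal.span (Set.range fun j => linearForm (w j)) := by
  let b := Module.finBasis K W
  refine ⟨W.subtype ∘ b, ?_⟩
  have h_span : Submodule.span K (Set.range (W.subtype ∘ b)) = W := by
    rw [Set.range_comp, ← Submodule.map_span, b.span_eq, W.map_subtype_top]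
  rw [← congrArg linearIdeal h_span, linearIdeal_span, ← Set.range_comp]
  rfl

theorem PdLE.quotient_columnSubmodule_linearForm {W : Submodule K (ι → K)} {k : ℕ}
    (u : Fin k → ι → K) {v : Fin k → ι → K} (h : ∀ d : Fin k → K, ∑ j, d j • v j ∈ W → d = 0) :
    PdLE (MvPolynomial ι K) (Module.finrank K W + k) ((MvPolynomial ι K × MvPolynomial ι K) ⧸
      columnSubmodule (linearIdeal W) (fun j => linearForm (u j)) fun j => linearForm (v j)) := by
  obtain ⟨w, hw⟩ := exists_linearIdeal_eq_span_range W
  refine quotient_columnSubmodule (hasKoszulSyzygies_linearForm h) ?_ ?_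
  · refine quotient_of_ringEquiv (swapVariable K ι) ?_
    rw [hw, map_swapVariable_pencilIdeal]
    simpa using quotient_span_linearForm (α := Fin (Module.finrank K W) ⊕ Fin k) _
  · rw [hw, ← Ideal.span_union, ← Set.Sum.elim_range,
      show (Sum.elim (fun j => linearForm (w j)) fun j => linearForm (v j)) =
        fun j => linearForm (Sum.elim w v j) from (Sum.comp_elim linearForm w v).symm]
    simpa using quotient_span_linearForm (Sum.elim w v)

section LinearMap

variable {F : Type*} [AddCommGroup F] [Module K F]

/-- The column of linear forms with coefficient vectors `U x` and `V x`, as a linear function of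
`x`. -/
noncomputable def linearColumn (U V : F →ₗ[K] (ι → K)) :
    F →ₗ[K] MvPolynomial ι K × MvPolynomial ι K :=
  (linearForm ∘ₗ U).prod (linearForm ∘ₗ V)

/-- The submodule generated by `linearIdeal W` in both components and by the columns of linear
forms `linearColumn U V x`. -/
noncomputable def linearColumnSubmodule (W : Submodule K (ι → K)) (U V : F →ₗ[K] (ι → K)) :
    Submodule (MvPolynomial ι K) (MvPolynomial ι K × MvPolynomial ι K) :=
  columnSubmodule (linearIdeal W) (fun x => linearForm (U x)) fun x => linearForm (V x)

theorem linearColumnSubmodule_eq_sup_span (W : Submodule K (ι → K)) (U V : F →ₗ[K] (ι → K))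
    {s : Set F} (hs : Submodule.span K s = ⊤) :
    linearColumnSubmodule W U V =
      Submodule.prod (linearIdeal W) (linearIdeal W) ⊔
        Submodule.span (MvPolynomial ι K) (linearColumn U V '' s) := by
  have h_range : Set.range (linearColumn U V) = Submodule.span K (linearColumn U V '' s) := by
    rw [← Submodule.map_span, hs, Submodule.map_top, LinearMap.coe_range]
  rw [← Submodule.span_span_of_tower K, ← h_range]
  rfl

theorem PdLE.quotient_linearColumnSubmodule [FiniteDimensional K F] {W : Submodule K (ι → K)}
    (U : F →ₗ[K] (ι → K)) {V : F →ₗ[K] (ι → K)} (h : ∀ x, V x ∈ W → x = 0) :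
    PdLE (MvPolynomial ι K) (Module.finrank K W + Module.finrank K F)
      ((MvPolynomial ι K × MvPolynomial ι K) ⧸ linearColumnSubmodule W U V) := by
  let b := Module.finBasis K F
  have h_indep (d : Fin (Module.finrank K F) → K) (hd : ∑ j, d j • V (b j) ∈ W) : d = 0 := by
    have h_sum : ∑ j, d j • b j = 0 := h _ (by simpa only [map_sum, map_smul] using hd)
    exact funext (Fintype.linearIndependent_iff.1 b.linearIndependent d h_sum)
  have := quotient_columnSubmodule_linearForm (fun j => U (b j)) h_indep
  rwa [linearColumnSubmodule_eq_sup_span W U V b.span_eq, ← Set.range_comp]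

end LinearMap

end LinearColumns

section Flat

theorem flat_rename_sumInr (R : Type*) [CommRing R] (σ τ : Type*) :
    (rename Sum.inr : MvPolynomial τ R →ₐ[R] MvPolynomial (σ ⊕ τ) R).toRingHom.Flat := by
  let e := sumAlgEquiv R σ τ
  have he : e.toRingHom.comp (rename Sum.inr : MvPolynomial τ R →ₐ[R] _).toRingHom =
      algebraMap (MvPolynomial τ R) (MvPolynomial σ (MvPolynomial τ R)) :=
    congrArg AlgHom.toRingHom (sumAlgEquiv_comp_rename_inr R σ τ)
  have he_bij : Function.Bijective e.toRingHom := e.bijective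
  rw [← RingHom.Flat.comp_iff_of_bijective_left he_bij, he, RingHom.flat_algebraMap_iff]
  infer_instance

theorem flat_linearSubst {K : Type*} [Field K] {ι κ : Type*} [Fintype ι] [Finite κ]
    [DecidableEq κ] {S : (κ → K) →ₗ[K] (ι → K)} (hS : Function.Injective S) :
    (linearSubst S).toRingHom.Flat := by
  classical
  have := Fintype.ofFinite κ
  obtain ⟨W, hW⟩ := (LinearMap.range S).exists_isCompl
  let r := Module.finrank K W
  let T : (Fin r ⊕ κ → K) ≃ₗ[K] (ι → K) :=
    LinearEquiv.sumArrowLequivProdArrow (Fin r) κ K K ≪≫ₗ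
      (Module.finBasis K W).equivFun.symm.prodCongr (LinearEquiv.ofInjective S hS) ≪≫ₗ
      W.prodEquivOfIsCompl _ hW.symm
  have hT (i : κ) : T (Pi.single (Sum.inr i) 1) = S (Pi.single i 1) := by
    have h_split : LinearEquiv.sumArrowLequivProdArrow (Fin r) κ K K (Pi.single (Sum.inr i) 1) =
        (0, Pi.single i 1) := by
      ext j <;> simp [LinearEquiv.sumArrowLequivProdArrow, Equiv.sumArrowEquivProdArrow,
        Pi.single_apply]
    simp [T, h_split]
  have h_comp : linearSubst S = (linearSubstEquiv T).toAlgHom.comp (rename Sum.inr) := by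
    ext1 i
    rw [AlgHom.comp_apply, rename_X, ← linearForm_single, ← linearForm_single,
      linearSubst_linearForm, ← hT]
    exact (linearSubstEquiv_linearForm T _).symm
  rw [h_comp]
  exact (flat_rename_sumInr K (Fin r) κ).comp (.of_bijective (linearSubstEquiv T).bijective)

end Flat

section LinearColumns

variable {K : Type u} [Field K] {ι : Type} [Fintype ι]
variable {F : Type*} [AddCommGroup F] [Module K F]

theorem linearIdeal_bot : linearIdeal (⊥ : Submodule K (ι → K)) = ⊥ := by
  simp [linearIdeal]

/- All entries of the matrix are linear forms in `finrank (range (U.coprod V))` variables. -/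
theorem PdLE.quotient_linearColumnSubmodule_bot (U V : F →ₗ[K] (ι → K)) :
    PdLE (MvPolynomial ι K) (Module.finrank K (LinearMap.range (U.coprod V)))
      ((MvPolynomial ι K × MvPolynomial ι K) ⧸ linearColumnSubmodule ⊥ U V) := by
  let W := LinearMap.range (U.coprod V)
  let e := (Module.finBasis K W).equivFun
  let S : (Fin (Module.finrank K W) → K) →ₗ[K] (ι → K) := W.subtype ∘ₗ e.symm
  have hS : Function.Injective S := W.subtype_injective.comp e.symm.injective
  let u (x : F) : MvPolynomial (Fin (Module.finrank K W)) K :=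
    linearForm (e ⟨U x, (x, 0), by simp⟩)
  let v (x : F) : MvPolynomial (Fin (Module.finrank K W)) K :=
    linearForm (e ⟨V x, (0, x), by simp⟩)
  have hu : (linearSubst S).toRingHom ∘ u = fun x => linearForm (U x) := by
    ext1 x
    simp [u, S, linearSubst_linearForm]
  have hv : (linearSubst S).toRingHom ∘ v = fun x => linearForm (V x) := by
    ext1 x
    simp [v, S, linearSubst_linearForm]
  have := quotient_columnSubmodule_map (flat_linearSubst hS)
    (mvPolynomial_fin K _ (_ ⧸ columnSubmodule ⊥ u v))
  rwa [hu, hv, ← linearIdeal_bot] at this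

theorem PdLE.quotient_linearColumnSubmodule_of_injective [FiniteDimensional K F]
    (U : F →ₗ[K] (ι → K)) {V : F →ₗ[K] (ι → K)} (hV : Function.Injective V) :
    PdLE (MvPolynomial ι K) (Module.finrank K F)
      ((MvPolynomial ι K × MvPolynomial ι K) ⧸ linearColumnSubmodule ⊥ U V) := by
  have := quotient_linearColumnSubmodule (W := ⊥) U fun x (hx : V x = 0) =>
    (map_eq_zero_iff V hV).1 hx
  rwa [finrank_bot, zero_add] at this

theorem PdLE.quotient_linearColumnSubmodule_of_injective_add [FiniteDimensional K F]
    {U V : F →ₗ[K] (ι → K)} (t : K) (h : Function.Injective (U + t • V)) :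
    PdLE (MvPolynomial ι K) (Module.finrank K F)
      ((MvPolynomial ι K × MvPolynomial ι K) ⧸ linearColumnSubmodule ⊥ U V) := by
  have := quotient_linearColumnSubmodule_of_injective V h
  rw [linearColumnSubmodule, linearIdeal_bot] at this ⊢
  have h_row : (fun x => linearForm ((U + t • V) x)) =
      (fun x => linearForm (U x)) + (C t : MvPolynomial ι K) • fun x => linearForm (V x) := by
    ext1 x
    simp [smul_eq_C_mul]
  exact quotient_columnSubmodule_of_row_operation (C t) (h_row ▸ this)

theorem linearColumnSubmodule_eq_of_sup_eq_top {F₁ F₂ : Submodule K F} (hF : F₁ ⊔ F₂ = ⊤)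
    {W : Submodule K (ι → K)} {U V : F →ₗ[K] (ι → K)}
    (hW : Submodule.span _ (linearColumn U V '' F₁) =
      Submodule.prod (linearIdeal W) (linearIdeal W)) :
    linearColumnSubmodule ⊥ U V = linearColumnSubmodule W (U ∘ₗ F₂.subtype) (V ∘ₗ F₂.subtype) := by
  have h_span : Submodule.span K ((F₁ : Set F) ∪ F₂) = ⊤ := by
    rw [Submodule.span_union, Submodule.span_eq, Submodule.span_eq, hF]
  rw [linearColumnSubmodule_eq_sup_span _ _ _ h_span,
    linearColumnSubmodule_eq_sup_span _ _ _ Submodule.span_univ, linearIdeal_bot,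
    Submodule.prod_bot, bot_sup_eq, Set.image_union, Submodule.span_union, hW]
  congr 2
  ext
  simp [linearColumn]

end LinearColumns

section Kernels

variable {K : Type*} [Field K] {E F : Type*} [AddCommGroup E] [Module K E] [AddCommGroup F]
  [Module K F]

theorem exists_ne_zero_sum_smul_eq_zero {W : Submodule K E} [FiniteDimensional K W] {k : ℕ}
    (hW : Module.finrank K W < k) {x : Fin k → E} (hx : ∀ i, x i ∈ W) :
    ∃ c : Fin k → K, ∑ i, c i • x i = 0 ∧ c ≠ 0 := by
  by_contra! h
  have h_indep : LinearIndependent K fun i => (⟨x i, hx i⟩ : W) := by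
    refine LinearIndependent.of_comp W.subtype (Fintype.linearIndependent_iff.2 fun c hc => ?_)
    exact congrFun (h c hc)
  exact hW.not_ge (by simpa using h_indep.fintype_card_le_finrank)

variable {U V : F →ₗ[K] E}

theorem linearIndependent_of_map_eq_zero (h_common : ∀ w, U w = 0 → V w = 0 → w = 0)
    {w₁ w₂ : F} (hw₁ : U w₁ = 0) (hw₂ : V w₂ = 0) (hw₁0 : w₁ ≠ 0) (hw₂0 : w₂ ≠ 0) :
    LinearIndependent K ![w₁, w₂] := by
  rw [LinearIndependent.pair_iff]
  intro a b h
  have ha : a = 0 := by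
    have := congrArg V h
    simp only [map_add, map_smul, hw₂, smul_zero, add_zero, map_zero] at this
    exact (smul_eq_zero.1 this).resolve_right fun h => hw₁0 (h_common _ hw₁ h)
  refine ⟨ha, (smul_eq_zero.1 ?_).resolve_right hw₂0⟩
  rwa [ha, zero_smul, zero_add] at h

theorem map_smul_add_map_smul_eq_zero {w₁ w₂ w₃ w₄ : F} (hw₁ : U w₁ = 0) (hw₂ : V w₂ = 0)
    (hw₃ : U w₃ + V w₃ = 0) {a b c d t : K} (h₁ : a • w₁ + c • w₃ + d • w₄ = 0)
    (h₂ : b • w₂ + c • w₃ + d • t • w₄ = 0) : U (b • w₂) + V (-(t * a) • w₁) = 0 := by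
  have h : b • w₂ + -(t * a) • w₁ = ((t - 1) * c) • w₃ := by
    linear_combination (norm := module) h₂ - t • h₁
  calc U (b • w₂) + V (-(t * a) • w₁)
      = U (b • w₂ + -(t * a) • w₁) + V (b • w₂ + -(t * a) • w₁) := by simp [hw₁, hw₂]
    _ = ((t - 1) * c) • (U w₃ + V w₃) := by rw [h, map_smul, map_smul, smul_add]
    _ = 0 := by rw [hw₃, smul_zero]

theorem ne_zero_of_linear_relations (h_common : ∀ w, U w = 0 → V w = 0 → w = 0) {t : K}
    (ht0 : t ≠ 0) (ht1 : t ≠ 1) {w₁ w₂ w₃ w₄ : F} (hw₁ : U w₁ = 0) (hw₂ : V w₂ = 0)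
    (hw₃ : U w₃ + V w₃ = 0) (hw₁0 : w₁ ≠ 0) (hw₂0 : w₂ ≠ 0) (hw₃0 : w₃ ≠ 0) (hw₄0 : w₄ ≠ 0)
    {a b c d : K} (h₁ : a • w₁ + c • w₃ + d • w₄ = 0) (h₂ : b • w₂ + c • w₃ + d • t • w₄ = 0)
    (h : ![a, b, c, d] ≠ 0) : a ≠ 0 ∧ b ≠ 0 := by
  by_contra! hab
  have ht : t - 1 ≠ 0 := sub_ne_zero.2 ht1
  have h_relation : (t - 1) • c • w₃ = b • w₂ - t • a • w₁ := by
    linear_combination (norm := module) t • h₁ - h₂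
  have hUV : U (c • w₃) = 0 ∧ V (c • w₃) = 0 := by
    have h_sum : U (c • w₃) + V (c • w₃) = 0 := by simp [← smul_add, hw₃]
    suffices U (c • w₃) = 0 ∨ V (c • w₃) = 0 by
      rcases this with h | h <;> simpa [h] using h_sum
    by_cases ha : a = 0
    · refine .inr ((smul_eq_zero.1 ?_).resolve_left ht)
      rw [← map_smul, h_relation, ha]
      simp [hw₂]
    · refine .inl ((smul_eq_zero.1 ?_).resolve_left ht)
      rw [← map_smul, h_relation, hab ha]
      simp [hw₁]
  have hc : c = 0 := (smul_eq_zero.1 (h_common _ hUV.1 hUV.2)).resolve_right hw₃0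
  subst hc
  simp only [zero_smul, add_zero] at h₁ h₂
  have hd : d = 0 := by
    by_cases ha : a = 0
    · exact (smul_eq_zero.1 (by simpa [ha] using h₁)).resolve_right hw₄0
    · have : d • t • w₄ = 0 := by simpa [hab ha] using h₂
      exact (smul_eq_zero.1 this).resolve_right (smul_ne_zero ht0 hw₄0)
  subst hd
  simp only [zero_smul, add_zero] at h₁ h₂
  have ha : a = 0 := (smul_eq_zero.1 h₁).resolve_right hw₁0
  have hb : b = 0 := (smul_eq_zero.1 h₂).resolve_right hw₂0
  exact h (by simp [ha, hb])

variable [FiniteDimensional K F]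

/- The kernel of `U.coprod V` contains `(w₁, 0)`, `(0, w₂)`, `(w₃, w₃)` and `(w₄, t • w₄)` if the
`wᵢ` are in the kernels of `U`, `V`, `U + V` and `U + t • V`; the solution is a rescaling of `w₁`
and `w₂` along a linear relation between these four vectors. -/
theorem exists_map_add_map_eq_zero (hZ : Module.finrank K (LinearMap.ker (U.coprod V)) ≤ 3)
    (h_common : ∀ w, U w = 0 → V w = 0 → w = 0) (hU : ¬ Function.Injective U)
    (hV : ¬ Function.Injective V) (hUV : ¬ Function.Injective (U + V)) {t : K} (ht0 : t ≠ 0)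
    (ht1 : t ≠ 1) (ht : ¬ Function.Injective (U + t • V)) :
    ∃ w₁ w₂, U w₁ = 0 ∧ V w₂ = 0 ∧ U w₂ + V w₁ = 0 ∧ w₁ ≠ 0 ∧ w₂ ≠ 0 := by
  have exists_ker {f : F →ₗ[K] E} (hf : ¬ Function.Injective f) : ∃ w, f w = 0 ∧ w ≠ 0 := by
    simpa [injective_iff_map_eq_zero] using hf
  obtain ⟨w₁, hw₁, hw₁0⟩ := exists_ker hU
  obtain ⟨w₂, hw₂, hw₂0⟩ := exists_ker hV
  obtain ⟨w₃, hw₃, hw₃0⟩ := exists_ker hUV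
  obtain ⟨w₄, hw₄, hw₄0⟩ := exists_ker ht
  have h_mem : ∀ i, ![(w₁, 0), (0, w₂), (w₃, w₃), (w₄, t • w₄)] i ∈ LinearMap.ker (U.coprod V) := by
    simpa [Fin.forall_fin_succ, hw₁, hw₂] using ⟨hw₃, hw₄⟩
  obtain ⟨c, hc, hc0⟩ := exists_ne_zero_sum_smul_eq_zero (by omega) h_mem
  obtain ⟨hc₁, hc₂⟩ : c 0 • w₁ + c 2 • w₃ + c 3 • w₄ = 0 ∧
      c 1 • w₂ + c 2 • w₃ + c 3 • t • w₄ = 0 := by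
    simpa [Fin.sum_univ_four, Prod.ext_iff] using hc
  have hc_eq : ![c 0, c 1, c 2, c 3] = c := by
    ext i
    fin_cases i <;> rfl
  obtain ⟨ha, hb⟩ := ne_zero_of_linear_relations h_common ht0 ht1 hw₁ hw₂ hw₃ hw₁0 hw₂0 hw₃0 hw₄0
    hc₁ hc₂ (hc_eq ▸ hc0)
  refine ⟨-(t * c 0) • w₁, c 1 • w₂, by simp [hw₁], by simp [hw₂],
    map_smul_add_map_smul_eq_zero hw₁ hw₂ hw₃ hc₁ hc₂, ?_, smul_ne_zero hb hw₂0⟩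
  exact smul_ne_zero (neg_ne_zero.2 (mul_ne_zero ht0 ha)) hw₁0

theorem mem_span_pair_of_map_mem_span (hZ : Module.finrank K (LinearMap.ker (U.coprod V)) ≤ 3)
    (h_common : ∀ w, U w = 0 → V w = 0 → w = 0) {w₁ w₂ : F} (hw₁ : U w₁ = 0) (hw₂ : V w₂ = 0)
    (hw : U w₂ + V w₁ = 0) (hw₁0 : w₁ ≠ 0) (hw₂0 : w₂ ≠ 0) {x : F}
    (hx : V x ∈ Submodule.span K {V w₁}) : x ∈ Submodule.span K {w₁, w₂} := by
  obtain ⟨a, ha⟩ := Submodule.mem_span_singleton.1 hx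
  have h_mem : ∀ i, ![(w₁, 0), (0, w₂), (w₂, w₁), (0, x - a • w₁)] i ∈
      LinearMap.ker (U.coprod V) := by
    simp [Fin.forall_fin_succ, hw₁, hw₂, hw, ha]
  obtain ⟨c, hc, hc0⟩ := exists_ne_zero_sum_smul_eq_zero (by omega) h_mem
  obtain ⟨hc₁, hc₂⟩ : c 0 • w₁ + c 2 • w₂ = 0 ∧
      c 1 • w₂ + c 2 • w₁ + c 3 • (x - a • w₁) = 0 := by
    simpa [Fin.sum_univ_four, Prod.ext_iff] using hc
  have h_indep := linearIndependent_of_map_eq_zero h_common hw₁ hw₂ hw₁0 hw₂0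
  obtain ⟨h0, h2⟩ := LinearIndependent.pair_iff.1 h_indep _ _ hc₁
  rw [h2, zero_smul, add_zero] at hc₂
  have h3 : c 3 ≠ 0 := by
    intro h3
    rw [h3, zero_smul, add_zero] at hc₂
    have h1 := (smul_eq_zero.1 hc₂).resolve_right hw₂0
    exact hc0 (funext fun i => by fin_cases i <;> assumption)
  have hx : c 3 • x = (c 3 * a) • w₁ + (-c 1) • w₂ := by
    linear_combination (norm := module) hc₂
  rw [(eq_inv_smul_iff₀ h3).2 hx]
  exact Submodule.smul_mem _ _ (Submodule.mem_span_pair.2 ⟨_, _, rfl⟩)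

theorem ker_le_span_singleton_or_ker_le_span_singleton
    (hZ : Module.finrank K (LinearMap.ker (U.coprod V)) ≤ 3) {w : F} (hU : U w = 0)
    (hV : V w = 0) (hw : w ≠ 0) :
    LinearMap.ker U ≤ Submodule.span K {w} ∨ LinearMap.ker V ≤ Submodule.span K {w} := by
  by_contra! h
  obtain ⟨x, hx, hxw⟩ := SetLike.not_le_iff_exists.1 h.1
  obtain ⟨y, hy, hyw⟩ := SetLike.not_le_iff_exists.1 h.2
  have h_mem : ∀ i, ![(w, 0), (0, w), (x, 0), (0, y)] i ∈ LinearMap.ker (U.coprod V) := by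
    simpa [Fin.forall_fin_succ, hU, hV] using ⟨hx, hy⟩
  obtain ⟨c, hc, hc0⟩ := exists_ne_zero_sum_smul_eq_zero (by omega) h_mem
  obtain ⟨hc₁, hc₂⟩ : c 0 • w + c 2 • x = 0 ∧ c 1 • w + c 3 • y = 0 := by
    simpa [Fin.sum_univ_four, Prod.ext_iff] using hc
  have h_pair {z : F} (hz : z ∉ Submodule.span K {w}) : LinearIndependent K ![w, z] :=
    (LinearIndependent.pair_iff' hw).2 fun a ha => hz (Submodule.mem_span_singleton.2 ⟨a, ha⟩)
  obtain ⟨h0, h2⟩ := LinearIndependent.pair_iff.1 (h_pair hxw) _ _ hc₁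
  obtain ⟨h1, h3⟩ := LinearIndependent.pair_iff.1 (h_pair hyw) _ _ hc₂
  exact hc0 (funext fun i => by fin_cases i <;> assumption)

end Kernels

section Cokernel

variable {K : Type u} [Field K] {ι : Type} [Fintype ι]
variable {F : Type*} [AddCommGroup F] [Module K F]

theorem span_image_linearColumn_span (U V : F →ₗ[K] (ι → K)) (s : Set F) :
    Submodule.span (MvPolynomial ι K) (linearColumn U V '' Submodule.span K s) =
      Submodule.span (MvPolynomial ι K) (linearColumn U V '' s) := by
  rw [← Submodule.map_coe, Submodule.map_span, Submodule.span_span_of_tower]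

theorem span_image_linearColumn_pair {U V : F →ₗ[K] (ι → K)} {w₁ w₂ : F} (hw₁ : U w₁ = 0)
    (hw₂ : V w₂ = 0) (hw : U w₂ + V w₁ = 0) :
    Submodule.span (MvPolynomial ι K) (linearColumn U V '' Submodule.span K {w₁, w₂}) =
      Submodule.prod (linearIdeal (Submodule.span K {V w₁}))
        (linearIdeal (Submodule.span K {V w₁})) := by
  rw [span_image_linearColumn_span, linearIdeal_span, Set.image_singleton]
  have h₁ : linearColumn U V w₁ = (0, linearForm (V w₁)) := by simp [linearColumn, hw₁]
  have h₂ : linearColumn U V w₂ = (-linearForm (V w₁), 0) := by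
    simp [linearColumn, hw₂, eq_neg_of_add_eq_zero_left hw]
  rw [Set.image_pair, h₁, h₂]
  ext ⟨p, q⟩
  simp only [Submodule.mem_span_pair, Submodule.mem_prod, Ideal.mem_span_singleton']
  constructor
  · rintro ⟨a, b, h⟩
    obtain ⟨rfl, rfl⟩ : -(b * linearForm (V w₁)) = p ∧ a * linearForm (V w₁) = q := by
      simpa using h
    exact ⟨⟨-b, by ring⟩, a, rfl⟩
  · rintro ⟨⟨b, rfl⟩, a, rfl⟩
    exact ⟨a, -b, by simp⟩

variable [FiniteDimensional K F] {U V : F →ₗ[K] (ι → K)}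

theorem PdLE.quotient_linearColumnSubmodule_of_common_kernel
    (hZ : Module.finrank K (LinearMap.ker (U.coprod V)) ≤ 3) {w : F} (hU : U w = 0)
    (hV : V w = 0) (hw : w ≠ 0) :
    PdLE (MvPolynomial ι K) (Module.finrank K F)
      ((MvPolynomial ι K × MvPolynomial ι K) ⧸ linearColumnSubmodule ⊥ U V) := by
  obtain ⟨F', hF'⟩ := (Submodule.span K {w}).exists_isCompl
  have h_columns : Submodule.span (MvPolynomial ι K)
      (linearColumn U V '' Submodule.span K {w}) =
        Submodule.prod (linearIdeal (⊥ : Submodule K (ι → K))) (linearIdeal ⊥) := by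
    rw [span_image_linearColumn_span, linearIdeal_bot, Submodule.prod_bot]
    simp [linearColumn, hU, hV]
  rw [linearColumnSubmodule_eq_of_sup_eq_top hF'.sup_eq_top h_columns]
  have h_injective {f : F →ₗ[K] (ι → K)} (hf : LinearMap.ker f ≤ Submodule.span K {w}) :
      Function.Injective (f ∘ₗ F'.subtype) := by
    refine LinearMap.ker_eq_bot.1 ((Submodule.eq_bot_iff _).2 fun x hx => ?_)
    exact Subtype.ext (Submodule.disjoint_def.1 hF'.disjoint _ (hf hx) x.2)
  refine PdLE.mono (Submodule.finrank_le F') ?_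
  rcases ker_le_span_singleton_or_ker_le_span_singleton hZ hU hV hw with h | h
  · refine quotient_linearColumnSubmodule_of_injective_add 0 ?_
    rw [zero_smul, add_zero]
    exact h_injective h
  · exact quotient_linearColumnSubmodule_of_injective _ (h_injective h)

theorem PdLE.quotient_linearColumnSubmodule_of_map_add_map_eq_zero
    (hZ : Module.finrank K (LinearMap.ker (U.coprod V)) ≤ 3)
    (h_common : ∀ w, U w = 0 → V w = 0 → w = 0) {w₁ w₂ : F} (hw₁ : U w₁ = 0) (hw₂ : V w₂ = 0)
    (hw : U w₂ + V w₁ = 0) (hw₁0 : w₁ ≠ 0) (hw₂0 : w₂ ≠ 0) :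
    PdLE (MvPolynomial ι K) (Module.finrank K F)
      ((MvPolynomial ι K × MvPolynomial ι K) ⧸ linearColumnSubmodule ⊥ U V) := by
  obtain ⟨F', hF'⟩ := (Submodule.span K {w₁, w₂}).exists_isCompl
  rw [linearColumnSubmodule_eq_of_sup_eq_top hF'.sup_eq_top
    (span_image_linearColumn_pair hw₁ hw₂ hw)]
  have h_finrank : Module.finrank K (Submodule.span K {w₁, w₂}) = 2 := by
    have h_indep := linearIndependent_of_map_eq_zero h_common hw₁ hw₂ hw₁0 hw₂0
    rw [← Matrix.range_cons_cons_empty w₁ w₂ ![], finrank_span_eq_card h_indep, Fintype.card_fin]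
  have h_add := Submodule.finrank_add_eq_of_isCompl hF'
  have h_line : Module.finrank K (Submodule.span K {V w₁}) ≤ 1 :=
    (finrank_span_le_card _).trans (by simp)
  refine PdLE.mono (by omega) (quotient_linearColumnSubmodule (U ∘ₗ F'.subtype) fun x hx => ?_)
  have hx_mem := mem_span_pair_of_map_mem_span hZ h_common hw₁ hw₂ hw hw₁0 hw₂0 hx
  exact Subtype.ext (Submodule.disjoint_def.1 hF'.disjoint _ hx_mem x.2)

/- If the kernel of `U.coprod V` has dimension at most `3` and no member of the pencil
`U`, `V`, `U + t • V` is injective, then four members of the pencil produce a common kernel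
vector or a pair `w₁`, `w₂` whose columns are `(0, ℓ)` and `(-ℓ, 0)`. -/
theorem PdLE.quotient_linearColumnSubmodule_of_four_le_finrank [Infinite K]
    (U V : F →ₗ[K] (ι → K)) (hF : 4 ≤ Module.finrank K F) :
    PdLE (MvPolynomial ι K) (2 * Module.finrank K F - 4)
      ((MvPolynomial ι K × MvPolynomial ι K) ⧸ linearColumnSubmodule ⊥ U V) := by
  by_cases h_range : Module.finrank K (LinearMap.range (U.coprod V)) ≤ 2 * Module.finrank K F - 4
  · exact (quotient_linearColumnSubmodule_bot U V).mono h_range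
  have hZ : Module.finrank K (LinearMap.ker (U.coprod V)) ≤ 3 := by
    have h_add := LinearMap.finrank_range_add_finrank_ker (U.coprod V)
    rw [Module.finrank_prod] at h_add
    omega
  refine PdLE.mono (m := Module.finrank K F) (by omega) ?_
  by_cases hV : Function.Injective V
  · exact quotient_linearColumnSubmodule_of_injective U hV
  obtain ⟨t, ht⟩ := (Set.toFinite ({0, 1} : Set K)).exists_notMem
  obtain ⟨ht0, ht1⟩ : t ≠ 0 ∧ t ≠ 1 := by simpa using ht
  by_contra h
  have h_pencil (s : K) : ¬ Function.Injective (U + s • V) :=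
    mt (quotient_linearColumnSubmodule_of_injective_add s) h
  have h_common (w) (hUw : U w = 0) (hVw : V w = 0) : w = 0 := by
    by_contra hw
    exact h (quotient_linearColumnSubmodule_of_common_kernel hZ hUw hVw hw)
  have hU : ¬ Function.Injective U := by simpa using h_pencil 0
  have hUV : ¬ Function.Injective (U + V) := by simpa using h_pencil 1
  obtain ⟨w₁, w₂, hw₁, hw₂, hw, hw₁0, hw₂0⟩ :=
    exists_map_add_map_eq_zero hZ h_common hU hV hUV ht0 ht1 (h_pencil t)
  exact h (quotient_linearColumnSubmodule_of_map_add_map_eq_zero hZ h_common hw₁ hw₂ hw hw₁0 hw₂0)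

end Cokernel

section MinorMap

variable {R : Type u} [CommRing R]

/-- The linear map `(p, q) ↦ x * q - y * p`, sending a column to the determinant of the `2 × 2`
matrix with first column `(x, y)`. -/
def minorMap (x y : R) : R × R →ₗ[R] R :=
  x • LinearMap.snd R R R - y • LinearMap.fst R R R

theorem minorMap_apply (x y : R) (p : R × R) : minorMap x y p = x * p.2 - y * p.1 :=
  rfl

theorem range_minorMap (x y : R) : LinearMap.range (minorMap x y) = Ideal.span {x, y} := by
  ext r
  rw [Ideal.mem_span_pair]
  constructor
  · rintro ⟨p, rfl⟩
    exact ⟨p.2, -p.1, by rw [minorMap_apply]; ring⟩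
  · rintro ⟨a, b, rfl⟩
    exact ⟨(-b, a), by rw [minorMap_apply]; ring⟩

theorem ker_minorMap [IsDomain R] {x y : R} (hx : Prime x) (hy : ¬x ∣ y) :
    LinearMap.ker (minorMap x y) = Submodule.span R {(x, y)} := by
  ext ⟨p, q⟩
  rw [LinearMap.mem_ker, minorMap_apply, sub_eq_zero, Submodule.mem_span_singleton]
  constructor
  · intro h
    obtain ⟨a, rfl⟩ := (hx.dvd_or_dvd ⟨q, h.symm⟩).resolve_left hy
    refine ⟨a, Prod.ext (mul_comm a x) (mul_left_cancel₀ hx.ne_zero ?_)⟩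
    calc x * (a * y) = y * (x * a) := by ring
      _ = x * q := h.symm
  · rintro ⟨a, h⟩
    obtain ⟨rfl, rfl⟩ : a * x = p ∧ a * y = q := by simpa using h
    ring

theorem map_minorMap_span_range (x y : R) {n : ℕ} (u v : Fin n → R) :
    (Submodule.span R (Set.range fun j => (u j, v j))).map (minorMap x y) =
      repByMinors x y u v := by
  rw [Submodule.map_span, ← Set.range_comp]
  rfl

theorem comap_minorMap_repByMinors [IsDomain R] {x y : R} (hx : Prime x) (hy : ¬x ∣ y) {n : ℕ}
    (u v : Fin n → R) :
    Submodule.comap (minorMap x y) (repByMinors x y u v) =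
      columnSubmodule ⊥ (Fin.cons x u : Fin (n + 1) → R) (Fin.cons y v : Fin (n + 1) → R) := by
  have h_range : (Set.range fun j : Fin (n + 1) =>
      ((Fin.cons x u : Fin (n + 1) → R) j, (Fin.cons y v : Fin (n + 1) → R) j)) =
        {(x, y)} ∪ Set.range fun j => (u j, v j) := by
    rw [Set.singleton_union, ← Fin.range_cons]
    congr 1
    ext j : 1
    cases j using Fin.cases <;> rfl
  rw [← map_minorMap_span_range, Submodule.comap_map_eq, ker_minorMap hx hy, columnSubmodule_bot,
    h_range, Submodule.span_union, sup_comm]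

theorem PdLE.quotient_of_comap {M N : Type u} [AddCommGroup M] [AddCommGroup N] [Module R M]
    [Module R N] {n : ℕ} (φ : M →ₗ[R] N) {S : Submodule R N} (hS : S ≤ LinearMap.range φ)
    (h : PdLE R n (M ⧸ S.comap φ)) (h_range : PdLE R n (N ⧸ LinearMap.range φ)) :
    PdLE R n (N ⧸ S) := by
  refine middle_of_exact (f := Submodule.mapQ (S.comap φ) S φ le_rfl) (g := Submodule.factor hS)
    ?_ (Submodule.factor_surjective hS) ?_ h h_range
  · rw [← LinearMap.ker_eq_bot, Submodule.ker_mapQ, Submodule.mkQ_map_self]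
  · rw [LinearMap.exact_iff, Submodule.ker_mapQ, Submodule.range_mapQ, Submodule.comap_id]

end MinorMap

section Minors

variable {R : Type u} [CommRing R] [IsDomain R]

theorem PdLE.quotient_repByMinors {x y : R} (hx : Prime x) (hy : ¬x ∣ y) {n k : ℕ} (hk : 2 ≤ k)
    (u v : Fin n → R) (h : PdLE R k ((R × R) ⧸
      columnSubmodule ⊥ (Fin.cons x u : Fin (n + 1) → R) (Fin.cons y v : Fin (n + 1) → R))) :
    PdLE R k (R ⧸ repByMinors x y u v) := by
  have h_le : repByMinors x y u v ≤ LinearMap.range (minorMap x y) := by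
    rw [← map_minorMap_span_range]
    exact LinearMap.map_le_range
  refine quotient_of_comap (minorMap x y) h_le ?_ ?_
  · rwa [comap_minorMap_repByMinors hx hy]
  · rw [range_minorMap, Ideal.span_insert]
    have hx_prime := (Ideal.span_singleton_prime hx.ne_zero).2 hx
    exact (sup_span_singleton_of_isPrime hx_prime y (quotient_span_singleton x)).mono hk

end Minors

section LinearPair

theorem homogeneousComponent_add_mul {ι B : Type*} [CommRing B] (a : MvPolynomial ι B)
    {b : MvPolynomial ι B} {d e : ℕ} (hb : b.IsHomogeneous e) :
    homogeneousComponent (d + e) (a * b) = homogeneousComponent d a * b := by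
  let _ : GradedAlgebra (homogeneousSubmodule ι B) := gradedAlgebra
  rw [← decomposition.decompose'_apply, ← decomposition.decompose'_apply]
  exact DirectSum.coe_decompose_mul_add_of_right_mem (homogeneousSubmodule ι B) hb

variable {ι : Type} [Fintype ι] {K : Type u} [Field K]

theorem exists_eq_linearForm_mul_sub {x y : ι → K} {p : MvPolynomial ι K} (hp : p.IsHomogeneous 2)
    (h : p ∈ Ideal.span {linearForm x, linearForm y}) :
    ∃ u v, p = linearForm x * linearForm v - linearForm y * linearForm u := by
  obtain ⟨a, b, rfl⟩ := Ideal.mem_span_pair.1 h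
  obtain ⟨v, hv⟩ := exists_eq_linearForm (homogeneousComponent_isHomogeneous 1 a)
  obtain ⟨u, hu⟩ := exists_eq_linearForm (homogeneousComponent_isHomogeneous 1 b)
  refine ⟨-u, v, ?_⟩
  calc a * linearForm x + b * linearForm y
      = homogeneousComponent 2 (a * linearForm x + b * linearForm y) := by
        rw [homogeneousComponent_of_mem hp, if_pos rfl]
    _ = linearForm v * linearForm x + linearForm u * linearForm y := by
        rw [map_add, homogeneousComponent_add_mul (d := 1) a (isHomogeneous_linearForm x),
          homogeneousComponent_add_mul (d := 1) b (isHomogeneous_linearForm y), hu, hv]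
    _ = linearForm x * linearForm v - linearForm y * linearForm (-u) := by
        rw [map_neg]
        ring

theorem span_linearForm_pair_eq_of_height_le_two {P : Ideal (MvPolynomial ι K)} [P.IsPrime]
    (hP : P.height ≤ 2) {x y : ι → K} (hx0 : x ≠ 0) (hy : y ∉ Submodule.span K {x})
    (hxP : linearForm x ∈ P) (hyP : linearForm y ∈ P) :
    Ideal.span {linearForm x, linearForm y} = P := by
  have h_span : Ideal.span {linearForm x} = linearIdeal (Submodule.span K {x}) := by
    rw [linearIdeal_span, Set.image_singleton]
  have h_span_pair : Ideal.span {linearForm x, linearForm y} =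
      linearIdeal (Submodule.span K {x, y}) := by
    rw [linearIdeal_span, Set.image_pair]
  have : (Ideal.span {linearForm x}).IsPrime := h_span ▸ linearIdeal_isPrime _
  have : (Ideal.span {linearForm x, linearForm y}).IsPrime := h_span_pair ▸ linearIdeal_isPrime _
  refine eq_of_lt_of_le_of_height_le_two hP (Q := Ideal.span {linearForm x}) ?_ ?_ ?_
  · simpa using (prime_linearForm hx0).ne_zero
  · refine SetLike.lt_iff_le_and_exists.2 ⟨Ideal.span_mono (by simp), linearForm y, ?_, ?_⟩
    · exact Ideal.subset_span (by simp)
    · rwa [h_span, linearForm_mem_linearIdeal_iff]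
  · rw [Ideal.span_le, Set.pair_subset_iff]
    exact ⟨hxP, hyP⟩

theorem linearColumnSubmodule_linearCombination {α : Type*} [Fintype α]
    (W : Submodule K (ι → K)) (u v : α → ι → K) :
    linearColumnSubmodule W (Fintype.linearCombination K u) (Fintype.linearCombination K v) =
      columnSubmodule (linearIdeal W) (linearForm ∘ u) (linearForm ∘ v) := by
  classical
  rw [linearColumnSubmodule_eq_sup_span _ _ _ (Pi.basisFun K α).span_eq, ← Set.range_comp,
    columnSubmodule]
  congr 3
  ext1 j
  simp [linearColumn, Fintype.linearCombination_apply_single]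

theorem PdLE.quotient_span_of_linearIndependent [Infinite K] {n : ℕ}
    {g : Fin n → MvPolynomial ι K} (hn : 3 ≤ n) (hg : ∀ i, (g i).IsHomogeneous 2)
    {P : Ideal (MvPolynomial ι K)} [P.IsPrime] (hP : P.height ≤ 2) (hgP : ∀ i, g i ∈ P)
    {x y : ι → K} (hx0 : x ≠ 0) (hxP : linearForm x ∈ P) (hyP : linearForm y ∈ P)
    (hy : y ∉ Submodule.span K {x}) :
    PdLE (MvPolynomial ι K) (2 * n - 2) (MvPolynomial ι K ⧸ Ideal.span (Set.range g)) := by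
  have h_dvd : ¬linearForm x ∣ linearForm y := mt linearForm_dvd_linearForm_iff.1 hy
  have h_eq := span_linearForm_pair_eq_of_height_le_two hP hx0 hy hxP hyP
  choose u v huv using fun j => exists_eq_linearForm_mul_sub (hg j) (h_eq ▸ hgP j)
  have h_minors : Ideal.span (Set.range g) =
      repByMinors (linearForm x) (linearForm y) (linearForm ∘ u) (linearForm ∘ v) :=
    congrArg (fun g => Ideal.span (Set.range g)) (funext huv)
  rw [h_minors]
  refine quotient_repByMinors (prime_linearForm hx0) h_dvd (by omega) _ _ ?_
  rw [← Fin.comp_cons, ← Fin.comp_cons, ← linearIdeal_bot,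
    ← linearColumnSubmodule_linearCombination]
  refine mono (le_of_eq ?_) (quotient_linearColumnSubmodule_of_four_le_finrank _ _ ?_)
  · rw [Module.finrank_fin_fun]
    omega
  · rw [Module.finrank_fin_fun]
    omega

end LinearPair

section Linkage

open scoped Polynomial

variable {S : Type u} [CommRing S] {a f r₁ r₂ l₁ l₂ s₁ s₂ t : S}

-- The two generators are `l₁ * (X + t) - a * s₂` and `l₂ * (X + t) + a * s₁`: they lie in
-- `(a, X + t)`, and `f` is the determinant of the matrix expressing them through `a` and `X + t`.
theorem colon_eq_span_C_sup_span_X_add_C (ha : Prime a) (haf : ¬a ∣ f)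
    (hf : f = l₁ * s₁ + l₂ * s₂) (h₁ : r₁ = l₁ * t - a * s₂) (h₂ : r₂ = l₂ * t + a * s₁) :
    (Ideal.span {Polynomial.C l₁ * Polynomial.X + Polynomial.C r₁} ⊔
      Ideal.span {Polynomial.C l₂ * Polynomial.X + Polynomial.C r₂}).colon {Polynomial.C f} =
      Ideal.span {Polynomial.C a} ⊔ Ideal.span {Polynomial.X + Polynomial.C t} := by
  simp only [← Ideal.span_insert]
  ext r
  rw [Submodule.mem_colon_singleton, smul_eq_mul, Ideal.mem_span_pair, Ideal.mem_span_pair]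
  constructor
  · rintro ⟨A, B, hr⟩
    have eval_hr := congrArg (Polynomial.eval (-t)) hr
    simp only [Polynomial.eval_add, Polynomial.eval_mul, Polynomial.eval_C,
      Polynomial.eval_X] at eval_hr
    have dvd_mul : a ∣ r.eval (-t) * f :=
      ⟨B.eval (-t) * s₁ - A.eval (-t) * s₂, by rw [← eval_hr, h₁, h₂]; ring⟩
    obtain ⟨b, hb⟩ := (ha.dvd_or_dvd dvd_mul).resolve_right haf
    obtain ⟨c, hc⟩ := Polynomial.X_sub_C_dvd_sub_C_eval (a := -t) (p := r)
    refine ⟨Polynomial.C b, c, ?_⟩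
    rw [hb, map_neg, map_mul] at hc
    linear_combination -hc
  · rintro ⟨A, B, rfl⟩
    refine ⟨B * Polynomial.C s₁ - A * Polynomial.C l₂,
      B * Polynomial.C s₂ + A * Polynomial.C l₁, ?_⟩
    simp only [h₁, h₂, hf, map_add, map_sub, map_mul]
    ring

variable [IsDomain S] [UniqueFactorizationMonoid S]

theorem PdLE.quotient_span_of_linked (hl₁ : Prime l₁) (hr₁ : ¬l₁ ∣ r₁) (ha : Prime a)
    (haf : ¬a ∣ f) (hf : f = l₁ * s₁ + l₂ * s₂) (h₁ : r₁ = l₁ * t - a * s₂)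
    (h₂ : r₂ = l₂ * t + a * s₁) :
    PdLE S[X] 3 (S[X] ⧸ (Ideal.span {Polynomial.C l₁ * Polynomial.X + Polynomial.C r₁} ⊔
      Ideal.span {Polynomial.C l₂ * Polynomial.X + Polynomial.C r₂} ⊔
        Ideal.span {Polynomial.C f})) := by
  have h_prime : Prime (Polynomial.C l₁ * Polynomial.X + Polynomial.C r₁) :=
    (Polynomial.irreducible_C_mul_X_add_C hl₁.ne_zero
      (hl₁.irreducible.isRelPrime_iff_not_dvd.2 hr₁)).prime
  have pd_pair {p : S[X]} (hp : Prime p) (q : S[X]) :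
      PdLE S[X] 2 (S[X] ⧸ (Ideal.span {p} ⊔ Ideal.span {q})) :=
    sup_span_singleton_of_isPrime ((Ideal.span_singleton_prime hp.ne_zero).2 hp) q
      (quotient_span_singleton p)
  exact sup_span_singleton (colon_eq_span_C_sup_span_X_add_C ha haf hf h₁ h₂)
    (pd_pair (Polynomial.prime_C_iff.2 ha) _) (mono (by omega) (pd_pair h_prime _))

end Linkage

section Eliminant

variable {K : Type*} [Field K] {ι : Type*} [Fintype ι]

/-- The resultant with respect to `X` of two polynomials `linearForm v.1 * X + v.2` and
`linearForm w.1 * X + w.2` of degree at most one in `X`, as a linear map in the second. -/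
noncomputable def eliminant (v : (ι → K) × MvPolynomial ι K) :
    (ι → K) × MvPolynomial ι K →ₗ[K] MvPolynomial ι K :=
  LinearMap.mulLeft K (linearForm v.1) ∘ₗ LinearMap.snd K _ _ -
    LinearMap.mulRight K v.2 ∘ₗ linearForm ∘ₗ LinearMap.fst K _ _

variable {f : MvPolynomial ι K} {v w w₂ : (ι → K) × MvPolynomial ι K} {a a₂ : ι → K}

theorem eliminant_apply (v w : (ι → K) × MvPolynomial ι K) :
    eliminant v w = linearForm v.1 * w.2 - linearForm w.1 * v.2 :=
  rfl

theorem isHomogeneous_eliminant (hv : v.2.IsHomogeneous 2) (hw : w.2.IsHomogeneous 2) :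
    (eliminant v w).IsHomogeneous 3 :=
  ((isHomogeneous_linearForm v.1).mul hw).sub ((isHomogeneous_linearForm w.1).mul hv)

theorem mem_span_singleton_of_eliminant_eq_zero (hv₁ : v.1 ≠ 0) (hv : ¬linearForm v.1 ∣ v.2)
    (h : eliminant v w = 0) : w ∈ Submodule.span K {v} := by
  have h_eq : linearForm v.1 * w.2 = linearForm w.1 * v.2 := sub_eq_zero.1 h
  obtain ⟨c, hc⟩ := Submodule.mem_span_singleton.1 <| linearForm_dvd_linearForm_iff.1 <|
    ((prime_linearForm hv₁).dvd_or_dvd ⟨w.2, h_eq.symm⟩).resolve_right hv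
  refine Submodule.mem_span_singleton.2 ⟨c, Prod.ext hc ?_⟩
  refine mul_left_cancel₀ (prime_linearForm hv₁).ne_zero ?_
  rw [h_eq, ← hc, map_smul, Prod.smul_snd, smul_mul_assoc, mul_smul_comm]

theorem mem_span_pair_of_dvd_eliminant (hf : f.IsHomogeneous 2) (hv : v.2.IsHomogeneous 2)
    (hw : w.2.IsHomogeneous 2) (hv₁ : v.1 ≠ 0) (hvf : ¬linearForm v.1 ∣ f)
    (hw₁ : w.1 ∈ Submodule.span K {v.1}) (h : f ∣ eliminant v w) :
    w ∈ Submodule.span K {v, (0, f)} := by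
  have hl := prime_linearForm hv₁
  obtain ⟨c, hc⟩ := Submodule.mem_span_singleton.1 hw₁
  obtain ⟨b, hb⟩ := h
  have h_eq : linearForm v.1 * (w.2 - c • v.2) = f * b := by
    rw [← hb, eliminant_apply, ← hc, map_smul, smul_mul_assoc, mul_sub, mul_smul_comm]
  obtain ⟨e, rfl⟩ := (hl.dvd_or_dvd ⟨_, h_eq.symm⟩).resolve_left hvf
  have h_dvd : f ∣ w.2 - c • v.2 :=
    ⟨e, mul_left_cancel₀ hl.ne_zero (by rw [h_eq, mul_left_comm])⟩
  obtain ⟨d, hd⟩ :=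
    exists_eq_C_mul_of_dvd (hw.sub ((homogeneousSubmodule ι K 2).smul_mem c hv)) hf h_dvd
  refine Submodule.mem_span_pair.2 ⟨c, d, Prod.ext ?_ ?_⟩
  · simp [hc]
  · change c • v.2 + d • f = w.2
    rw [smul_eq_C_mul f, ← hd, add_sub_cancel]

theorem notMem_span_pair_of_eliminant_eq (hv₁ : v.1 ≠ 0)
    (hv : ∀ c, ¬linearForm v.1 ∣ v.2 + C c * f) (hw : w.1 ∉ Submodule.span K {v.1})
    (h : eliminant v w = f * linearForm a) : a ∉ Submodule.span K {v.1, w.1} := by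
  intro ha
  obtain ⟨b, c, rfl⟩ := Submodule.mem_span_pair.1 ha
  rw [eliminant_apply, map_add, map_smul, map_smul, smul_eq_C_mul, smul_eq_C_mul] at h
  have h_dvd : linearForm v.1 ∣ linearForm w.1 * (v.2 + C c * f) :=
    ⟨w.2 - C b * f, by linear_combination -h⟩
  rcases (prime_linearForm hv₁).dvd_or_dvd h_dvd with h | h
  · exact hw (linearForm_dvd_linearForm_iff.1 h)
  · exact hv c h

theorem mem_linearIdeal_of_eliminant_eq (ha : a ∉ Submodule.span K {v.1, w.1})
    (h : eliminant v w = f * linearForm a) : f ∈ linearIdeal (Submodule.span K {v.1, w.1}) := by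
  have := linearIdeal_isPrime (Submodule.span K {v.1, w.1})
  refine (‹Ideal.IsPrime _›.mem_or_mem (h ▸ sub_mem ?_ ?_ : f * linearForm a ∈ _)).resolve_right
    (mt linearForm_mem_linearIdeal_iff.1 ha)
  all_goals
    exact Ideal.mul_mem_right _ _ (linearForm_mem_linearIdeal (Submodule.subset_span (by simp)))

-- Eliminating the quadratic parts from the two relations leaves
-- `w₂.1 * a ≡ w.1 * a₂` modulo `v.1`, and `a₂` is nonzero modulo `(v.1, w₂.1)`.
theorem mem_span_pair_of_eliminant_eq (hv₁ : v.1 ≠ 0) (hvf : ¬linearForm v.1 ∣ f)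
    (ha₂ : a₂ ∉ Submodule.span K {v.1, w₂.1}) (h₂ : eliminant v w₂ = f * linearForm a₂)
    (h : eliminant v w = f * linearForm a) : w.1 ∈ Submodule.span K {v.1, w₂.1} := by
  have h_dvd : linearForm v.1 ∣
      f * (linearForm w₂.1 * linearForm a - linearForm w.1 * linearForm a₂) := by
    refine ⟨linearForm w₂.1 * w.2 - linearForm w.1 * w₂.2, ?_⟩
    rw [eliminant_apply] at h h₂
    linear_combination (-linearForm w₂.1) * h + linearForm w.1 * h₂
  obtain ⟨e, he⟩ := ((prime_linearForm hv₁).dvd_or_dvd h_dvd).resolve_left hvf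
  have := linearIdeal_isPrime (Submodule.span K {v.1, w₂.1})
  have h_mem : linearForm w.1 * linearForm a₂ ∈
      linearIdeal (Submodule.span K {v.1, w₂.1}) := by
    rw [← sub_sub_cancel (linearForm w₂.1 * linearForm a) (linearForm w.1 * linearForm a₂), he]
    exact sub_mem
      (Ideal.mul_mem_right _ _ (linearForm_mem_linearIdeal (Submodule.subset_span (by simp))))
      (Ideal.mul_mem_right _ _ (linearForm_mem_linearIdeal (Submodule.subset_span (by simp))))
  exact linearForm_mem_linearIdeal_iff.1 <|
    (‹Ideal.IsPrime _›.mem_or_mem h_mem).resolve_right (mt linearForm_mem_linearIdeal_iff.1 ha₂)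

end Eliminant

section PointedQuadric

open scoped Polynomial

variable {K : Type u} [Field K] {ι : Type} [Fintype ι]

/-- The polynomial `linearForm w.1 * X + w.2`. When `w.2` is a quadratic form this is the general
quadric passing through the point all of whose coordinates other than `X` vanish. -/
noncomputable def pointedQuadric :
    (ι → K) × MvPolynomial ι K →ₗ[K] (MvPolynomial ι K)[X] :=
  LinearMap.mulRight K Polynomial.X ∘ₗ Polynomial.CAlgHom.toLinearMap ∘ₗ linearForm ∘ₗ
    LinearMap.fst K _ _ + Polynomial.CAlgHom.toLinearMap ∘ₗ LinearMap.snd K _ _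

variable {f : MvPolynomial ι K} {v w w₂ : (ι → K) × MvPolynomial ι K} {a₂ : ι → K}

theorem pointedQuadric_apply (w : (ι → K) × MvPolynomial ι K) :
    pointedQuadric w = Polynomial.C (linearForm w.1) * Polynomial.X + Polynomial.C w.2 :=
  rfl

theorem pointedQuadric_zero_left (f : MvPolynomial ι K) :
    pointedQuadric (0, f) = Polynomial.C f := by
  simp [pointedQuadric_apply]

theorem pointedQuadric_injective :
    Function.Injective (pointedQuadric (K := K) (ι := ι)) := by
  refine (injective_iff_map_eq_zero _).2 fun w hw => ?_
  rw [pointedQuadric_apply] at hw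
  refine Prod.ext (linearForm_eq_zero_iff.1 ?_) ?_
  · simpa using congrArg (Polynomial.coeff · 1) hw
  · simpa using congrArg (Polynomial.coeff · 0) hw

theorem C_eliminant (v w : (ι → K) × MvPolynomial ι K) :
    Polynomial.C (eliminant v w) = Polynomial.C (linearForm v.1) * pointedQuadric w -
      Polynomial.C (linearForm w.1) * pointedQuadric v := by
  simp only [eliminant_apply, pointedQuadric_apply, map_sub, map_mul]
  ring

theorem span_pointedQuadric_triple (v w₂ : (ι → K) × MvPolynomial ι K) (f : MvPolynomial ι K) :
    Ideal.span (pointedQuadric '' (Submodule.span K {v, w₂, (0, f)} : Set _)) =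
      Ideal.span {Polynomial.C (linearForm v.1) * Polynomial.X + Polynomial.C v.2} ⊔
        Ideal.span {Polynomial.C (linearForm w₂.1) * Polynomial.X + Polynomial.C w₂.2} ⊔
          Ideal.span {Polynomial.C f} := by
  rw [← Submodule.map_coe, Submodule.map_span, Ideal.span, Submodule.span_span_of_tower,
    sup_assoc, ← Ideal.span_insert, ← Ideal.span_insert, Set.image_insert_eq, Set.image_pair,
    pointedQuadric_zero_left, pointedQuadric_apply, pointedQuadric_apply]

theorem PdLE.quotient_span_pointedQuadric_triple (hv₁ : v.1 ≠ 0)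
    (hv : ∀ c, ¬linearForm v.1 ∣ v.2 + C c * f) (hf : ∀ x, ¬linearForm x ∣ f)
    (hw₂ : w₂.1 ∉ Submodule.span K {v.1}) (h₂ : eliminant v w₂ = f * linearForm a₂) :
    PdLE (MvPolynomial ι K)[X] 3 ((MvPolynomial ι K)[X] ⧸
      Ideal.span (pointedQuadric '' (Submodule.span K {v, w₂, (0, f)} : Set _))) := by
  have hl := prime_linearForm hv₁
  have ha₂ := notMem_span_pair_of_eliminant_eq hv₁ hv hw₂ h₂
  have ha₂0 : a₂ ≠ 0 := fun h => ha₂ (h ▸ zero_mem _)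
  have f_mem := mem_linearIdeal_of_eliminant_eq ha₂ h₂
  rw [linearIdeal_span, Set.image_pair] at f_mem
  obtain ⟨s₁, s₂, hs⟩ := Ideal.mem_span_pair.1 f_mem
  rw [eliminant_apply] at h₂
  have h_dvd : linearForm v.1 ∣ linearForm w₂.1 * (v.2 + linearForm a₂ * s₂) :=
    ⟨w₂.2 - linearForm a₂ * s₁, by linear_combination -h₂ + linearForm a₂ * hs⟩
  obtain ⟨t, ht⟩ :=
    (hl.dvd_or_dvd h_dvd).resolve_left (mt linearForm_dvd_linearForm_iff.1 hw₂)
  rw [span_pointedQuadric_triple]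
  refine quotient_span_of_linked (s₁ := s₁) (s₂ := s₂) (t := t) hl (by simpa using hv 0)
    (prime_linearForm ha₂0) (hf a₂) ?_ ?_ ?_
  · linear_combination -hs
  · linear_combination ht
  · refine mul_left_cancel₀ hl.ne_zero ?_
    linear_combination h₂ - linearForm a₂ * hs + linearForm w₂.1 * ht

theorem exists_mem_notMem_span_pair {V : Type*} [AddCommGroup V] [Module K V]
    {W : Submodule K V} (hW : 3 ≤ Module.finrank K W) (a b : V) :
    ∃ w ∈ W, w ∉ Submodule.span K {a, b} := by
  by_contra! h
  have := FiniteDimensional.span_of_finite K (Set.toFinite {a, b})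
  have le_two : Set.finrank K {a, b} ≤ 2 := by
    simpa using finrank_range_le_card (R := K) ![b, a]
  exact absurd (hW.trans (Submodule.finrank_mono h)) (not_le.2 (Nat.lt_succ_of_le le_two))

theorem eq_span_triple_of_dvd_eliminant {W : Submodule K ((ι → K) × MvPolynomial ι K)}
    (hW : 3 ≤ Module.finrank K W) (hW₂ : ∀ w ∈ W, w.2.IsHomogeneous 2) (hv : v ∈ W)
    (hv₁ : v.1 ≠ 0) (hv₂ : ∀ c, ¬linearForm v.1 ∣ v.2 + C c * f) (hf₂ : f.IsHomogeneous 2)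
    (hf : ∀ x, ¬linearForm x ∣ f) (h : ∀ w ∈ W, f ∣ eliminant v w) :
    ∃ w₂ a₂, w₂.1 ∉ Submodule.span K {v.1} ∧ eliminant v w₂ = f * linearForm a₂ ∧
      W = Submodule.span K {v, w₂, (0, f)} := by
  have exists_eq {w} (hw : w ∈ W) : ∃ a, eliminant v w = f * linearForm a :=
    exists_eq_mul_linearForm_of_dvd (isHomogeneous_eliminant (hW₂ v hv) (hW₂ w hw)) hf₂ (h w hw)
  have mem_span {w} (hw : w ∈ W) (hw₁ : w.1 ∈ Submodule.span K {v.1}) :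
      w ∈ Submodule.span K {v, (0, f)} :=
    mem_span_pair_of_dvd_eliminant hf₂ (hW₂ v hv) (hW₂ w hw) hv₁ (hf _) hw₁ (h w hw)
  obtain ⟨w₂, hw₂, hw₂_notMem⟩ := exists_mem_notMem_span_pair hW v (0, f)
  have hw₂₁ : w₂.1 ∉ Submodule.span K {v.1} := mt (mem_span hw₂) hw₂_notMem
  obtain ⟨a₂, ha₂⟩ := exists_eq hw₂
  have := FiniteDimensional.span_of_finite K (Set.toFinite {v, w₂, (0, f)})
  refine ⟨w₂, a₂, hw₂₁, ha₂, Submodule.eq_of_le_of_finrank_le (fun w hw => ?_) ?_⟩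
  · obtain ⟨a, ha⟩ := exists_eq hw
    obtain ⟨b, c, hbc⟩ := Submodule.mem_span_pair.1 <| mem_span_pair_of_eliminant_eq hv₁ (hf _)
      (notMem_span_pair_of_eliminant_eq hv₁ hv₂ hw₂₁ ha₂) ha₂ ha
    have h_sub := mem_span (W.sub_mem hw (W.smul_mem c hw₂))
      (Submodule.mem_span_singleton.2 ⟨b, eq_sub_of_add_eq hbc⟩)
    rw [← sub_add_cancel w (c • w₂)]
    refine add_mem (Submodule.span_mono ?_ h_sub)
      (Submodule.smul_mem _ _ (Submodule.subset_span ?_))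
    · exact Set.insert_subset_insert (Set.subset_insert _ _)
    · simp
  · have le_three : Set.finrank K {v, w₂, (0, f)} ≤ 3 := by
      simpa using finrank_range_le_card (R := K) ![(0, f), w₂, v]
    exact le_three.trans hW

end PointedQuadric

section PointedQuadricIdeal

open scoped Polynomial

theorem exists_prime_C_mem_iff_dvd {S : Type*} [CommRing S] [IsDomain S]
    [UniqueFactorizationMonoid S] {P : Ideal S[X]} [hP' : P.IsPrime] (hP : P.height ≤ 2) {b : S}
    (hb : b ≠ 0) (hbP : Polynomial.C b ∈ P) {p : S[X]} (hpP : p ∈ P) {n : ℕ}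
    (hpn : Polynomial.C (p.coeff n) ∉ P) : ∃ f, Prime f ∧ ∀ g, Polynomial.C g ∈ P ↔ f ∣ g := by
  have comap_prime : (P.comap Polynomial.C).IsPrime := Ideal.comap_isPrime _ _
  have comap_ne_bot : P.comap Polynomial.C ≠ ⊥ := Submodule.ne_bot_iff _ |>.2 ⟨b, hbP, hb⟩
  obtain ⟨f, hfP, hf⟩ := Ideal.IsPrime.exists_mem_prime_of_ne_bot comap_prime comap_ne_bot
  have hCf : Prime (Polynomial.C f) := Polynomial.prime_C_iff.2 hf
  refine ⟨f, hf, fun g => ⟨fun hg => ?_, fun h => P.mem_of_dvd (map_dvd _ h) hfP⟩⟩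
  by_contra hfg
  have := (Ideal.span_singleton_prime hCf.ne_zero).2 hCf
  have := (Ideal.isPrime_map_C_iff_isPrime (P.comap Polynomial.C)).2 comap_prime
  have h_lt : Ideal.span {Polynomial.C f} < (P.comap Polynomial.C).map Polynomial.C := by
    refine lt_of_le_not_ge ?_ fun h => hfg ?_
    · exact (Ideal.span_singleton_le_iff_mem _).2 (Ideal.mem_map_of_mem _ hfP)
    · have h_dvd := Ideal.mem_span_singleton.1 (h (Ideal.mem_map_of_mem _ hg))
      simpa using (Polynomial.C_dvd_iff_dvd_coeff _ _).1 h_dvd 0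
  have h_eq := eq_of_lt_of_le_of_height_le_two hP
    (mt Ideal.span_singleton_eq_bot.1 hCf.ne_zero) h_lt Ideal.map_comap_le
  exact hpn (Ideal.mem_map_C_iff.1 (h_eq ▸ hpP) n)

variable {K : Type u} [Field K] {ι : Type} [Fintype ι]
  {W : Submodule K ((ι → K) × MvPolynomial ι K)} {v : (ι → K) × MvPolynomial ι K}

theorem isHomogeneous_two_of_dvd_eliminant (hW : 3 ≤ Module.finrank K W)
    (hW₂ : ∀ w ∈ W, w.2.IsHomogeneous 2) (hvW : v ∈ W) (hv₁ : v.1 ≠ 0)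
    (hv : ¬linearForm v.1 ∣ v.2) {f : MvPolynomial ι K} (hf : Prime f)
    (hf₁ : ∀ x, f ∣ linearForm x → x = 0) (h : ∀ w ∈ W, f ∣ eliminant v w) :
    f.IsHomogeneous 2 := by
  have hom_three {w} (hw : w ∈ W) := isHomogeneous_eliminant (hW₂ v hvW) (hW₂ w hw)
  obtain ⟨w₀, hw₀, hw₀_notMem⟩ := exists_mem_notMem_span_pair hW v v
  rw [Set.pair_eq_singleton] at hw₀_notMem
  have ne_zero : eliminant v w₀ ≠ 0 :=
    mt (mem_span_singleton_of_eliminant_eq_zero hv₁ hv) hw₀_notMem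
  obtain ⟨b, hb⟩ := h w₀ hw₀
  obtain ⟨i, j, hij, hfi, -⟩ := exists_isHomogeneous_of_mul (hb ▸ hom_three hw₀) (hb ▸ ne_zero)
  obtain rfl | rfl | rfl | rfl : i = 0 ∨ i = 1 ∨ i = 2 ∨ i = 3 := by omega
  · obtain ⟨c, rfl⟩ := exists_eq_C_of_isHomogeneous_zero hfi
    have hc : c ≠ 0 := fun h => hf.ne_zero (by rw [h, C_0])
    exact absurd ((isUnit_iff_ne_zero.2 hc).map C) hf.not_isUnit
  · obtain ⟨x, rfl⟩ := exists_eq_linearForm hfi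
    exact absurd (hf₁ x dvd_rfl) (mt linearForm_eq_zero_iff.2 hf.ne_zero)
  · exact hfi
  · obtain ⟨w, hw, hw_notMem⟩ := exists_mem_notMem_span_pair hW v w₀
    obtain ⟨c, hc⟩ := exists_eq_C_mul_of_dvd (hom_three hw₀) hfi (h w₀ hw₀)
    obtain ⟨d, hd⟩ := exists_eq_C_mul_of_dvd (hom_three hw) hfi (h w hw)
    have hc0 : c ≠ 0 := fun h => ne_zero (by rw [hc, h, C_0, zero_mul])
    have h_zero : eliminant v (w - (d / c) • w₀) = 0 := by
      rw [map_sub, map_smul, hc, hd, smul_eq_C_mul, ← mul_assoc, ← C_mul, div_mul_cancel₀ _ hc0,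
        sub_self]
    obtain ⟨e, he⟩ := Submodule.mem_span_singleton.1
      (mem_span_singleton_of_eliminant_eq_zero hv₁ hv h_zero)
    exact absurd (Submodule.mem_span_pair.2 ⟨e, d / c, by rw [he, sub_add_cancel]⟩) hw_notMem

theorem not_linearForm_dvd_of_pointedQuadric_mem {P : Ideal (MvPolynomial ι K)[X]}
    [hP : P.IsPrime] (hlin : ∀ x, Polynomial.C (linearForm x) ∈ P → x = 0)
    (hlinX : ∀ x, Polynomial.X + Polynomial.C (linearForm x) ∉ P) (hv₁ : v.1 ≠ 0)
    (hv₂ : v.2.IsHomogeneous 2) (hvP : pointedQuadric v ∈ P) : ¬linearForm v.1 ∣ v.2 := by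
  intro h
  obtain ⟨y, hy⟩ := exists_eq_mul_linearForm_of_dvd hv₂ (isHomogeneous_linearForm _) h
  rw [pointedQuadric_apply, hy, map_mul, ← mul_add] at hvP
  exact (hP.mem_or_mem hvP).elim (fun h => hv₁ (hlin _ h)) (hlinX y)

theorem PdLE.quotient_span_pointedQuadric {P : Ideal (MvPolynomial ι K)[X]} [hP' : P.IsPrime]
    (hP : P.height ≤ 2) (hlin : ∀ x, Polynomial.C (linearForm x) ∈ P → x = 0)
    (hlinX : ∀ x, Polynomial.X + Polynomial.C (linearForm x) ∉ P)
    (hWP : ∀ w ∈ W, pointedQuadric w ∈ P) (hW₂ : ∀ w ∈ W, w.2.IsHomogeneous 2)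
    (hW : 3 ≤ Module.finrank K W) (hvW : v ∈ W) (hv₁ : v.1 ≠ 0) :
    PdLE (MvPolynomial ι K)[X] 3
      ((MvPolynomial ι K)[X] ⧸ Ideal.span (pointedQuadric '' (W : Set _))) := by
  have not_dvd {w} := not_linearForm_dvd_of_pointedQuadric_mem (v := w) hlin hlinX
  have hv := not_dvd hv₁ (hW₂ v hvW) (hWP v hvW)
  have eliminant_mem (w) (hw : w ∈ W) : Polynomial.C (eliminant v w) ∈ P :=
    C_eliminant v w ▸ sub_mem (P.mul_mem_left _ (hWP w hw)) (P.mul_mem_left _ (hWP v hvW))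
  obtain ⟨w₀, hw₀, hw₀_notMem⟩ := exists_mem_notMem_span_pair hW v v
  rw [Set.pair_eq_singleton] at hw₀_notMem
  obtain ⟨f, hf, hfP⟩ := exists_prime_C_mem_iff_dvd (n := 1) hP
    (mt (mem_span_singleton_of_eliminant_eq_zero hv₁ hv) hw₀_notMem) (eliminant_mem w₀ hw₀)
    (hWP v hvW) (fun h => hv₁ (hlin _ (by simpa [pointedQuadric_apply] using h)))
  have f_dvd (w) (hw : w ∈ W) : f ∣ eliminant v w := (hfP _).1 (eliminant_mem w hw)
  have hf₂ : f.IsHomogeneous 2 := isHomogeneous_two_of_dvd_eliminant hW hW₂ hvW hv₁ hv hf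
    (fun x hx => hlin x ((hfP _).2 hx)) f_dvd
  have hf_lin (x) : ¬linearForm x ∣ f := fun hx => by
    have hx0 : x ≠ 0 := by
      rintro rfl
      exact hf.ne_zero (zero_dvd_iff.1 (map_zero (linearForm (B := K) (ι := ι)) ▸ hx))
    exact hx0 (hlin x ((hfP _).2
      ((prime_linearForm hx0).irreducible.dvd_symm hf.irreducible hx)))
  have hv₂ (c : K) : ¬linearForm v.1 ∣ v.2 + C c * f := by
    refine not_dvd (w := (v.1, v.2 + C c * f)) hv₁
      ((hW₂ v hvW).add (smul_eq_C_mul f c ▸ (homogeneousSubmodule ι K 2).smul_mem c hf₂)) ?_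
    simp only [pointedQuadric_apply, map_add, ← add_assoc]
    exact add_mem (hWP v hvW) ((hfP _).2 (dvd_mul_left _ _))
  obtain ⟨w₂, a₂, hw₂, h₂, rfl⟩ :=
    eq_span_triple_of_dvd_eliminant hW hW₂ hvW hv₁ hv₂ hf₂ hf_lin f_dvd
  exact quotient_span_pointedQuadric_triple hv₁ hv₂ hf_lin hw₂ h₂

end PointedQuadricIdeal

section QuadricEval

open Matrix

theorem eval_smul_of_isHomogeneous {B ι : Type*} [CommRing B] {q : MvPolynomial ι B} {d : ℕ}
    (hq : q.IsHomogeneous d) (a : B) (x : ι → B) : eval (a • x) q = a ^ d * eval x q := by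
  rw [eval_eq, eval_eq, Finset.mul_sum]
  refine Finset.sum_congr rfl fun m hm => ?_
  have degree_m : ∑ i ∈ m.support, m i = d :=
    (hq.degree_eq_sum_deg_support hm).symm
  simp only [Pi.smul_apply, smul_eq_mul, mul_pow, Finset.prod_mul_distrib,
    Finset.prod_pow_eq_pow_sum, degree_m]
  ring

theorem eval_linearForm {B : Type*} [CommRing B] {ι : Type*} [Fintype ι] (x c : ι → B) :
    eval x (linearForm c) = c ⬝ᵥ x := by
  rw [linearForm, Fintype.linearCombination_apply, map_sum]
  exact Finset.sum_congr rfl fun i _ => by rw [smul_eval, eval_X]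

theorem eval_linearSubst {B : Type*} [CommRing B] {ι κ : Type*} [Fintype ι] [DecidableEq ι]
    [Fintype κ] {T : (ι → B) →ₗ[B] (κ → B)} {x : κ → B} {y : ι → B}
    (h : ∀ c, T c ⬝ᵥ x = c ⬝ᵥ y) (p : MvPolynomial ι B) :
    eval x (linearSubst T p) = eval y p := by
  suffices (aeval x).comp (linearSubst T) = aeval y by
    simpa only [AlgHom.comp_apply, aeval_eq_eval] using DFunLike.congr_fun this p
  refine algHom_ext fun i => ?_
  rw [AlgHom.comp_apply, ← linearForm_single, linearSubst_linearForm, aeval_eq_eval,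
    eval_linearForm, h, ← eval_linearForm, aeval_eq_eval]

variable {K : Type*} [Field K] {ι : Type*} [Fintype ι] {q : MvPolynomial ι K}

theorem exists_eval_eq_dotProduct_mulVec (hq : q.IsHomogeneous 2) :
    ∃ A : Matrix ι ι K, ∀ x, eval x q = x ⬝ᵥ A *ᵥ x := by
  have mem_span : q ∈ Ideal.span (Set.range (X : ι → MvPolynomial ι K)) := by
    rw [← idealOfVars, ← pow_one (idealOfVars ι K), mem_pow_idealOfVars_iff']
    exact fun m hm => hq.coeff_eq_zero (by omega)
  obtain ⟨a, ha⟩ := Ideal.mem_span_range_iff_exists_fun.1 mem_span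
  choose A hA using fun i => exists_eq_linearForm (homogeneousComponent_isHomogeneous 1 (a i))
  have q_eq : q = ∑ i, linearForm (A i) * X i := by
    calc q = homogeneousComponent (1 + 1) q := by rw [homogeneousComponent_of_mem hq, if_pos rfl]
      _ = ∑ i, homogeneousComponent 1 (a i) * X i := by
        rw [← ha, map_sum]
        exact Finset.sum_congr rfl fun i _ =>
          homogeneousComponent_add_mul (d := 1) (a i) (isHomogeneous_X K i)
      _ = _ := Finset.sum_congr rfl fun i _ => by rw [hA]
  refine ⟨of A, fun x => ?_⟩
  rw [q_eq, map_sum]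
  refine Finset.sum_congr rfl fun i _ => ?_
  rw [map_mul, eval_linearForm, eval_X, mul_comm]
  rfl

theorem exists_eval_linearForm_eq_polar (hq : q.IsHomogeneous 2) (η : ι → K) :
    ∃ c, ∀ ξ, eval ξ (linearForm c) = eval (ξ + η) q - eval ξ q - eval η q := by
  obtain ⟨A, hA⟩ := exists_eval_eq_dotProduct_mulVec hq
  refine ⟨A *ᵥ η + η ᵥ* A, fun ξ => ?_⟩
  rw [eval_linearForm, hA, hA, hA, add_dotProduct, ← dotProduct_mulVec, mulVec_add,
    dotProduct_add, add_dotProduct, add_dotProduct, dotProduct_comm (A *ᵥ η)]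
  ring

theorem exists_eq_linearForm_sq [IsAlgClosed K] (hq : q.IsHomogeneous 2)
    (hadd : ∀ x y, eval (x + y) q = eval x q + eval y q) : ∃ b, q = linearForm b ^ 2 := by
  classical
  have := IsAlgClosed.instInfinite (K := K)
  rcases eq_or_ne (2 : K) 0 with two_eq_zero | two_ne_zero
  · have := CharTwo.of_one_ne_zero_of_two_eq_zero (one_ne_zero (α := K)) two_eq_zero
    choose b hb using fun i => IsAlgClosed.exists_pow_nat_eq (eval (Pi.single i 1) q) two_pos
    refine ⟨b, MvPolynomial.funext fun x => ?_⟩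
    let evalHom : (ι → K) →+ K := AddMonoidHom.mk' (fun x => eval x q) hadd
    calc eval x q = evalHom (∑ i, x i • Pi.single i 1) := by rw [← pi_eq_sum_univ']; rfl
      _ = ∑ i, (b i * x i) ^ 2 := by
        rw [map_sum]
        refine Finset.sum_congr rfl fun i _ => ?_
        rw [mul_pow, hb, mul_comm]
        exact eval_smul_of_isHomogeneous hq _ _
      _ = eval x (linearForm b ^ 2) := by
        rw [← CharTwo.sum_sq, map_pow, eval_linearForm]
        rfl
  · refine ⟨0, MvPolynomial.funext fun x => ?_⟩
    have h_double : 2 ^ 2 * eval x q = eval x q + eval x q := by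
      rw [← eval_smul_of_isHomogeneous hq, two_smul, hadd]
    have : 2 * eval x q = 0 := by linear_combination h_double
    simpa [two_ne_zero] using this

theorem exists_eval_add_ne [IsAlgClosed K] {P : Ideal (MvPolynomial ι K)} [P.IsPrime]
    (hlin : ∀ c, linearForm c ∈ P → c = 0) (hq : q.IsHomogeneous 2) (hqP : q ∈ P) (hq0 : q ≠ 0) :
    ∃ ξ η, (∀ p ∈ P, eval ξ p = 0) ∧ eval (ξ + η) q ≠ eval η q := by
  by_contra! h
  -- All polar linear forms of `q` vanish on the zero locus of `P`, hence lie in `P` by the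
  -- Nullstellensatz, hence are zero.
  have hadd (ξ η : ι → K) : eval (ξ + η) q = eval ξ q + eval η q := by
    obtain ⟨c, hc⟩ := exists_eval_linearForm_eq_polar hq η
    have c_mem : linearForm c ∈ P := by
      rw [← IsPrime.vanishingIdeal_zeroLocus (K := K) P, mem_vanishingIdeal_iff]
      intro ξ hξ
      have hξP (p) (hp : p ∈ P) : eval ξ p = 0 := by simpa only [aeval_eq_eval] using hξ p hp
      rw [aeval_eq_eval, hc, h ξ η hξP, hξP q hqP]
      ring
    have := hc ξ
    rw [hlin c c_mem, map_zero, map_zero] at this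
    linear_combination -this
  obtain ⟨b, rfl⟩ := exists_eq_linearForm_sq hq hadd
  have := hlin b (Ideal.IsPrime.mem_of_pow_mem ‹_› 2 hqP)
  rw [this, map_zero] at hq0
  exact hq0 (zero_pow two_ne_zero)

end QuadricEval

section Projection

variable {K : Type u} [Field K] {M : ℕ}

theorem finSuccEquiv_linearForm (c : Fin (M + 1) → K) :
    finSuccEquiv K M (linearForm c) =
      Polynomial.C (C (c 0)) * Polynomial.X + Polynomial.C (linearForm (Fin.tail c)) := by
  simp only [linearForm, Fintype.linearCombination_apply, Fin.sum_univ_succ, map_add, map_sum,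
    map_smul, finSuccEquiv_X_zero, finSuccEquiv_X_succ, ← Polynomial.smul_eq_C_mul, Fin.tail,
    ← algebraMap_eq, algebraMap_smul, Polynomial.smul_C]

theorem exists_finSuccEquiv_eq_pointedQuadric {q : MvPolynomial (Fin (M + 1)) K}
    (hq : q.IsHomogeneous 2) (h₀ : eval (Fin.cons 1 0) q = 0) :
    ∃ w, w.2.IsHomogeneous 2 ∧ finSuccEquiv K M q = pointedQuadric w := by
  have hcoeff {i j : ℕ} (hij : i + j = 2) : ((finSuccEquiv K M q).coeff i).IsHomogeneous j :=
    hq.finSuccEquiv_coeff_isHomogeneous i j hij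
  have h_degree : (finSuccEquiv K M q).natDegree ≤ 2 := by
    rw [natDegree_finSuccEquiv]
    exact (degreeOf_le_totalDegree q 0).trans hq.totalDegree_le
  obtain ⟨a, ha⟩ := exists_eq_C_of_isHomogeneous_zero (hcoeff (i := 2) rfl)
  obtain ⟨b, hb⟩ := exists_eq_linearForm (hcoeff (i := 1) rfl)
  obtain ⟨f, hf, hf₂⟩ : ∃ f, (finSuccEquiv K M q).coeff 0 = f ∧ f.IsHomogeneous 2 :=
    ⟨_, rfl, hcoeff rfl⟩
  have q_eq : finSuccEquiv K M q =
      Polynomial.C (C a) * Polynomial.X ^ 2 + pointedQuadric (b, f) := by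
    rw [Polynomial.as_sum_range_C_mul_X_pow' (p := finSuccEquiv K M q) (n := 3) (by omega),
      Finset.sum_range_succ, Finset.sum_range_succ, Finset.sum_range_one, ha, hb, hf,
      pointedQuadric_apply]
    ring
  have eval_f : eval 0 f = 0 := by
    rw [eval_zero, constantCoeff_eq]
    exact hf₂.coeff_eq_zero (by simp)
  have a_eq_zero : a = 0 := by
    rw [eval_eq_eval_mv_eval', q_eq, pointedQuadric_apply] at h₀
    simpa only [Polynomial.map_add, Polynomial.map_mul, Polynomial.map_pow, Polynomial.map_C,
      Polynomial.map_X, Polynomial.eval_add, Polynomial.eval_mul, Polynomial.eval_pow,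
      Polynomial.eval_C, Polynomial.eval_X, eval_C, eval_linearForm, dotProduct_zero, eval_f,
      one_pow, mul_one, add_zero] using h₀
  refine ⟨(b, f), hf₂, ?_⟩
  rw [q_eq, a_eq_zero, map_zero, map_zero, zero_mul, zero_add]

theorem eval_add_eq_of_finSuccEquiv_eq {q : MvPolynomial (Fin (M + 1)) K}
    {w : (Fin M → K) × MvPolynomial (Fin M) K} (h : finSuccEquiv K M q = pointedQuadric w)
    (hw : w.1 = 0) (η : Fin (M + 1) → K) : eval (Fin.cons 1 0 + η) q = eval η q := by
  have eval_cons (y : K) (s : Fin M → K) :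
      eval (Fin.cons y s : Fin (M + 1) → K) q = eval s w.2 := by
    rw [eval_eq_eval_mv_eval', h, pointedQuadric_apply, hw, map_zero, map_zero, zero_mul, zero_add,
      Polynomial.map_C, Polynomial.eval_C]
  have cons_add : (Fin.cons 1 0 + η : Fin (M + 1) → K) = Fin.cons (1 + η 0) (Fin.tail η) := by
    ext i
    cases i using Fin.cases <;> simp [Fin.tail]
  rw [cons_add, eval_cons, ← eval_cons (η 0), Fin.cons_self_tail]

theorem exists_map_pointedQuadric_eq {V : Submodule K (MvPolynomial (Fin (M + 1)) K)}
    (hV₂ : ∀ q ∈ V, q.IsHomogeneous 2) (h₀ : ∀ q ∈ V, eval (Fin.cons 1 0) q = 0) :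
    ∃ W : Submodule K ((Fin M → K) × MvPolynomial (Fin M) K),
      W.map pointedQuadric = V.map (finSuccEquiv K M).toLinearMap ∧
        Module.finrank K W = Module.finrank K V ∧ ∀ w ∈ W, w.2.IsHomogeneous 2 := by
  have map_W : ((V.map (finSuccEquiv K M).toLinearMap).comap pointedQuadric).map pointedQuadric =
      V.map (finSuccEquiv K M).toLinearMap := by
    refine Submodule.map_comap_eq_of_le ?_
    rintro _ ⟨p, hp, rfl⟩
    obtain ⟨w, -, hw⟩ := exists_finSuccEquiv_eq_pointedQuadric (hV₂ p hp) (h₀ p hp)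
    exact ⟨w, hw.symm⟩
  refine ⟨_, map_W, ?_, ?_⟩
  · rw [(Submodule.equivMapOfInjective _ pointedQuadric_injective _).finrank_eq, map_W]
    exact (finSuccEquiv K M).toLinearEquiv.finrank_map_eq V
  · rintro w ⟨p, hp, hpw⟩
    obtain ⟨w', hw', hpw'⟩ := exists_finSuccEquiv_eq_pointedQuadric (hV₂ p hp) (h₀ p hp)
    exact pointedQuadric_injective (hpw.symm.trans hpw') ▸ hw'

theorem PdLE.quotient_span_of_eval_cons_eq_zero {V : Submodule K (MvPolynomial (Fin (M + 1)) K)}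
    {P : Ideal (MvPolynomial (Fin (M + 1)) K)} [hP' : P.IsPrime] (hP : P.height ≤ 2)
    (hlin : ∀ c, linearForm c ∈ P → c = 0) (hV₂ : ∀ q ∈ V, q.IsHomogeneous 2) (hVP : ∀ q ∈ V, q ∈ P)
    (hV : 3 ≤ Module.finrank K V) (h₀ : ∀ q ∈ V, eval (Fin.cons 1 0) q = 0)
    {q : MvPolynomial (Fin (M + 1)) K} (hqV : q ∈ V) {η : Fin (M + 1) → K}
    (hη : eval (Fin.cons 1 0 + η) q ≠ eval η q) :
    PdLE (MvPolynomial (Fin (M + 1)) K) 3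
      (MvPolynomial (Fin (M + 1)) K ⧸ Ideal.span (V : Set (MvPolynomial (Fin (M + 1)) K))) := by
  let Φ := finSuccEquiv K M
  let e := Φ.toRingEquiv
  obtain ⟨W, map_W, finrank_W, hW₂⟩ := exists_map_pointedQuadric_eq hV₂ h₀
  obtain ⟨v, -, hv⟩ := exists_finSuccEquiv_eq_pointedQuadric (hV₂ q hqV) (h₀ q hqV)
  have hv₁ : v.1 ≠ 0 := fun h =>
    hη (eval_add_eq_of_finSuccEquiv_eq hv h η)
  have hvW : v ∈ W := by
    obtain ⟨v', hv'W, hv'⟩ : Φ q ∈ W.map pointedQuadric := map_W ▸ ⟨q, hqV, rfl⟩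
    exact pointedQuadric_injective (hv'.trans hv) ▸ hv'W
  have mem_comap (p) : Φ p ∈ P.comap e.symm ↔ p ∈ P := by
    rw [Ideal.mem_comap]
    exact (Φ.symm_apply_apply p).symm ▸ Iff.rfl
  have linearForm_cons (a : K) (x : Fin M → K) : Φ (linearForm (Fin.cons a x)) =
      Polynomial.C (C a) * Polynomial.X + Polynomial.C (linearForm x) :=
    finSuccEquiv_linearForm (Fin.cons a x)
  have map_span : (Ideal.span (V : Set (MvPolynomial (Fin (M + 1)) K))).map e =
      Ideal.span (pointedQuadric '' (W : Set _)) := by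
    rw [Ideal.map_span, ← Submodule.map_coe, map_W]
    rfl
  refine quotient_of_ringEquiv e (map_span ▸ ?_)
  refine quotient_span_pointedQuadric (P := P.comap e.symm) ?_ ?_ ?_ ?_ hW₂ (finrank_W ▸ hV) hvW hv₁
  · rwa [RingEquiv.height_comap]
  · intro x hx
    have cons_eq_zero := hlin (Fin.cons 0 x) ((mem_comap _).1 (by simpa [linearForm_cons] using hx))
    exact (Matrix.cons_eq_zero_iff.1 cons_eq_zero).2
  · intro x hx
    have cons_eq_zero := hlin (Fin.cons 1 x) ((mem_comap _).1 (by simpa [linearForm_cons] using hx))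
    exact one_ne_zero (Matrix.cons_eq_zero_iff.1 cons_eq_zero).1
  · intro w hw
    obtain ⟨p, hp, hpw⟩ : pointedQuadric w ∈ V.map Φ.toLinearMap := map_W ▸ ⟨w, hw, rfl⟩
    exact hpw ▸ (mem_comap p).2 (hVP p hp)

end Projection

section SmoothPoint

open Matrix

theorem exists_linearEquiv_apply_eq {F V : Type*} [Field F] [AddCommGroup V] [Module F V] {x y : V}
    (hx : x ≠ 0) (hy : y ≠ 0) : ∃ e : V ≃ₗ[F] V, e x = y := by
  obtain ⟨e, he⟩ := Submodule.exists_linearEquiv_restrict_eq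
    ((LinearEquiv.coord F V x hx).trans (LinearEquiv.toSpanNonzeroSingleton F V y hy))
  refine ⟨e, (he ⟨x, Submodule.mem_span_singleton_self x⟩).symm.trans ?_⟩
  rw [LinearEquiv.trans_apply, LinearEquiv.coord_self, LinearEquiv.toSpanNonzeroSingleton_one]

variable {K : Type u} [Field K]

theorem PdLE.quotient_span_of_eval_add_ne {N : ℕ} {V : Submodule K (MvPolynomial (Fin N) K)}
    {P : Ideal (MvPolynomial (Fin N) K)} [hP' : P.IsPrime] (hP : P.height ≤ 2)
    (hlin : ∀ c, linearForm c ∈ P → c = 0) (hV₂ : ∀ q ∈ V, q.IsHomogeneous 2)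
    (hVP : ∀ q ∈ V, q ∈ P) (hV : 3 ≤ Module.finrank K V) {ξ η : Fin N → K}
    (hξ : ∀ q ∈ V, eval ξ q = 0) {q : MvPolynomial (Fin N) K} (hqV : q ∈ V)
    (hη : eval (ξ + η) q ≠ eval η q) :
    PdLE (MvPolynomial (Fin N) K) 3
      (MvPolynomial (Fin N) K ⧸ Ideal.span (V : Set (MvPolynomial (Fin N) K))) := by
  have hξ0 : ξ ≠ 0 := by
    rintro rfl
    exact hη (by rw [zero_add])
  obtain ⟨i, -⟩ := Function.ne_iff.1 hξ0
  obtain ⟨M, rfl⟩ := Nat.exists_eq_succ_of_ne_zero i.pos.ne'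
  obtain ⟨E, hE⟩ : ∃ E : (Fin (M + 1) → K) ≃ₗ[K] (Fin (M + 1) → K), E (Fin.cons 1 0) = ξ :=
    exists_linearEquiv_apply_eq (fun h => one_ne_zero (congrFun h 0)) hξ0
  let T : (Fin (M + 1) → K) ≃ₗ[K] (Fin (M + 1) → K) :=
    (dotProductEquiv K _).trans (E.dualMap.trans (dotProductEquiv K _).symm)
  have T_dotProduct (x c) : T c ⬝ᵥ x = c ⬝ᵥ E x :=
    DFunLike.congr_fun
      ((dotProductEquiv K _).apply_symm_apply (E.dualMap (dotProductEquiv K _ c))) x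
  let Φ := linearSubstEquiv T
  let e := Φ.toRingEquiv
  have eval_Φ (x p) : eval x (Φ p) = eval (E x) p := eval_linearSubst (T_dotProduct x) p
  have mem_comap (p) : Φ p ∈ P.comap e.symm ↔ p ∈ P := by
    rw [Ideal.mem_comap]
    exact (Φ.symm_apply_apply p).symm ▸ Iff.rfl
  have map_span : (Ideal.span (V : Set (MvPolynomial (Fin (M + 1)) K))).map e =
      Ideal.span (V.map Φ.toLinearMap : Set (MvPolynomial (Fin (M + 1)) K)) :=
    Ideal.map_span _ _
  refine quotient_of_ringEquiv e (map_span ▸ ?_)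
  refine quotient_span_of_eval_cons_eq_zero (P := P.comap e.symm) (q := Φ q) (η := E.symm η)
    ?_ ?_ ?_ ?_ ?_ ?_ ⟨q, hqV, rfl⟩ ?_
  · rwa [RingEquiv.height_comap]
  · intro c hc
    have := hlin (T.symm c) ((mem_comap _).1 ?_)
    · simpa using this
    · rwa [linearSubstEquiv_linearForm, T.apply_symm_apply]
  · rintro _ ⟨p, hp, rfl⟩
    exact isHomogeneous_linearSubst (hV₂ p hp) _
  · rintro _ ⟨p, hp, rfl⟩
    exact (mem_comap p).2 (hVP p hp)
  · rw [← Φ.toLinearEquiv.finrank_map_eq V] at hV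
    exact hV
  · rintro _ ⟨p, hp, rfl⟩
    exact (eval_Φ _ p).trans (hE ▸ hξ p hp)
  · rwa [eval_Φ, eval_Φ, map_add, hE, E.apply_symm_apply]

theorem PdLE.quotient_span_of_forall_linearForm_notMem [IsAlgClosed K] {N n : ℕ}
    {g : Fin n → MvPolynomial (Fin N) K} (hg : ∀ i, (g i).IsHomogeneous 2)
    {P : Ideal (MvPolynomial (Fin N) K)} [P.IsPrime] (hP : P.height ≤ 2) (hgP : ∀ i, g i ∈ P)
    (hlin : ∀ c, linearForm c ∈ P → c = 0)
    (h : 3 ≤ Module.finrank K (Submodule.span K (Set.range g))) :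
    PdLE (MvPolynomial (Fin N) K) 3
      (MvPolynomial (Fin N) K ⧸ Ideal.span (Set.range g)) := by
  let V := Submodule.span K (Set.range g)
  have hV₂ : V ≤ homogeneousSubmodule (Fin N) K 2 := by
    rw [Submodule.span_le]
    rintro _ ⟨i, rfl⟩
    exact hg i
  have hVP : V ≤ P.restrictScalars K := by
    rw [Submodule.span_le]
    rintro _ ⟨i, rfl⟩
    exact hgP i
  obtain ⟨q, hqV, hq0⟩ := V.exists_mem_ne_zero_of_ne_bot fun h_bot => by
    rw [show Submodule.span K (Set.range g) = ⊥ from h_bot, finrank_bot] at h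
    exact absurd h (by norm_num)
  obtain ⟨ξ, η, hξ, hη⟩ := exists_eval_add_ne hlin (hV₂ hqV) (hVP hqV) hq0
  have span_V : Ideal.span (V : Set (MvPolynomial (Fin N) K)) = Ideal.span (Set.range g) :=
    Submodule.span_span_of_tower K _ _
  rw [← span_V]
  exact quotient_span_of_eval_add_ne hP hlin (fun _ h => hV₂ h) (fun _ h => hVP h) h
    (fun p hp => hξ p (hVP hp)) hqV hη

end SmoothPoint

section TwoGenerators

theorem exists_span_range_eq_of_finrank_le {K V : Type*} [Field K] [AddCommGroup V] [Module K V]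
    {W : Submodule K V} [Module.Finite K W] {n : ℕ} (h : Module.finrank K W ≤ n) :
    ∃ v : Fin n → V, Submodule.span K (Set.range v) = W := by
  rw [← Module.finrank_fin_fun K (n := n), finrank_le_iff_exists_linearMap] at h
  obtain ⟨f, hf⟩ := h
  obtain ⟨f', hf'⟩ := f.exists_leftInverse_of_injective (LinearMap.ker_eq_bot.2 hf)
  have range_f' : LinearMap.range f' = ⊤ :=
    LinearMap.range_eq_top.2 fun w => ⟨f w, LinearMap.congr_fun hf' w⟩
  refine ⟨(W.subtype ∘ₗ f') ∘ Pi.basisFun K (Fin n), ?_⟩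
  rw [Set.range_comp, ← Submodule.map_span, Module.Basis.span_eq, Submodule.map_top,
    LinearMap.range_comp, range_f', Submodule.map_subtype_top]

variable {R : Type u} [CommRing R] [IsDomain R] [UniqueFactorizationMonoid R]

theorem PdLE.quotient_span_pair_of_isRelPrime {p q : R} (h : IsRelPrime p q) :
    PdLE R 2 (R ⧸ Ideal.span {p, q}) := by
  rw [Ideal.span_insert]
  refine sup_span_singleton (J' := Ideal.span {p}) (Ideal.ext fun r => ?_)
    (quotient_span_singleton p) ((quotient_span_singleton p).mono one_le_two)
  rw [Submodule.mem_colon_singleton, smul_eq_mul, Ideal.mem_span_singleton,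
    Ideal.mem_span_singleton]
  exact ⟨h.dvd_of_dvd_mul_right, fun hr => hr.mul_right q⟩

theorem PdLE.quotient_span_of_finrank_le_two {K ι : Type*} [Field K] [Algebra K R] [Finite ι]
    {g : ι → R} (hgu : ∀ f, (∀ i, f ∣ g i) → IsUnit f)
    (h : Module.finrank K (Submodule.span K (Set.range g)) ≤ 2) :
    PdLE R 2 (R ⧸ Ideal.span (Set.range g)) := by
  have := FiniteDimensional.span_of_finite K (Set.finite_range g)
  obtain ⟨v, hv⟩ := exists_span_range_eq_of_finrank_le h
  have range_v : Set.range v = {v 0, v 1} := by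
    ext x
    simp only [Set.mem_range, Fin.exists_fin_two, Set.mem_insert_iff, Set.mem_singleton_iff,
      eq_comm]
  have span_pair : Ideal.span {v 0, v 1} = Ideal.span (Set.range g) := by
    rw [← range_v, Ideal.span, Ideal.span, ← Submodule.span_span_of_tower K R (Set.range v), hv,
      Submodule.span_span_of_tower]
  rw [← span_pair]
  refine quotient_span_pair_of_isRelPrime fun d h₀ h₁ => hgu d fun i => ?_
  have hi : g i ∈ Ideal.span {v 0, v 1} := span_pair ▸ Ideal.subset_span ⟨i, rfl⟩
  obtain ⟨a, b, hab⟩ := Ideal.mem_span_pair.1 hi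
  exact hab ▸ dvd_add (h₀.mul_left a) (h₁.mul_left b)

end TwoGenerators

theorem PdLE.quotient_span_of_isAlgClosed {K : Type u} [Field K] [IsAlgClosed K] {N n : ℕ}
    {g : Fin n → MvPolynomial (Fin N) K} (hg : ∀ i, (g i).IsHomogeneous 2)
    (hgu : ∀ f, (∀ i, f ∣ g i) → IsUnit f) {P : Ideal (MvPolynomial (Fin N) K)} [P.IsPrime]
    (hP : P.height ≤ 2) (hgP : ∀ i, g i ∈ P) :
    PdLE (MvPolynomial (Fin N) K) (2 * n - 2)
      (MvPolynomial (Fin N) K ⧸ Ideal.span (Set.range g)) := by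
  have two_le : 2 ≤ n := by
    by_contra! hn
    have : Subsingleton (Fin n) := Fin.subsingleton_iff_le_one.2 (Nat.lt_succ_iff.1 hn)
    obtain ⟨f, hfP, hf⟩ : ∃ f ∈ P, ∀ i, f ∣ g i := by
      rcases isEmpty_or_nonempty (Fin n) with _ | ⟨⟨i⟩⟩
      · exact ⟨0, P.zero_mem, isEmptyElim⟩
      · exact ⟨g i, hgP i, fun j => dvd_of_eq (congrArg g (Subsingleton.elim i j))⟩
    exact Ideal.IsPrime.ne_top' (Ideal.eq_top_of_isUnit_mem P hfP (hgu f hf))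
  rcases Nat.lt_or_ge 2 (Module.finrank K (Submodule.span K (Set.range g))) with h | h
  swap
  · exact (quotient_span_of_finrank_le_two hgu h).mono (by omega)
  have three_le : 3 ≤ n := h.trans_le ((finrank_range_le_card g).trans_eq (Fintype.card_fin n))
  by_cases hlin : ∀ c, linearForm c ∈ P → c = 0
  · exact (quotient_span_of_forall_linearForm_notMem hg hP hgP hlin h).mono (by omega)
  push Not at hlin
  obtain ⟨x, hxP, hx0⟩ := hlin
  by_cases hx : ∀ c, linearForm c ∈ P → c ∈ Submodule.span K {x}
  · obtain ⟨m, rfl⟩ := Nat.exists_eq_add_of_le' (one_le_two.trans two_le)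
    exact (quotient_span_of_unique_linearForm (by omega) hg hgu hP hgP hx0 hxP hx).mono (by omega)
  · push Not at hx
    obtain ⟨y, hyP, hy⟩ := hx
    have : Infinite K := IsAlgClosed.instInfinite
    exact quotient_span_of_linearIndependent three_le hg hP hgP hx0 hxP hyP hy

section Heights

variable {R S : Type*} [CommRing R] [CommRing S] [Algebra R S]

theorem idealHeight_eq_height (I : Ideal R) : idealHeight I = I.height := by
  refine le_antisymm ?_ (le_iInf₂ fun p hp => ?_)
  · rw [Ideal.height_eq_inf_minimalPrimes]
    refine le_iInf₂ fun J hJ => ?_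
    have := hJ.1.1
    rw [PrimeSpectrum.height_eq_orderHeight ⟨J, hJ.1.1⟩]
    exact iInf₂_le (⟨J, hJ.1.1⟩ : PrimeSpectrum R) hJ.1.2
  · rw [← PrimeSpectrum.height_eq_orderHeight]
    exact Ideal.height_mono hp

theorem height_le_height_comap_of_isIntegral [Algebra.IsIntegral R S] (P : Ideal S) [P.IsPrime] :
    P.height ≤ (P.comap (algebraMap R S)).height := by
  have comap_strictMono : StrictMono (PrimeSpectrum.comap (algebraMap R S)) :=
    fun _ _ h => Ideal.IsIntegral.comap_lt_comap h
  have := Order.height_le_height_apply_of_strictMono _ comap_strictMono ⟨P, inferInstance⟩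
  rwa [← PrimeSpectrum.height_eq_orderHeight, ← PrimeSpectrum.height_eq_orderHeight] at this

theorem height_le_height_map_of_hasGoingDown [IsNoetherianRing R] [IsNoetherianRing S]
    [Algebra.HasGoingDown R S] (I : Ideal R) :
    I.height ≤ (I.map (algebraMap R S)).height := by
  rw [Ideal.height_eq_inf_minimalPrimes (I.map _)]
  refine le_iInf₂ fun P hP => ?_
  have := hP.1.1
  have : P.LiesOver (P.comap (algebraMap R S)) := ⟨rfl⟩
  calc I.height ≤ (P.comap (algebraMap R S)).height :=
        Ideal.height_mono (Ideal.map_le_iff_le_comap.1 hP.1.2)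
    _ ≤ P.height := by
        rw [Ideal.height_eq_height_add_of_liesOver_of_hasGoingDown (P.comap (algebraMap R S)) P]
        exact le_self_add

theorem isUnit_of_le_span_singleton_of_two_le_height [IsNoetherianRing R] {I : Ideal R}
    (hI : 2 ≤ I.height) {f : R} (hf : I ≤ Ideal.span {f}) : IsUnit f := by
  by_contra hu
  exact absurd (hI.trans ((Ideal.height_mono hf).trans (Ideal.height_span_singleton_le_one hu)))
    (by decide)

end Heights

section Descent

theorem PdLE.quotient_of_quotient_map {R S : Type u} [CommRing R] [CommRing S] [Algebra R S]
    [Module.Free R S] {ρ : S →ₗ[R] R} (hρ : ρ 1 = 1) {I : Ideal R} {n : ℕ}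
    (h : PdLE S n (S ⧸ I.map (algebraMap R S))) : PdLE R n (R ⧸ I) := by
  have smul_top : (I • ⊤ : Submodule R S) = (I.map (algebraMap R S)).restrictScalars R :=
    Ideal.smul_top_eq_map I
  have h' : PdLE R n (S ⧸ (I • ⊤ : Submodule R S)) := by
    rw [smul_top]
    exact (restrictScalars h).of_linearEquiv (Submodule.Quotient.restrictScalarsEquiv R _)
  have le_comap_algebraMap : I ≤ (I • ⊤ : Submodule R S).comap (Algebra.linearMap R S) :=
    fun r hr => by
      rw [Submodule.mem_comap, Algebra.linearMap_apply, Algebra.algebraMap_eq_smul_one]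
      exact Submodule.smul_mem_smul hr trivial
  have le_comap_ρ : (I • ⊤ : Submodule R S) ≤ Submodule.comap ρ I := by
    rw [← Submodule.map_le_iff_le_comap, Submodule.map_smul'']
    exact Ideal.mul_le_left
  refine of_retract (Submodule.mapQ _ _ _ le_comap_algebraMap) (Submodule.mapQ _ _ ρ le_comap_ρ)
    (fun x => ?_) h'
  obtain ⟨r, rfl⟩ := Submodule.mkQ_surjective _ x
  simp only [Submodule.mkQ_apply, Submodule.mapQ_apply, Algebra.linearMap_apply,
    Algebra.algebraMap_eq_smul_one, map_smul, hρ, smul_eq_mul, mul_one]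

attribute [local instance] MvPolynomial.algebraMvPolynomial

theorem isBaseChange_mvPolynomial (K L σ : Type*) [Field K] [Field L] [Algebra K L] :
    IsBaseChange (MvPolynomial σ K)
      (IsScalarTower.toAlgHom K L (MvPolynomial σ L)).toLinearMap :=
  (inferInstance : Algebra.IsPushout K (MvPolynomial σ K) L (MvPolynomial σ L)).out

theorem exists_linearMap_mvPolynomial_one_eq_one (K L σ : Type*) [Field K] [Field L] [Algebra K L] :
    ∃ ρ : MvPolynomial σ L →ₗ[MvPolynomial σ K] MvPolynomial σ K, ρ 1 = 1 := by
  obtain ⟨φ, hφ⟩ := LinearMap.exists_leftInverse_of_injective (Algebra.linearMap K L)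
    (LinearMap.ker_eq_bot.2 (algebraMap K L).injective)
  have φ_one : φ 1 = 1 :=
    (congrArg φ (map_one (algebraMap K L)).symm).trans (LinearMap.congr_fun hφ 1)
  let ψ := (Algebra.linearMap K (MvPolynomial σ K)).comp φ
  have ψ_one : ψ 1 = 1 := by
    rw [LinearMap.comp_apply, φ_one, Algebra.linearMap_apply, map_one]
  have lift_one := (isBaseChange_mvPolynomial K L σ).lift_eq ψ 1
  refine ⟨(isBaseChange_mvPolynomial K L σ).lift ψ, ?_⟩
  rwa [ψ_one, AlgHom.toLinearMap_apply, map_one] at lift_one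

theorem PdLE.quotient_span_of_height_eq_two {K : Type u} [Field K] {N n : ℕ}
    {g : Fin n → MvPolynomial (Fin N) K}
    (hg : ∀ i, (g i).IsHomogeneous 2) (hht : (Ideal.span (Set.range g)).height = 2) :
    PdLE (MvPolynomial (Fin N) K) (2 * n - 2)
      (MvPolynomial (Fin N) K ⧸ Ideal.span (Set.range g)) := by
  let R := MvPolynomial (Fin N) K
  let S := MvPolynomial (Fin N) (AlgebraicClosure K)
  let gS : Fin n → S := fun i => algebraMap R S (g i)
  have map_span : (Ideal.span (Set.range g)).map (algebraMap R S) = Ideal.span (Set.range gS) := by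
    rw [Ideal.map_span, ← Set.range_comp]
    rfl
  have : Module.Free R S := (isBaseChange_mvPolynomial K (AlgebraicClosure K) (Fin N)).free
  have algebraMap_injective : Function.Injective (algebraMap R S) :=
    MvPolynomial.map_injective _ (algebraMap K (AlgebraicClosure K)).injective
  obtain ⟨p, _, hp, hp₂⟩ := Ideal.exists_isPrime_height_eq (n := 2) hht
  obtain ⟨P, -, hP, hPp⟩ := Ideal.exists_ideal_over_prime_of_isIntegral (S := S) p ⊥ (by
    rw [← RingHom.ker_eq_comap_bot, (RingHom.injective_iff_ker_eq_bot _).1 algebraMap_injective]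
    exact bot_le)
  obtain ⟨ρ, hρ⟩ := exists_linearMap_mvPolynomial_one_eq_one K (AlgebraicClosure K) (Fin N)
  refine quotient_of_quotient_map hρ ?_
  rw [map_span]
  refine quotient_span_of_isAlgClosed (P := P) (fun i => (hg i).map _) (fun f hf => ?_) ?_
    fun i => ?_
  · refine isUnit_of_le_span_singleton_of_two_le_height (I := Ideal.span (Set.range gS)) ?_ ?_
    · rw [← map_span, ← hht]
      exact height_le_height_map_of_hasGoingDown _
    · rw [Ideal.span_le]
      rintro _ ⟨i, rfl⟩
      exact Ideal.mem_span_singleton.2 (hf i)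
  · exact (height_le_height_comap_of_isIntegral (R := R) P).trans_eq (hPp ▸ hp₂)
  · have : g i ∈ P.comap (algebraMap R S) := hPp ▸ hp (Ideal.subset_span ⟨i, rfl⟩)
    exact this

end Descent

/-- if `I` is an ideal of height two in a polynomial ring `R` over a field,
generated by `n` homogeneous quadratic polynomials, then `pd(R/I) ≤ 2n - 2`. -/
theorem stmt0 (K : Type u) [Field K] (N n : ℕ)
    (I : Ideal (MvPolynomial (Fin N) K)) (g : Fin n → MvPolynomial (Fin N) K)
    (hg : ∀ i, (g i).IsHomogeneous 2)
    (hI : I = Ideal.span (Set.range g))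
    (hht : idealHeight I = 2) :
    projDim (MvPolynomial (Fin N) K) (MvPolynomial (Fin N) K ⧸ I) ≤ ((2 * n - 2 : ℕ) : ℕ∞) := by
  subst hI
  rw [idealHeight_eq_height] at hht
  exact sInf_le ⟨2 * n - 2, PdLE.quotient_span_of_height_eq_two hg hht, rfl⟩
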